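/- There exists ε_0 = ε_0(c) > 0, independent of n, such that for all 0 < ε < ε_0 there exist constants C_G = C_G(ε,c) < ∞, α = α(ε,c) > 0 and N = N(ε,c) with the following property: for all n > N and any initial configuration, the particle-count process V_t = Σ_{v ∈ Λ(L,2)} X_t[v] of the KCIP satisfies E[V_{⌊ε n^3⌋} | V_1] ≤ (1−α) V_1 + C_G log n. -/

import Mathlib

/-!
The proof follows the expectations of three statistics of the configuration: the number `V` of
particles, the number `O` of particles with an occupied neighbour, and the corrected number
`U = V - O / 2`, in which an isolated pair of adjacent particles counts as one particle. With
`n = L ^ 2` and `p = c / n`, one step of the chain satisfies (`Pop_Or_le`, `Pop_Ur_le`)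
* `E[ΔO] ≤ (20 p V - (1 - p) O) / n`, so that `O` relaxes quickly to size `O(p V)`;
* `E[ΔU] ≤ (2 p O - p B / 4) / n`, where `B` counts the isolated particles adjacent to a site at
  which a creation would join two or more of them: such a coalescence destroys particles.

Over a time `ε n ^ 3` the term `2 p O / n` contributes only `O(c ^ 2 ε) V`. It remains to show that
the total expected interaction `∑ (p / n) (B + 4 O)` is at least a universal fraction of the number
of isolated particles, up to `O(log n)` (`interaction_ge`); then `U` decreases by a fixed fraction.
If instead many particles have neighbours initially, then already `U` is much smaller than `V`, and
`V` is close to `U` at the final time since `O` has relaxed.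

For the interaction, isolated particles are tracked: a tracked label is an isolated particle, or an
isolated pair, each of whose halves is chosen with probability `1 / 2`. As long as labels do not
interact, they perform independent lazy random walks with rate `p / (2 n)` in each direction,
exactly at the level of averages over the halves. Hence (`step_lemma`, `tracking`) any subsolution
`g` of the independent walk recursion off the collisions, whose value drops by at most `1 / 4` when
a label is forgotten, bounds the total interaction from below. The choice of `g` is a second moment
potential `g = (1 / 2) ∑ h_j - ∑ R_j` (`gpot`): `h_j` is a weighted expected number of meetings of
the walk `j` with the others, and `R_j ≥ h_j ^ 2` is the corresponding bound on second moments;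
forgetting the label `j` costs at most about `h_j - h_j ^ 2 ≤ 1 / 4`, and when two walks sit at the
same site, a situation never seen by the tracked labels, nothing is required.

The potential is estimated by Fourier analysis on the torus (`HH_le`, `sum_psi_ge`). The weights
couple labels in a common box of side of order `√(c ε) L`; in such a box two walks run for a time
`ε n ^ 3` meet with comparable intensity. Boxes with fewer than a multiple of `log n` labels are
ignored, since two-dimensional walks which meet once meet again a logarithmic factor more often;
they are the origin of the term `C_G log n`.
-/

noncomputable section
open scoped Classical
open Finset

namespace KCIP

/-! ### The two-dimensional discrete torus -/

/-- Vertices of the 2-dimensional discrete torus `Λ(L,2) = ℤ_L²`. -/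
abbrev Vertex (L : ℕ) := ZMod L × ZMod L

/-- Nearest-neighbour adjacency on the torus. -/
def adj {L : ℕ} (u v : Vertex L) : Prop :=
  u - v = (1, 0) ∨ u - v = (0, 1) ∨ v - u = (1, 0) ∨ v - u = (0, 1)

/-- Distance between two elements of `ℤ_L`. -/
def zdist {L : ℕ} [NeZero L] (a b : ZMod L) : ℕ := min (a - b).val (b - a).val

/-- Graph (ℓ¹) distance on the torus. -/
def torusDist {L : ℕ} [NeZero L] (u v : Vertex L) : ℕ :=
  zdist u.1 v.1 + zdist u.2 v.2

/-- Particle configurations on the torus: elements of `{0,1}^{Λ(L,2)}`. -/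
abbrev Config (L : ℕ) := Vertex L → Bool

/-- Number of particles of a configuration. -/
def numParticles {L : ℕ} [NeZero L] (x : Config L) : ℕ :=
  (univ.filter fun v => x v = true).card

/-- The kinetic constraint: `v` has an occupied neighbour in `x`. -/
def hasOccNbr {L : ℕ} (x : Config L) (v : Vertex L) : Prop :=
  ∃ u, adj u v ∧ x u = true

/-! ### Generic finite Markov chain notions -/

section Generic

variable {S : Type*} [Fintype S]

/-- Point mass at `z`. -/
def delta (z : S) : S → ℝ := fun y => if y = z then 1 else 0

/-- One step of the chain applied to a distribution. -/
def evolve (K : S → S → ℝ) (μ : S → ℝ) : S → ℝ := fun y => ∑ x, μ x * K x y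

/-- Distribution after `t` steps. -/
def iterDist (K : S → S → ℝ) (μ : S → ℝ) : ℕ → S → ℝ
  | 0 => μ
  | t + 1 => evolve K (iterDist K μ t)

/-- Total variation distance. -/
def tvDist (μ ν : S → ℝ) : ℝ := (1 / 2) * ∑ x, |μ x - ν x|

/-- Mixing time (to total variation distance `1/4`, from a worst-case starting state). -/
def mixingTime (K : S → S → ℝ) (π : S → ℝ) : ℕ :=
  sInf {t : ℕ | 0 < t ∧ ∀ x : S, tvDist (iterDist K (delta x) t) π < 1 / 4}

/-- Expectation of `g` at time `t` of the chain started at `z`. -/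
def expAt (K : S → S → ℝ) (z : S) (t : ℕ) (g : S → ℝ) : ℝ :=
  ∑ y, iterDist K (delta z) t y * g y

/-- Dirichlet form of a kernel `K` reversible with respect to `π`. -/
def dirichletForm (K : S → S → ℝ) (π : S → ℝ) (f : S → ℝ) : ℝ :=
  (1 / 2) * ∑ x, ∑ y, |f x - f y| ^ 2 * K x y * π x

/-- Variance functional. -/
def varForm (π : S → ℝ) (f : S → ℝ) : ℝ :=
  (1 / 2) * ∑ x, ∑ y, |f x - f y| ^ 2 * π x * π y

/-- Entropy functional used in the definition of the log-Sobolev constant. -/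
def entForm (π : S → ℝ) (f : S → ℝ) : ℝ :=
  ∑ x, f x ^ 2 * Real.log (f x ^ 2 / ∑ y, f y ^ 2 * π y) * π x

/-- Spectral gap `1 - β₁(K)`, via its variational characterization. -/
def spectralGap (K : S → S → ℝ) (π : S → ℝ) : ℝ :=
  sInf {r : ℝ | ∃ f : S → ℝ, varForm π f ≠ 0 ∧ r = dirichletForm K π f / varForm π f}

/-- Log-Sobolev constant `α(K)`, via its variational characterization. -/
def logSobolevConst (K : S → S → ℝ) (π : S → ℝ) : ℝ :=
  sInf {r : ℝ | ∃ f : S → ℝ, entForm π f ≠ 0 ∧ r = dirichletForm K π f / entForm π f}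

/-- Uniform distribution on a finite state space. -/
def uniformDist (S : Type*) [Fintype S] : S → ℝ := fun _ => 1 / (Fintype.card S : ℝ)

/-- Probability of being at `y` at time `t`, having avoided the set `A` at all times
`0, 1, …, t`, for the chain `K` started at `z`. -/
def killedDist (K : S → S → ℝ) (z : S) (A : Set S) : ℕ → S → ℝ
  | 0 => fun y => if y = z ∧ y ∉ A then 1 else 0
  | t + 1 => fun y => if y ∈ A then 0 else ∑ x, killedDist K z A t x * K x y

/-- `P_z[τ_A > T]`, where `τ_A = min {t ≥ 0 : Z_t ∈ A}`. -/
def survProb (K : S → S → ℝ) (z : S) (A : Set S) (T : ℕ) : ℝ :=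
  ∑ y, killedDist K z A T y

/-- `E_z[τ_A]`, where `τ_A = min {t ≥ 0 : Z_t ∈ A}`. -/
def hitTimeExp (K : S → S → ℝ) (z : S) (A : Set S) : ℝ :=
  ∑' T : ℕ, survProb K z A T

/-- Probability that the chain started at `z` follows the trajectory `ω` up to time `T`. -/
def pathProb (K : S → S → ℝ) (z : S) (T : ℕ) (ω : Fin (T + 1) → S) : ℝ :=
  (if ω 0 = z then 1 else 0) * ∏ t : Fin T, K (ω t.castSucc) (ω t.succ)

/-- Expectation of a path functional of the trajectory up to time `T`. -/
def expPath (K : S → S → ℝ) (z : S) (T : ℕ) (f : (Fin (T + 1) → S) → ℝ) : ℝ :=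
  ∑ ω : Fin (T + 1) → S, pathProb K z T ω * f ω

/-- Probability of a path event of the trajectory up to time `T`. -/
def prPath (K : S → S → ℝ) (z : S) (T : ℕ) (E : (Fin (T + 1) → S) → Prop) : ℝ :=
  ∑ ω : Fin (T + 1) → S, if E ω then pathProb K z T ω else 0

/-- Probability of going from `x` to `z` in `t` steps, all of whose destinations
avoid the set `A`. -/
def tabooPow (K : S → S → ℝ) (A : Set S) : ℕ → S → S → ℝ
  | 0 => fun x y => if y = x then 1 else 0
  | t + 1 => fun x y => ∑ z, tabooPow K A t x z * (if y ∈ A then 0 else K z y)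

/-- The transition kernel of the trace of the chain `K` on the set `A`. -/
def traceKernel (K : S → S → ℝ) (A : Set S) : {x // x ∈ A} → {x // x ∈ A} → ℝ :=
  fun x y => ∑' t : ℕ, ∑ z, tabooPow K A t x.1 z * K z y.1

/-- A distribution `π` conditioned on the set `A`. -/
def condDist (π : S → ℝ) (A : Set S) : {x // x ∈ A} → ℝ :=
  fun x => π x.1 / ∑ y : {x // x ∈ A}, π y.1

end Generic

/-- Extend a finite trajectory to all times, by repeating the final state. -/
def extendPath {S : Type*} {T : ℕ} (ω : Fin (T + 1) → S) : ℕ → S :=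
  fun t => ω ⟨min t T, Nat.lt_succ_of_le (min_le_right t T)⟩

/-- The alternating hitting times of the sets `A` and `B` along a trajectory `ω`:
`altTimes ω A B (j-1) = (τ^A(j), τ^B(j))` where `τ^A(1) = inf {t : ω t ∈ A}`,
`τ^B(1) = inf {t : ω t ∈ B}`, `τ^A(j+1) = inf {t > τ^B(j) : ω t ∈ A}` and
`τ^B(j+1) = inf {t > τ^A(j) : ω t ∈ B}`. -/
def altTimes {S : Type*} (ω : ℕ → S) (A B : Set S) : ℕ → ℕ∞ × ℕ∞
  | 0 => (⨅ t ∈ {t : ℕ | ω t ∈ A}, (t : ℕ∞), ⨅ t ∈ {t : ℕ | ω t ∈ B}, (t : ℕ∞))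
  | j + 1 =>
      (⨅ t ∈ {t : ℕ | (altTimes ω A B j).2 < (t : ℕ∞) ∧ ω t ∈ A}, (t : ℕ∞),
       ⨅ t ∈ {t : ℕ | (altTimes ω A B j).1 < (t : ℕ∞) ∧ ω t ∈ B}, (t : ℕ∞))

/-! ### The kinetically constrained Ising process -/

/-- Transition kernel of the KCIP on `Λ(L,2)` with density `p`. -/
def kcipKernel (L : ℕ) [NeZero L] (p : ℝ) (x y : Config L) : ℝ :=
  (1 / ((L : ℝ) ^ 2)) * ∑ v : Vertex L,
    if hasOccNbr x v then
      p * (if y = Function.update x v true then 1 else 0)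
        + (1 - p) * (if y = Function.update x v false then 1 else 0)
    else (if y = x then 1 else 0)

/-- Stationary distribution of the KCIP on `Λ(L,2)` with density `p`. -/
def kcipStationary (L : ℕ) [NeZero L] (p : ℝ) (y : Config L) : ℝ :=
  if 0 < numParticles y then
    p ^ numParticles y * (1 - p) ^ (L ^ 2 - numParticles y) / (1 - (1 - p) ^ (L ^ 2))
  else 0

/-- `Ω_k`: configurations with `k` particles, no two of them adjacent. -/
def OmegaSet (L k : ℕ) [NeZero L] : Set (Config L) :=
  {x | numParticles x = k ∧ ∀ u v : Vertex L, adj u v → ¬(x u = true ∧ x v = true)}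

/-- `Ω_k` as a type. -/
abbrev OmegaType (L k : ℕ) [NeZero L] := {x : Config L // x ∈ OmegaSet L k}

/-- `Ω_k` as a finite set of configurations. -/
def omegaFinset (L k : ℕ) [NeZero L] : Finset (Config L) :=
  univ.filter fun x => x ∈ OmegaSet L k

/-- `∪_{i=1}^k Ω_i`. -/
def omegaUnionSet (L k : ℕ) [NeZero L] : Set (Config L) :=
  ⋃ i ∈ Finset.Icc 1 k, OmegaSet L i

/-- `Ω_i ∪ Ω_{i+1}` as a type. -/
abbrev PairType (L i : ℕ) [NeZero L] :=
  {x : Config L // x ∈ OmegaSet L i ∪ OmegaSet L (i + 1)}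

/-- `P_i`: the restriction of the KCIP kernel to `Ω_i ∪ Ω_{i+1}`. -/
def pairKernel (L i : ℕ) [NeZero L] (p : ℝ) : PairType L i → PairType L i → ℝ :=
  fun x y =>
    if x = y then 1 - ∑ z : PairType L i, (if z = x then 0 else kcipKernel L p x.1 z.1)
    else kcipKernel L p x.1 y.1

/-! ### The "perfect" kernel `L^{MH}_{n,k}` on `Ω_{n,k}` -/

/-- The kernel `L^{MH}_{n,k}(x,y) = 1/(2|Ω_{n,k}|) + (1/2)·1_{x=y}`. -/
def perfectKernel (L k : ℕ) [NeZero L] : OmegaType L k → OmegaType L k → ℝ :=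
  fun x y => 1 / (2 * (Fintype.card (OmegaType L k) : ℝ)) + if x = y then 1 / 2 else 0

/-! ### Bernoulli–Laplace diffusion -/

/-- Bernoulli–Laplace kernel `U'_{n,k}`: move a uniformly chosen occupied site to a
uniformly chosen unoccupied site. -/
def blKernel (L k : ℕ) [NeZero L] (x y : Config L) : ℝ :=
  (1 / ((k : ℝ) * ((L : ℝ) ^ 2 - (k : ℝ)))) * ∑ u : Vertex L, ∑ v : Vertex L,
    if x u = true ∧ x v = false ∧
        y = Function.update (Function.update x u false) v true then 1 else 0

/-- `U_{n,k} = (1/2) U'_{n,k} + (1/2) Id`. -/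
def blLazy (L k : ℕ) [NeZero L] (x y : Config L) : ℝ :=
  (1 / 2) * blKernel L k x y + (1 / 2) * (if y = x then 1 else 0)

/-- The Metropolis–Hastings kernel `U^{MH}_{n,k}` on `Ω_{n,k}` with proposal `U_{n,k}`
and target the uniform distribution on `Ω_{n,k}`. -/
def blMH (L k : ℕ) [NeZero L] : OmegaType L k → OmegaType L k → ℝ :=
  fun x y =>
    if x = y then 1 - ∑ z : OmegaType L k, (if z = x then 0 else blLazy L k x.1 z.1)
    else blLazy L k x.1 y.1

/-! ### Simple exclusion -/

/-- Swap the labels of vertices `u` and `v`. -/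
def swapConfig {L : ℕ} (x : Config L) (u v : Vertex L) : Config L :=
  Function.update (Function.update x u (x v)) v (x u)

/-- Kernel of the simple exclusion process on `Λ(L,2)`: pick a uniformly random pair of
adjacent vertices and swap their labels. -/
def seKernel (L : ℕ) [NeZero L] (x y : Config L) : ℝ :=
  (1 / ((univ.filter fun q : Vertex L × Vertex L => adj q.1 q.2).card : ℝ)) *
    ∑ u : Vertex L, ∑ v : Vertex L, if adj u v ∧ y = swapConfig x u v then 1 else 0

/-- Adjacency in the graph `G_SE` whose vertices are configurations and whose edges join
distinct configurations with positive simple-exclusion transition probability. -/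
def seAdj (L : ℕ) (x y : Config L) : Prop :=
  y ≠ x ∧ ∃ u v : Vertex L, adj u v ∧ y = swapConfig x u v

/-- `Q_SE`: the `1/2`-lazy simple random walk on the graph `G_SE`. -/
def seLazy (L : ℕ) [NeZero L] (x y : Config L) : ℝ :=
  (1 / 2) * (if y = x then 1 else 0) +
    (1 / 2) * (if seAdj L x y then 1 / ((univ.filter fun z => seAdj L x z).card : ℝ) else 0)

/-- `Q_MH`: the Metropolis–Hastings kernel on `Ω_{n,k}` with proposal `Q_SE` and target
the uniform distribution on `Ω_{n,k}`. -/
def seMH (L k : ℕ) [NeZero L] : OmegaType L k → OmegaType L k → ℝ :=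
  fun x y =>
    if x = y then 1 - ∑ z : OmegaType L k, (if z = x then 0 else seLazy L x.1 z.1)
    else seLazy L x.1 y.1

/-! ### The projected chain `P̃` -/

/-- `π`-measure of a finite set of configurations. -/
def measOf (L : ℕ) [NeZero L] (p : ℝ) (A : Finset (Config L)) : ℝ :=
  ∑ x ∈ A, kcipStationary L p x

/-- The projected kernel `P̃` on `{1, …, k-1}` (`i : Fin (k-1)` represents `i+1`):
`P̃(i,j) = π((Ω_i ∪ Ω_{i+1}) ∩ (Ω_j ∪ Ω_{j+1})) / (3 π(Ω_i ∪ Ω_{i+1}))` for `i ≠ j`. -/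
def projKernel (L k : ℕ) [NeZero L] (p : ℝ) : Fin (k - 1) → Fin (k - 1) → ℝ :=
  fun i j =>
    if i = j then
      1 - ∑ j' ∈ univ.erase i,
        measOf L p ((omegaFinset L (i.1 + 1) ∪ omegaFinset L (i.1 + 2)) ∩
            (omegaFinset L (j'.1 + 1) ∪ omegaFinset L (j'.1 + 2))) /
          (3 * measOf L p (omegaFinset L (i.1 + 1) ∪ omegaFinset L (i.1 + 2)))
    else
      measOf L p ((omegaFinset L (i.1 + 1) ∪ omegaFinset L (i.1 + 2)) ∩
          (omegaFinset L (j.1 + 1) ∪ omegaFinset L (j.1 + 2))) /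
        (3 * measOf L p (omegaFinset L (i.1 + 1) ∪ omegaFinset L (i.1 + 2)))

/-- Stationary distribution of the projected kernel `P̃`. -/
def projStationary (L k : ℕ) [NeZero L] (p : ℝ) : Fin (k - 1) → ℝ :=
  fun i =>
    measOf L p (omegaFinset L (i.1 + 1) ∪ omegaFinset L (i.1 + 2)) /
      ∑ j : Fin (k - 1), measOf L p (omegaFinset L (j.1 + 1) ∪ omegaFinset L (j.1 + 2))

/-! ### Well-spaced configurations -/

/-- `H(i)`: very well-spaced configurations in `Ω_i`. -/
def Hset (L i : ℕ) [NeZero L] : Set (Config L) :=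
  {x | x ∈ OmegaSet L i ∧ ∀ u v : Vertex L, x u = true → x v = true → u ≠ v →
    Real.sqrt ((L : ℝ) ^ 2) / Real.log ((L : ℝ) ^ 2) ^ ((1 : ℝ) / 4) < (torusDist u v : ℝ)}

/-- `G(i)`: configurations in `Ω_{i+1}` obtained from a configuration in `H(i)` by adding
one particle at distance exactly `2` from the existing particles. -/
def Gset (L i : ℕ) [NeZero L] : Set (Config L) :=
  {y | y ∈ OmegaSet L (i + 1) ∧ ∃ x ∈ Hset L i, ∃ w : Vertex L,
    y = Function.update x w true ∧ (∃ u, x u = true ∧ torusDist u w = 2) ∧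
    ∀ u, x u = true → 2 ≤ torusDist u w}

/-! ### Connectivity on the torus -/

/-- `b` is reachable from `a` by a nearest-neighbour path staying inside `A`. -/
def reachIn {L : ℕ} (A : Set (Vertex L)) (a b : Vertex L) : Prop :=
  ∃ (M : ℕ) (y : ℕ → Vertex L), y 0 = a ∧ y M = b ∧
    (∀ j < M, adj (y j) (y (j + 1))) ∧ ∀ j ≤ M, y j ∈ A

/-- A linear key on the vertices, used to pick one representative per connected component. -/
def vkey (L : ℕ) [NeZero L] (v : Vertex L) : ℕ := v.1.val * L + v.2.val

/-- The number of connected components of the subgraph of `Λ(L,2)` induced by the occupied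
vertices of `x` (counting, in each component, the vertex with the least key). -/
def connCompCount (L : ℕ) [NeZero L] (x : Config L) : ℕ :=
  (univ.filter fun v : Vertex L => x v = true ∧
    ∀ u : Vertex L, x u = true → reachIn {w : Vertex L | x w = true} u v →
      vkey L v ≤ vkey L u).card

/-- `𝒞_s`: the number of collisions before time `s` along a trajectory, i.e. of times
`1 ≤ u < s` at which the number of connected components strictly decreases. -/
def collisionCount (L : ℕ) [NeZero L] {T : ℕ} (ω : Fin (T + 1) → Config L) (s : ℕ) : ℕ :=
  ((Finset.range (s - 1)).filter fun u =>
    connCompCount L (extendPath ω (u + 1)) < connCompCount L (extendPath ω u)).card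

/-! ### Squares, coverings and open vertices -/

/-- A square of side length exactly `m` in the torus, with bottom-left corner `a`. -/
def IsSquareSet (L m : ℕ) [NeZero L] (C : Finset (Vertex L)) : Prop :=
  ∃ a : Vertex L, C = (Finset.range m ×ˢ Finset.range m).image
    fun q : ℕ × ℕ => a + ((q.1 : ZMod L), (q.2 : ZMod L))

/-- A (not necessarily disjoint) union of at most `k` squares of side length exactly `m`. -/
def IsUnionOfSquares (L m k : ℕ) [NeZero L] (C : Finset (Vertex L)) : Prop :=
  ∃ (j : ℕ) (sq : Fin j → Finset (Vertex L)), j ≤ k ∧ (∀ a, IsSquareSet L m (sq a)) ∧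
    C = Finset.univ.biUnion sq

/-- A size-`m` covering of the finite vertex set `X`. -/
structure SizeMCovering (L m : ℕ) [NeZero L] (X : Finset (Vertex L)) {ℓ : ℕ}
    (C : Fin ℓ → Finset (Vertex L)) : Prop where
  pairwise_disjoint : ∀ i j, i ≠ j → Disjoint (C i) (C j)
  union_of_squares : ∀ i, IsUnionOfSquares L m X.card (C i)
  covers : ∀ u : Vertex L, (∃ v ∈ X, torusDist u v ≤ 2) → ∃ i, u ∈ C i
  meets : ∀ i, ∃ v ∈ X, v ∈ C i

/-- The vertex `xi` of the configuration `X` is *open* with respect to the privileged point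
`x'` and the covering `C`: there is a nearest-neighbour path from `xi` to the complement of
the covering which stays at distance `> 1` from `(X ∪ {x'}) \ {xi}`. -/
def IsOpenVertex (L : ℕ) [NeZero L] (X : Finset (Vertex L)) (x' : Vertex L) {ℓ : ℕ}
    (C : Fin ℓ → Finset (Vertex L)) (xi : Vertex L) : Prop :=
  ∃ (M : ℕ) (y : ℕ → Vertex L), y 0 = xi ∧ (∀ i, y M ∉ C i) ∧
    (∀ j < M, torusDist (y (j + 1)) (y j) = 1) ∧
    ∀ x ∈ (insert x' X).erase xi, ∀ j ≤ M, 1 < torusDist x (y j)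

/-- The configuration `{xs 0, …, xs (k-1)}` admits a *sequence of open vertices* with
respect to the privileged point `x'` and the covering `C`. -/
def HasOpenSequence (L k : ℕ) [NeZero L] (xs : Fin k → Vertex L) (x' : Vertex L) {ℓ : ℕ}
    (C : Fin ℓ → Finset (Vertex L)) : Prop :=
  ∃ σ : Equiv.Perm (Fin k), ∀ i : Fin k, i.1 + 1 < k →
    IsOpenVertex L
      ((univ.filter fun j : Fin k => ∀ j' : Fin k, j' < i → σ j' ≠ j).image xs)
      x' C (xs (σ i))

/-! ### Metropolis–Hastings walk on a component (for Statement 9) -/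

/-- The Metropolis–Hastings chain on `D` whose proposal is the `1/2`-lazy simple random
walk on `Λ(L,2)` and whose target is the uniform distribution on `D`: each neighbour in `D`
is moved to with probability `1/8`, otherwise the chain holds. -/
def dKernel (L : ℕ) [NeZero L] (D : Finset (Vertex L)) :
    {u // u ∈ D} → {u // u ∈ D} → ℝ :=
  fun x y =>
    if x = y then 1 - ((D.filter fun w => adj w x.1).card : ℝ) / 8
    else if adj x.1 y.1 then 1 / 8 else 0

set_option linter.all false

/-! ### The averaging operator of the chain -/

section Averaging

variable {L : ℕ} [NeZero L]

/-- The averaging operator of the KCIP: `Pop p f x = E[f(X₁) | X₀ = x]`. -/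
def Pop (p : ℝ) (f : Config L → ℝ) (x : Config L) : ℝ := ∑ y, kcipKernel L p x y * f y

lemma Pop_eq (p : ℝ) (f : Config L → ℝ) (x : Config L) :
    Pop p f x = (1 / ((L : ℝ) ^ 2)) * ∑ v : Vertex L,
      if hasOccNbr x v then
        p * f (Function.update x v true) + (1 - p) * f (Function.update x v false)
      else f x := by
  unfold Pop kcipKernel
  simp only [mul_assoc, Finset.sum_mul, ← Finset.mul_sum]
  congr 1
  rw [Finset.sum_comm]
  refine Finset.sum_congr rfl fun v _ => ?_
  split_ifs
  · simp only [add_mul, mul_assoc, Finset.sum_add_distrib, ← Finset.mul_sum, ite_mul, one_mul,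
      zero_mul, Finset.sum_ite_eq', Finset.mem_univ, if_true]
  · simp only [ite_mul, one_mul, zero_mul, Finset.sum_ite_eq', Finset.mem_univ, if_true]

lemma card_vertex : Fintype.card (Vertex L) = L ^ 2 := by
  simp [Vertex, Fintype.card_prod, ZMod.card, sq]

lemma Lsq_pos : (0 : ℝ) < (L : ℝ) ^ 2 := by
  have : (0 : ℝ) < L := by exact_mod_cast Nat.pos_of_ne_zero (NeZero.ne L)
  positivity

lemma sum_const_vertex (a : ℝ) : ∑ _v : Vertex L, a = (L : ℝ) ^ 2 * a := by
  rw [Finset.sum_const, Finset.card_univ, card_vertex]; simp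

lemma Pop_drift (p : ℝ) (f : Config L → ℝ) (x : Config L) :
    Pop p f x = f x + (1 / ((L : ℝ) ^ 2)) *
      (p * (∑ v : Vertex L, if hasOccNbr x v then f (Function.update x v true) - f x else 0) +
      (1 - p) *
        (∑ v : Vertex L, if hasOccNbr x v then f (Function.update x v false) - f x else 0)) := by
  have h : f x = (1 / ((L : ℝ) ^ 2)) * ∑ _v : Vertex L, f x := by
    rw [sum_const_vertex, ← mul_assoc, one_div, inv_mul_cancel₀ (Lsq_pos (L := L)).ne', one_mul]
  rw [Pop_eq]
  refine Eq.trans ?_ (congrArg (fun a => a + (1 / ((L : ℝ) ^ 2)) *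
    (p * (∑ v : Vertex L, if hasOccNbr x v then f (Function.update x v true) - f x else 0) +
    (1 - p) * (∑ v : Vertex L, if hasOccNbr x v then f (Function.update x v false) - f x
      else 0))) h.symm)
  rw [← mul_add]
  congr 1
  rw [Finset.mul_sum, Finset.mul_sum, ← Finset.sum_add_distrib, ← Finset.sum_add_distrib]
  refine Finset.sum_congr rfl fun v _ => ?_
  split_ifs <;> ring

lemma Pop_mono {p : ℝ} (h0 : 0 ≤ p) (h1 : p ≤ 1) {f g : Config L → ℝ} (h : ∀ x, f x ≤ g x)
    (x : Config L) : Pop p f x ≤ Pop p g x := by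
  rw [Pop_eq, Pop_eq]
  apply mul_le_mul_of_nonneg_left _ (by positivity)
  refine Finset.sum_le_sum fun v _ => ?_
  split_ifs
  · exact add_le_add (mul_le_mul_of_nonneg_left (h _) h0)
      (mul_le_mul_of_nonneg_left (h _) (by linarith))
  · exact h x

lemma Pop_add (p : ℝ) (f g : Config L → ℝ) (x : Config L) :
    Pop p (fun y => f y + g y) x = Pop p f x + Pop p g x := by
  simp only [Pop, mul_add, Finset.sum_add_distrib]

lemma Pop_smul (p a : ℝ) (f : Config L → ℝ) (x : Config L) :
    Pop p (fun y => a * f y) x = a * Pop p f x := by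
  simp only [Pop, Finset.mul_sum]
  exact Finset.sum_congr rfl fun y _ => by ring

lemma Pop_sum {ι : Type*} (s : Finset ι) (p : ℝ) (f : ι → Config L → ℝ) (x : Config L) :
    Pop p (fun y => ∑ i ∈ s, f i y) x = ∑ i ∈ s, Pop p (f i) x := by
  simp only [Pop, Finset.mul_sum]
  exact Finset.sum_comm

/-- `Ex p t f x = E[f(X_t) | X₀ = x]`, as an iterate of the averaging operator. -/
def Ex (p : ℝ) (t : ℕ) (f : Config L → ℝ) : Config L → ℝ := (Pop p)^[t] f

lemma Ex_zero (p : ℝ) (f : Config L → ℝ) : Ex p 0 f = f := rfl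

lemma Ex_succ (p : ℝ) (t : ℕ) (f : Config L → ℝ) : Ex p (t + 1) f = Ex p t (Pop p f) :=
  Function.iterate_succ_apply _ _ _

lemma Ex_succ' (p : ℝ) (t : ℕ) (f : Config L → ℝ) : Ex p (t + 1) f = Pop p (Ex p t f) :=
  Function.iterate_succ_apply' _ _ _

lemma expAt_eq (p : ℝ) (z : Config L) (t : ℕ) (g : Config L → ℝ) :
    expAt (kcipKernel L p) z t g = Ex p t g z := by
  induction t generalizing g with
  | zero => simp [expAt, iterDist, delta, Ex]
  | succ t ih =>
    rw [Ex_succ, ← ih]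
    simp only [expAt, iterDist, evolve, Pop, Finset.sum_mul, Finset.mul_sum]
    rw [Finset.sum_comm]
    exact Finset.sum_congr rfl fun x _ => Finset.sum_congr rfl fun y _ => by ring

lemma Ex_mono {p : ℝ} (h0 : 0 ≤ p) (h1 : p ≤ 1) (t : ℕ) {f g : Config L → ℝ}
    (h : ∀ x, f x ≤ g x) (x : Config L) : Ex p t f x ≤ Ex p t g x := by
  induction t generalizing x with
  | zero => exact h x
  | succ t ih => rw [Ex_succ', Ex_succ']; exact Pop_mono h0 h1 ih x

lemma Ex_add (p : ℝ) (t : ℕ) (f g : Config L → ℝ) (x : Config L) :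
    Ex p t (fun y => f y + g y) x = Ex p t f x + Ex p t g x := by
  induction t generalizing x with
  | zero => rfl
  | succ t ih =>
    rw [Ex_succ', Ex_succ', Ex_succ', ← Pop_add]
    exact congrArg (fun h => Pop p h x) (funext ih)

lemma Ex_smul (p : ℝ) (t : ℕ) (a : ℝ) (f : Config L → ℝ) (x : Config L) :
    Ex p t (fun y => a * f y) x = a * Ex p t f x := by
  induction t generalizing x with
  | zero => rfl
  | succ t ih =>
    rw [Ex_succ', Ex_succ', ← Pop_smul]
    exact congrArg (fun h => Pop p h x) (funext ih)

end Averaging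

/-! ### Local statistics of a configuration and their one-step drifts -/

section Drift

variable {L : ℕ} [NeZero L]

lemma adj_symm {u v : Vertex L} (h : adj u v) : adj v u := by
  unfold adj at *; tauto

lemma adj_irrefl (hL : 2 ≤ L) (u : Vertex L) : ¬ adj u u := by
  have : Fact (1 < L) := ⟨hL⟩
  unfold adj
  simp [Prod.ext_iff]

/-- The neighbours of `w`. -/
def nbrs (w : Vertex L) : Finset (Vertex L) := univ.filter fun u => adj u w

/-- Occupied vertices with an occupied neighbour. -/
def Oset (x : Config L) : Finset (Vertex L) := univ.filter fun u => x u = true ∧ hasOccNbr x u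

/-- Occupied neighbours of `w` which are isolated particles. -/
def isoN (x : Config L) (w : Vertex L) : Finset (Vertex L) :=
  univ.filter fun u => adj u w ∧ x u = true ∧ ¬ hasOccNbr x u

/-- Occupied neighbours of `w` which are not isolated particles. -/
def oN (x : Config L) (w : Vertex L) : Finset (Vertex L) :=
  univ.filter fun u => adj u w ∧ x u = true ∧ hasOccNbr x u

/-- The number of particles, as a real number. -/
def Vr (x : Config L) : ℝ := numParticles x

/-- The number of particles with an occupied neighbour. -/
def Or (x : Config L) : ℝ := (Oset x).card

/-- The corrected particle number `V - O/2`, in which an isolated pair counts as one particle. -/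
def Ur (x : Config L) : ℝ := Vr x - Or x / 2

/-- The weight of the sites at which a creation would join at least two isolated particles. -/
def Br (x : Config L) : ℝ :=
  ∑ w : Vertex L, if 2 ≤ (isoN x w).card then ((isoN x w).card : ℝ) else 0

lemma card_nbrs_le (w : Vertex L) : (nbrs w).card ≤ 4 := by
  have : nbrs w ⊆ {w + (1, 0), w + (0, 1), w - (1, 0), w - (0, 1)} := by
    intro u hu
    simp only [nbrs, Finset.mem_filter, Finset.mem_univ, true_and] at hu
    simp only [Finset.mem_insert, Finset.mem_singleton]
    rcases hu with h | h | h | h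
    · left; rw [← h]; abel
    · right; left; rw [← h]; abel
    · right; right; left; rw [← h]; abel
    · right; right; right; rw [← h]; abel
  exact (Finset.card_le_card this).trans Finset.card_le_four

lemma Or_nonneg (x : Config L) : 0 ≤ Or x := Nat.cast_nonneg _

lemma Vr_nonneg (x : Config L) : 0 ≤ Vr x := Nat.cast_nonneg _

lemma Br_nonneg (x : Config L) : 0 ≤ Br x :=
  Finset.sum_nonneg fun w _ => by split_ifs <;> positivity

lemma Or_le_Vr (x : Config L) : Or x ≤ Vr x := by
  unfold Or Vr numParticles
  exact_mod_cast Finset.card_le_card fun u hu => by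
    simp only [Oset, Finset.mem_filter, Finset.mem_univ, true_and] at hu ⊢
    exact hu.1

lemma card_fac_le (x : Config L) :
    ((univ.filter fun w : Vertex L => hasOccNbr x w).card : ℝ) ≤ 4 * Vr x := by
  have h1 : (univ.filter fun w : Vertex L => hasOccNbr x w) ⊆
      (univ.filter fun v => x v = true).biUnion nbrs := by
    intro w hw
    simp only [Finset.mem_filter, Finset.mem_univ, true_and] at hw
    obtain ⟨u, hu, hx⟩ := hw
    simp only [Finset.mem_biUnion, Finset.mem_filter, Finset.mem_univ, true_and, nbrs]
    exact ⟨u, hx, adj_symm hu⟩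
  have h2 := (Finset.card_le_card h1).trans
    (Finset.card_biUnion_le_card_mul _ _ 4 fun v _ => card_nbrs_le v)
  unfold Vr numParticles
  have : ((univ.filter fun w : Vertex L => hasOccNbr x w).card : ℝ) ≤
    ((univ.filter fun v : Vertex L => x v = true).card * 4 : ℕ) := by exact_mod_cast h2
  push_cast at this
  linarith

lemma sum_oN_le (x : Config L) : ∑ w : Vertex L, ((oN x w).card : ℝ) ≤ 4 * Or x := by
  have h : ∑ w : Vertex L, (oN x w).card = ∑ u ∈ Oset x, (nbrs u).card := by
    have h1 : ∀ w : Vertex L, (oN x w).card =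
        ∑ u : Vertex L, if adj u w ∧ x u = true ∧ hasOccNbr x u then 1 else 0 := fun w => by
      rw [oN, Finset.card_filter]
    simp only [h1]
    rw [Finset.sum_comm, Oset, Finset.sum_filter]
    refine Finset.sum_congr rfl fun u _ => ?_
    split_ifs with h2
    · rw [nbrs, Finset.card_filter]
      refine Finset.sum_congr rfl fun w _ => ?_
      have : adj u w ↔ adj w u := ⟨adj_symm, adj_symm⟩
      simp [h2, this]
    · simp [h2]
  have h3 : ∑ u ∈ Oset x, (nbrs u).card ≤ (Oset x).card * 4 := by
    rw [← smul_eq_mul]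
    exact Finset.sum_le_card_nsmul _ _ _ fun u _ => card_nbrs_le u
  have h4 : ((∑ w : Vertex L, (oN x w).card : ℕ) : ℝ) ≤ ((Oset x).card * 4 : ℕ) := by
    rw [h]; exact_mod_cast h3
  push_cast at h4
  unfold Or
  linarith

lemma hasOccNbr_upd_true {x : Config L} {w u : Vertex L} (h : hasOccNbr x u) :
    hasOccNbr (Function.update x w true) u := by
  obtain ⟨v, hv, hx⟩ := h
  refine ⟨v, hv, ?_⟩
  by_cases hvw : v = w
  · subst hvw; simp
  · rw [Function.update_of_ne hvw]; exact hx

lemma hasOccNbr_of_upd_false {x : Config L} {w u : Vertex L}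
    (h : hasOccNbr (Function.update x w false) u) : hasOccNbr x u := by
  obtain ⟨v, hv, hx⟩ := h
  refine ⟨v, hv, ?_⟩
  by_cases hvw : v = w
  · subst hvw; simp at hx
  · rw [Function.update_of_ne hvw] at hx; exact hx

lemma update_self_eq {x : Config L} {w : Vertex L} {b : Bool} (h : x w = b) :
    Function.update x w b = x := by
  rw [← h]; exact Function.update_eq_self w x

/-- A creation at `w` raises the number of non-isolated particles by at most `5`. -/
lemma Or_create_le (x : Config L) (w : Vertex L) :
    Or (Function.update x w true) - Or x ≤ 5 := by
  have h : Oset (Function.update x w true) ⊆ Oset x ∪ insert w (nbrs w) := by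
    intro u hu
    simp only [Oset, Finset.mem_filter, Finset.mem_univ, true_and, Finset.mem_union,
      Finset.mem_insert, nbrs] at hu ⊢
    by_cases huw : u = w
    · right; left; exact huw
    · rw [Function.update_of_ne huw] at hu
      obtain ⟨hx, v, hv, hxv⟩ := hu
      by_cases hvw : v = w
      · subst hvw; right; right; exact adj_symm hv
      · rw [Function.update_of_ne hvw] at hxv
        exact Or.inl ⟨hx, v, hv, hxv⟩
  have h1 := (Finset.card_le_card h).trans (Finset.card_union_le _ _)
  have h2 := (Finset.card_insert_le w (nbrs w))
  have h3 := card_nbrs_le w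
  have h4 : (Oset (Function.update x w true)).card ≤ (Oset x).card + 5 := by omega
  have : (((Oset (Function.update x w true)).card : ℕ) : ℝ) ≤ ((Oset x).card + 5 : ℕ) := by
    exact_mod_cast h4
  push_cast at this
  unfold Or; linarith

/-- Removing a non-isolated particle lowers the number of non-isolated particles. -/
lemma Or_remove_le {x : Config L} {w : Vertex L} (hw : x w = true) (hf : hasOccNbr x w) :
    Or (Function.update x w false) - Or x ≤ -1 := by
  have hmem : w ∈ Oset x := by simp [Oset, hw, hf]
  have h : Oset (Function.update x w false) ⊆ (Oset x).erase w := by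
    intro u hu
    simp only [Oset, Finset.mem_filter, Finset.mem_univ, true_and, Finset.mem_erase] at hu ⊢
    have huw : u ≠ w := by
      rintro rfl; simp at hu
    rw [Function.update_of_ne huw] at hu
    exact ⟨huw, hu.1, hasOccNbr_of_upd_false hu.2⟩
  have h1 := Finset.card_le_card h
  rw [Finset.card_erase_of_mem hmem] at h1
  have h2 : 0 < (Oset x).card := Finset.card_pos.mpr ⟨w, hmem⟩
  have h4 : (Oset (Function.update x w false)).card + 1 ≤ (Oset x).card := by omega
  have : (((Oset (Function.update x w false)).card + 1 : ℕ) : ℝ) ≤ ((Oset x).card : ℕ) := by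
    exact_mod_cast h4
  push_cast at this
  unfold Or; linarith

lemma Pop_Or_le {p : ℝ} (h0 : 0 ≤ p) (h1 : p ≤ 1) (x : Config L) :
    Pop p Or x ≤ Or x + (1 / (L : ℝ) ^ 2) * (20 * p * Vr x - (1 - p) * Or x) := by
  rw [Pop_drift]
  have hA : (∑ v : Vertex L, if hasOccNbr x v then Or (Function.update x v true) - Or x else 0) ≤
      20 * Vr x := by
    calc _ ≤ ∑ v : Vertex L, if hasOccNbr x v then (5 : ℝ) else 0 := by
          refine Finset.sum_le_sum fun v _ => ?_
          split_ifs
          · exact Or_create_le x v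
          · exact le_rfl
      _ = 5 * ((univ.filter fun w : Vertex L => hasOccNbr x w).card : ℝ) := by
          rw [← Finset.sum_filter, Finset.sum_const, nsmul_eq_mul]; ring
      _ ≤ 20 * Vr x := by linarith [card_fac_le x]
  have hB : (∑ v : Vertex L, if hasOccNbr x v then Or (Function.update x v false) - Or x else 0) ≤
      - Or x := by
    calc _ ≤ ∑ v : Vertex L, if x v = true ∧ hasOccNbr x v then (-1 : ℝ) else 0 := by
          refine Finset.sum_le_sum fun v _ => ?_
          by_cases hf : hasOccNbr x v
          · by_cases hv : x v = true
            · simp only [hf, hv, and_self, if_true]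
              exact Or_remove_le hv hf
            · have : x v = false := by simpa using hv
              simp [hf, this, update_self_eq this]
          · simp [hf]
      _ = - Or x := by
          rw [← Finset.sum_filter, Finset.sum_const, nsmul_eq_mul]
          unfold Or Oset; ring
  have hn : (0 : ℝ) ≤ 1 / (L : ℝ) ^ 2 := by positivity
  have := mul_le_mul_of_nonneg_left (add_le_add (mul_le_mul_of_nonneg_left hA h0)
    (mul_le_mul_of_nonneg_left hB (by linarith : (0 : ℝ) ≤ 1 - p))) hn
  nlinarith [this]

lemma Vr_create {x : Config L} {w : Vertex L} (hw : x w = false) :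
    Vr (Function.update x w true) = Vr x + 1 := by
  have : (univ.filter fun v => Function.update x w true v = true) =
      insert w (univ.filter fun v => x v = true) := by
    ext u
    by_cases h : u = w
    · subst h; simp
    · simp [h]
  unfold Vr numParticles
  rw [this, Finset.card_insert_of_notMem (by simp [hw])]
  push_cast; ring

lemma Vr_remove {x : Config L} {w : Vertex L} (hw : x w = true) :
    Vr (Function.update x w false) = Vr x - 1 := by
  have : (univ.filter fun v => x v = true) =
      insert w (univ.filter fun v => Function.update x w false v = true) := by
    ext u
    by_cases h : u = w
    · subst h; simp [hw]
    · simp [h]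
  unfold Vr numParticles
  rw [this, Finset.card_insert_of_notMem (by simp)]
  push_cast; ring

lemma not_mem_isoN_of_occ {x : Config L} {w : Vertex L} (hw : x w = true) :
    isoN x w = ∅ := by
  apply Finset.eq_empty_of_forall_notMem
  intro u hu
  simp only [isoN, Finset.mem_filter, Finset.mem_univ, true_and] at hu
  exact hu.2.2 ⟨w, adj_symm hu.1, hw⟩

lemma isoN_of_not_fac {x : Config L} {w : Vertex L} (hw : ¬ hasOccNbr x w) :
    isoN x w = ∅ := by
  apply Finset.eq_empty_of_forall_notMem
  intro u hu
  simp only [isoN, Finset.mem_filter, Finset.mem_univ, true_and] at hu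
  exact hw ⟨u, hu.1, hu.2.1⟩

/-- A creation at an empty facilitated site `w` turns `w` and all its isolated neighbours into
non-isolated particles. -/
lemma Or_create_ge (hL : 2 ≤ L) {x : Config L} {w : Vertex L} (hw : x w = false)
    (hf : hasOccNbr x w) :
    Or x + 1 + (isoN x w).card ≤ Or (Function.update x w true) := by
  have hne : ∀ u, adj u w → u ≠ w := fun u hu h => adj_irrefl hL w (h ▸ hu)
  have h : insert w (Oset x ∪ isoN x w) ⊆ Oset (Function.update x w true) := by
    intro u hu
    simp only [Oset, isoN, Finset.mem_filter, Finset.mem_univ, true_and, Finset.mem_insert,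
      Finset.mem_union] at hu ⊢
    rcases hu with rfl | ⟨hx, hu⟩ | ⟨ha, hx, hu⟩
    · exact ⟨by simp, hasOccNbr_upd_true hf⟩
    · have huw : u ≠ w := by rintro rfl; simp [hw] at hx
      exact ⟨by rw [Function.update_of_ne huw]; exact hx, hasOccNbr_upd_true hu⟩
    · exact ⟨by rw [Function.update_of_ne (hne u ha)]; exact hx, w, adj_symm ha, by simp⟩
  have h1 := Finset.card_le_card h
  rw [Finset.card_insert_of_notMem, Finset.card_union_of_disjoint] at h1
  · have : (((Oset x).card + (isoN x w).card + 1 : ℕ) : ℝ) ≤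
      ((Oset (Function.update x w true)).card : ℕ) := by exact_mod_cast h1
    push_cast at this
    unfold Or; linarith
  · rw [Finset.disjoint_left]
    intro u hu hu'
    simp only [Oset, isoN, Finset.mem_filter, Finset.mem_univ, true_and] at hu hu'
    exact hu'.2.2 hu.2
  · simp [Oset, isoN, hw]

lemma card_isoN_add_oN {x : Config L} {w : Vertex L} (hf : hasOccNbr x w) :
    1 ≤ (isoN x w).card + (oN x w).card := by
  obtain ⟨u, hu, hx⟩ := hf
  by_cases h : hasOccNbr x u
  · have : 0 < (oN x w).card := Finset.card_pos.mpr ⟨u, by simp [oN, hu, hx, h]⟩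
    omega
  · have : 0 < (isoN x w).card := Finset.card_pos.mpr ⟨u, by simp [isoN, hu, hx, h]⟩
    omega

lemma Ur_create_le (hL : 2 ≤ L) (x : Config L) (w : Vertex L) :
    (if hasOccNbr x w then Ur (Function.update x w true) - Ur x else 0) ≤
      (1 / 2) * ((oN x w).card : ℝ) -
        (1 / 4) * (if 2 ≤ (isoN x w).card then ((isoN x w).card : ℝ) else 0) := by
  by_cases hf : hasOccNbr x w
  · by_cases hw : x w = true
    · rw [update_self_eq hw, not_mem_isoN_of_occ hw]
      simp
    · have hw' : x w = false := by simpa using hw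
      have h1 := Or_create_ge hL hw' hf
      have h2 : (1 : ℝ) ≤ (isoN x w).card + (oN x w).card := by
        exact_mod_cast card_isoN_add_oN hf
      have h3 : (0 : ℝ) ≤ (oN x w).card := Nat.cast_nonneg _
      simp only [hf, if_true, Ur, Vr_create hw']
      split_ifs with h4
      · have : (2 : ℝ) ≤ (isoN x w).card := by exact_mod_cast h4
        linarith
      · linarith
  · rw [isoN_of_not_fac hf]
    simp [hf]

/-- Removals do not increase `U` on average: the removal of `w` costs one particle, and each
non-isolated particle becomes isolated or disappears for at most two choices of `w`. -/
lemma Ur_remove_sum (x : Config L) :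
    (∑ v : Vertex L, if hasOccNbr x v then Ur (Function.update x v false) - Ur x else 0) ≤ 0 := by
  set lost : Vertex L → Finset (Vertex L) :=
    fun w => Oset x \ Oset (Function.update x w false) with hlost
  have hsub : ∀ w, Oset (Function.update x w false) ⊆ Oset x := by
    intro w u hu
    simp only [Oset, Finset.mem_filter, Finset.mem_univ, true_and] at hu ⊢
    have huw : u ≠ w := by
      rintro rfl; simp at hu
    rw [Function.update_of_ne huw] at hu
    exact ⟨hu.1, hasOccNbr_of_upd_false hu.2⟩
  have hcount : ∑ w ∈ Oset x, (lost w).card ≤ 2 * (Oset x).card := by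
    have h1 : ∀ w, (lost w).card = ∑ u ∈ Oset x, if u ∈ lost w then 1 else 0 := by
      intro w
      rw [← Finset.card_filter]
      congr 1
      ext u
      simp only [hlost, Finset.mem_sdiff, Finset.mem_filter]
      tauto
    simp only [h1]
    rw [Finset.sum_comm, mul_comm, ← smul_eq_mul]
    apply Finset.sum_le_card_nsmul
    intro u hu
    rw [← Finset.card_filter]
    have hu' := hu
    simp only [Oset, Finset.mem_filter, Finset.mem_univ, true_and] at hu
    obtain ⟨hxu, w0, hw0, hxw0⟩ := hu
    have : (Oset x).filter (fun w => u ∈ lost w) ⊆ {u, w0} := by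
      intro w hw
      simp only [hlost, Finset.mem_filter, Finset.mem_sdiff] at hw
      simp only [Finset.mem_insert, Finset.mem_singleton]
      by_contra hcon
      push Not at hcon
      apply hw.2.2
      simp only [Oset, Finset.mem_filter, Finset.mem_univ, true_and]
      refine ⟨?_, w0, hw0, ?_⟩
      · rw [Function.update_of_ne hcon.1.symm]; exact hxu
      · rw [Function.update_of_ne hcon.2.symm]; exact hxw0
    exact (Finset.card_le_card this).trans Finset.card_le_two
  have hterm : ∀ v : Vertex L,
      (if hasOccNbr x v then Ur (Function.update x v false) - Ur x else 0) =
      if x v = true ∧ hasOccNbr x v then (-1 + ((lost v).card : ℝ) / 2) else 0 := by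
    intro v
    by_cases hf : hasOccNbr x v
    · by_cases hv : x v = true
      · simp only [hf, hv, and_self, if_true, Ur, Vr_remove hv]
        have h := Finset.card_sdiff_add_card_eq_card (hsub v)
        have h' : (((lost v).card + (Oset (Function.update x v false)).card : ℕ) : ℝ) =
          ((Oset x).card : ℕ) := by exact_mod_cast h
        push_cast at h'
        unfold Or
        linarith
      · have : x v = false := by simpa using hv
        simp [hf, this, update_self_eq this]
    · simp [hf]
  simp only [hterm]
  rw [← Finset.sum_filter]
  change ∑ v ∈ Oset x, (-1 + ((lost v).card : ℝ) / 2) ≤ 0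
  rw [Finset.sum_add_distrib, ← Finset.sum_div, Finset.sum_const, nsmul_eq_mul]
  have : ((∑ w ∈ Oset x, (lost w).card : ℕ) : ℝ) ≤ (2 * (Oset x).card : ℕ) := by
    exact_mod_cast hcount
  push_cast at this
  linarith

lemma Pop_Ur_le (hL : 2 ≤ L) {p : ℝ} (h0 : 0 ≤ p) (h1 : p ≤ 1) (x : Config L) :
    Pop p Ur x ≤ Ur x + (1 / (L : ℝ) ^ 2) * (2 * p * Or x - p / 4 * Br x) := by
  rw [Pop_drift]
  have hA : (∑ v : Vertex L, if hasOccNbr x v then Ur (Function.update x v true) - Ur x else 0) ≤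
      2 * Or x - Br x / 4 := by
    refine (Finset.sum_le_sum fun v _ => Ur_create_le hL x v).trans ?_
    rw [Finset.sum_sub_distrib, ← Finset.mul_sum, ← Finset.mul_sum]
    have := sum_oN_le x
    unfold Br
    linarith
  have hB := Ur_remove_sum x
  have hn : (0 : ℝ) ≤ 1 / (L : ℝ) ^ 2 := by positivity
  have := mul_le_mul_of_nonneg_left (add_le_add (mul_le_mul_of_nonneg_left hA h0)
    (mul_le_mul_of_nonneg_left hB (by linarith : (0 : ℝ) ≤ 1 - p))) hn
  nlinarith [this]

end Drift

/-! ### Averages over half-particles and the independent walk operator -/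

section Tracking

variable {L : ℕ} [NeZero L] {J : Type*} [Fintype J] [DecidableEq J]

/-- The four unit steps of the torus. -/
def dirs (L : ℕ) : Finset (Vertex L) := {(1, 0), (0, 1), (-1, 0), (0, -1)}

lemma adj_iff (u w : Vertex L) : adj u w ↔ w - u ∈ dirs L := by
  have h1 : ∀ a b : Vertex L, u - w = (a.1, a.2) ↔ w - u = (-a.1, -a.2) := by
    intro a _
    rw [← neg_sub w u, neg_eq_iff_eq_neg]; rfl
  have h2 := h1 (1, 0) 0
  have h3 := h1 (0, 1) 0
  simp only [neg_zero] at h2 h3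
  unfold adj dirs
  rw [h2, h3]
  simp only [Finset.mem_insert, Finset.mem_singleton]
  tauto

lemma card_dirs_le : (dirs L).card ≤ 4 := Finset.card_le_four

/-- The position of each label when `b` selects the first or the second half of its pair. -/
def sel (u v : J → Vertex L) (b : J → Bool) : J → Vertex L := fun j => if b j then u j else v j

/-- The average of `F` when each label sits at `u j` or `v j` with probability `1/2` each,
independently. -/
def av (F : (J → Vertex L) → ℝ) (u v : J → Vertex L) : ℝ :=
  (∑ b : J → Bool, F (sel u v b)) / 2 ^ Fintype.card J

lemma av_mono {F G : (J → Vertex L) → ℝ} {u v : J → Vertex L}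
    (h : ∀ b, F (sel u v b) ≤ G (sel u v b)) : av F u v ≤ av G u v := by
  unfold av
  gcongr with b
  exact h b

lemma av_sub (F G : (J → Vertex L) → ℝ) (u v : J → Vertex L) :
    av (fun x => F x - G x) u v = av F u v - av G u v := by
  unfold av
  rw [Finset.sum_sub_distrib, sub_div]

lemma av_add (F G : (J → Vertex L) → ℝ) (u v : J → Vertex L) :
    av (fun x => F x + G x) u v = av F u v + av G u v := by
  unfold av
  rw [Finset.sum_add_distrib, add_div]

lemma av_smul (a : ℝ) (F : (J → Vertex L) → ℝ) (u v : J → Vertex L) :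
    av (fun x => a * F x) u v = a * av F u v := by
  unfold av
  rw [← Finset.mul_sum, mul_div_assoc]

lemma av_sum {ι : Type*} (s : Finset ι) (F : ι → (J → Vertex L) → ℝ) (u v : J → Vertex L) :
    av (fun x => ∑ i ∈ s, F i x) u v = ∑ i ∈ s, av (F i) u v := by
  unfold av
  rw [Finset.sum_comm, Finset.sum_div]

lemma av_const (a : ℝ) (u v : J → Vertex L) : av (fun _ => a) u v = a := by
  unfold av
  rw [Finset.sum_const, Finset.card_univ, Fintype.card_fun, Fintype.card_bool, nsmul_eq_mul]
  push_cast
  field_simp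

lemma sel_self (u : J → Vertex L) (b : J → Bool) : sel u u b = u := by
  funext j; simp [sel]

lemma av_self (F : (J → Vertex L) → ℝ) (u : J → Vertex L) : av F u u = F u := by
  have : av F u u = av (fun _ => F u) u u := by
    unfold av; simp only [sel_self]
  rw [this, av_const]

/-- Averaging over the half occupied by the label `j` first. -/
lemma av_split (F : (J → Vertex L) → ℝ) (u v : J → Vertex L) (j : J) :
    av F u v = (1 / 2) * (av F u (Function.update v j (u j)) +
      av F (Function.update u j (v j)) v) := by
  set flip : (J → Bool) → (J → Bool) := fun b => Function.update b j (!(b j)) with hflip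
  have hinv : Function.Involutive flip := by
    intro b
    funext i
    by_cases h : i = j
    · subst h; simp [hflip]
    · simp [hflip, h]
  have hsum : ∑ b : J → Bool, F (sel u v (flip b)) = ∑ b : J → Bool, F (sel u v b) :=
    Equiv.sum_comp hinv.toPerm (fun b => F (sel u v b))
  have hterm : ∀ b : J → Bool, F (sel u (Function.update v j (u j)) b) +
      F (sel (Function.update u j (v j)) v b) = F (sel u v b) + F (sel u v (flip b)) := by
    intro b
    cases hb : b j
    · have e1 : sel u (Function.update v j (u j)) b = sel u v (flip b) := by
        funext i
        by_cases h : i = j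
        · subst h; simp [sel, hflip, hb]
        · simp [sel, hflip, h]
      have e2 : sel (Function.update u j (v j)) v b = sel u v b := by
        funext i
        by_cases h : i = j
        · subst h; simp [sel, hb]
        · simp [sel, h]
      rw [e1, e2, add_comm]
    · have e1 : sel u (Function.update v j (u j)) b = sel u v b := by
        funext i
        by_cases h : i = j
        · subst h; simp [sel, hb]
        · simp [sel, h]
      have e2 : sel (Function.update u j (v j)) v b = sel u v (flip b) := by
        funext i
        by_cases h : i = j
        · subst h; simp [sel, hflip, hb]
        · simp [sel, hflip, h]
      rw [e1, e2]
  unfold av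
  rw [← add_div, ← Finset.sum_add_distrib, Finset.sum_congr rfl fun b _ => hterm b,
    Finset.sum_add_distrib, hsum]
  ring

/-- The averaging operator of independent lazy random walks on the torus, in which each label
makes each of the four unit steps at rate `ω/2`. -/
def Kop (ω : ℝ) (F : (J → Vertex L) → ℝ) (x : J → Vertex L) : ℝ :=
  F x + ω / 2 * ∑ i, ∑ e ∈ dirs L, (F (Function.update x i (x i + e)) - F x)

lemma sel_shift (u v : J → Vertex L) (i : J) (e : Vertex L) (b : J → Bool) :
    sel (Function.update u i (u i + e)) (Function.update v i (v i + e)) b =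
      Function.update (sel u v b) i (sel u v b i + e) := by
  funext k
  by_cases h : k = i
  · subst h; simp only [sel, Function.update_self]; split_ifs <;> rfl
  · simp [sel, h]

/-- The average `av F` after a common shift by `e` of both halves of the label `i`. -/
def avs (F : (J → Vertex L) → ℝ) (u v : J → Vertex L) (i : J) (e : Vertex L) : ℝ :=
  av F (Function.update u i (u i + e)) (Function.update v i (v i + e))

lemma av_Kop (ω : ℝ) (F : (J → Vertex L) → ℝ) (u v : J → Vertex L) :
    av (Kop ω F) u v = av F u v + ω / 2 * ∑ i, ∑ e ∈ dirs L, (avs F u v i e - av F u v) := by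
  unfold Kop
  rw [av_add, av_smul, av_sum]
  congr 2
  refine Finset.sum_congr rfl fun i _ => ?_
  rw [av_sum]
  refine Finset.sum_congr rfl fun e _ => ?_
  rw [av_sub]
  congr 1
  unfold avs av
  simp only [sel_shift]

/-! ### Tracking isolated particles and isolated pairs -/

/-- The tracked labels `S` sit in the configuration `η` as isolated particles (`u j = v j`) or as
isolated pairs of adjacent particles `{u j, v j}`. -/
structure Compat (η : Config L) (S : Finset J) (u v : J → Vertex L) : Prop where
  occu : ∀ j ∈ S, η (u j) = true
  occv : ∀ j ∈ S, η (v j) = true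
  nbu : ∀ j ∈ S, ∀ w, adj w (u j) → η w = true → w = v j
  nbv : ∀ j ∈ S, ∀ w, adj w (v j) → η w = true → w = u j
  pair : ∀ j ∈ S, u j = v j ∨ adj (u j) (v j)
  disj : ∀ j ∈ S, ∀ l ∈ S, j ≠ l → u j ≠ u l ∧ u j ≠ v l ∧ v j ≠ u l ∧ v j ≠ v l

lemma Compat.mono {η : Config L} {S S' : Finset J} {u v : J → Vertex L} (h : Compat η S u v)
    (hs : S' ⊆ S) : Compat η S' u v :=
  ⟨fun j hj => h.occu j (hs hj), fun j hj => h.occv j (hs hj), fun j hj => h.nbu j (hs hj),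
    fun j hj => h.nbv j (hs hj), fun j hj => h.pair j (hs hj),
    fun j hj l hl => h.disj j (hs hj) l (hs hl)⟩

lemma Compat.symm {η : Config L} {S : Finset J} {u v : J → Vertex L} (h : Compat η S u v) :
    Compat η S v u :=
  ⟨h.occv, h.occu, h.nbv, h.nbu, fun j hj => (h.pair j hj).imp Eq.symm adj_symm,
    fun j hj l hl hne => by
      have := h.disj j hj l hl hne
      tauto⟩

lemma Compat.inj {η : Config L} {S : Finset J} {u v : J → Vertex L} (h : Compat η S u v)
    (b : J → Bool) : Set.InjOn (sel u v b) S := by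
  intro j hj l hl he
  by_contra hne
  have hd := h.disj j hj l hl hne
  simp only [sel] at he
  split_ifs at he <;> tauto

/-- Removing a particle which belongs to no tracked label. -/
lemma Compat.remove {η : Config L} {S : Finset J} {u v : J → Vertex L} (h : Compat η S u v)
    {w : Vertex L} (hw : ∀ j ∈ S, w ≠ u j ∧ w ≠ v j) :
    Compat (Function.update η w false) S u v := by
  have key : ∀ z, Function.update η w false z = true → η z = true := by
    intro z hz
    by_cases hzw : z = w
    · subst hzw; simp at hz
    · rwa [Function.update_of_ne hzw] at hz
  refine ⟨fun j hj => ?_, fun j hj => ?_, fun j hj z hz hx => h.nbu j hj z hz (key z hx),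
    fun j hj z hz hx => h.nbv j hj z hz (key z hx), h.pair, h.disj⟩
  · rw [Function.update_of_ne (hw j hj).1.symm]; exact h.occu j hj
  · rw [Function.update_of_ne (hw j hj).2.symm]; exact h.occv j hj

/-- Removing the half `u j` of a tracked pair leaves the isolated particle `v j`. -/
lemma Compat.remove_half (hL : 2 ≤ L) {η : Config L} {S : Finset J} {u v : J → Vertex L}
    (h : Compat η S u v) {j : J} (hj : j ∈ S) (hne : u j ≠ v j) :
    Compat (Function.update η (u j) false) S (Function.update u j (v j)) v := by
  have key : ∀ z, Function.update η (u j) false z = true → η z = true ∧ z ≠ u j := by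
    intro z hz
    by_cases hzw : z = u j
    · rw [hzw] at hz; simp at hz
    · rw [Function.update_of_ne hzw] at hz; exact ⟨hz, hzw⟩
  refine ⟨fun l hl => ?_, fun l hl => ?_, fun l hl z hz hx => ?_, fun l hl z hz hx => ?_,
    fun l hl => ?_, fun l hl k hk hlk => ?_⟩
  · by_cases hlj : l = j
    · subst hlj
      rw [Function.update_self, Function.update_of_ne hne.symm]; exact h.occv l hl
    · rw [Function.update_of_ne hlj, Function.update_of_ne (h.disj l hl j hj hlj).1]
      exact h.occu l hl
  · by_cases hlj : l = j
    · subst hlj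
      rw [Function.update_of_ne hne.symm]; exact h.occv l hl
    · rw [Function.update_of_ne (h.disj l hl j hj hlj).2.2.1]
      exact h.occv l hl
  · obtain ⟨hz1, hz2⟩ := key z hx
    by_cases hlj : l = j
    · subst hlj
      rw [Function.update_self] at hz
      exact absurd (h.nbv l hl z hz hz1) hz2
    · rw [Function.update_of_ne hlj] at hz
      exact h.nbu l hl z hz hz1
  · obtain ⟨hz1, hz2⟩ := key z hx
    by_cases hlj : l = j
    · subst hlj
      exact absurd (h.nbv l hl z hz hz1) hz2
    · rw [Function.update_of_ne hlj]
      exact h.nbv l hl z hz hz1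
  · by_cases hlj : l = j
    · subst hlj; left; rw [Function.update_self]
    · rw [Function.update_of_ne hlj]; exact h.pair l hl
  · have hd := h.disj l hl k hk hlk
    by_cases hlj : l = j
    · subst hlj
      have hkl : k ≠ l := fun e => hlk e.symm
      rw [Function.update_self, Function.update_of_ne hkl]
      tauto
    · by_cases hkj : k = j
      · subst hkj
        rw [Function.update_self, Function.update_of_ne hlj]
        tauto
      · rw [Function.update_of_ne hlj, Function.update_of_ne hkj]
        exact hd

/-- A creation away from the neighbourhoods of all tracked labels. -/
lemma Compat.create {η : Config L} {S : Finset J} {u v : J → Vertex L} (h : Compat η S u v)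
    {w : Vertex L} (hw : ∀ j ∈ S, ¬ adj (u j) w ∧ ¬ adj (v j) w) :
    Compat (Function.update η w true) S u v := by
  have hocc : ∀ z, η z = true → Function.update η w true z = true := by
    intro z hz
    by_cases hzw : z = w
    · subst hzw; simp
    · rw [Function.update_of_ne hzw]; exact hz
  refine ⟨fun j hj => hocc _ (h.occu j hj), fun j hj => hocc _ (h.occv j hj),
    fun j hj z hz hx => ?_, fun j hj z hz hx => ?_, h.pair, h.disj⟩
  · have hzw : z ≠ w := by rintro rfl; exact (hw j hj).1 (adj_symm hz)
    rw [Function.update_of_ne hzw] at hx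
    exact h.nbu j hj z hz hx
  · have hzw : z ≠ w := by rintro rfl; exact (hw j hj).2 (adj_symm hz)
    rw [Function.update_of_ne hzw] at hx
    exact h.nbv j hj z hz hx

/-- A creation at `w` next to the isolated particle `j` only produces a tracked pair. -/
lemma Compat.create_pair (hL : 2 ≤ L) {η : Config L} {S : Finset J} {u v : J → Vertex L}
    (h : Compat η S u v) {w : Vertex L} (hw0 : η w = false) {j : J} (hj : j ∈ S)
    (huv : u j = v j) (hadj : adj (u j) w)
    (hw : ∀ l ∈ S, l ≠ j → ¬ adj (u l) w ∧ ¬ adj (v l) w)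
    (hn : ∀ z, adj z w → η z = true → z = u j) :
    Compat (Function.update η w true) S u (Function.update v j w) := by
  have hocc : ∀ z, η z = true → Function.update η w true z = true := by
    intro z hz
    by_cases hzw : z = w
    · subst hzw; simp
    · rw [Function.update_of_ne hzw]; exact hz
  have hneu : ∀ l ∈ S, u l ≠ w := fun l hl e => by
    have := h.occu l hl; rw [e, hw0] at this; cases this
  have hnev : ∀ l ∈ S, v l ≠ w := fun l hl e => by
    have := h.occv l hl; rw [e, hw0] at this; cases this
  refine ⟨fun l hl => hocc _ (h.occu l hl), fun l hl => ?_, fun l hl z hz hx => ?_,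
    fun l hl z hz hx => ?_, fun l hl => ?_, fun l hl k hk hlk => ?_⟩
  · by_cases hlj : l = j
    · subst hlj; simp
    · rw [Function.update_of_ne hlj]; exact hocc _ (h.occv l hl)
  · by_cases hzw : z = w
    · by_cases hlj : l = j
      · subst hlj; rw [Function.update_self]; exact hzw
      · exact absurd (hzw ▸ adj_symm hz) (hw l hl hlj).1
    · rw [Function.update_of_ne hzw] at hx
      by_cases hlj : l = j
      · subst hlj
        have := h.nbu l hl z hz hx
        rw [this, ← huv] at hz
        exact absurd hz (adj_irrefl hL _)
      · rw [Function.update_of_ne hlj]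
        exact h.nbu l hl z hz hx
  · by_cases hlj : l = j
    · subst hlj
      rw [Function.update_self] at hz
      have hzw : z ≠ w := by rintro rfl; exact adj_irrefl hL _ hz
      rw [Function.update_of_ne hzw] at hx
      exact hn z hz hx
    · rw [Function.update_of_ne hlj] at hz
      have hzw : z ≠ w := by rintro rfl; exact (hw l hl hlj).2 (adj_symm hz)
      rw [Function.update_of_ne hzw] at hx
      exact h.nbv l hl z hz hx
  · by_cases hlj : l = j
    · subst hlj; right; rw [Function.update_self]; exact hadj
    · rw [Function.update_of_ne hlj]; exact h.pair l hl
  · have hd := h.disj l hl k hk hlk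
    by_cases hlj : l = j
    · subst hlj
      have hkl : k ≠ l := fun e => hlk e.symm
      rw [Function.update_self, Function.update_of_ne hkl]
      exact ⟨hd.1, hd.2.1, (hneu k hk).symm, (hnev k hk).symm⟩
    · by_cases hkj : k = j
      · subst hkj
        rw [Function.update_self, Function.update_of_ne hlj]
        exact ⟨hd.1, hneu l hl, hd.2.2.1, hnev l hl⟩
      · rw [Function.update_of_ne hlj, Function.update_of_ne hkj]
        exact hd

end Tracking

/-! ### One step of the comparison with independent walks -/

section Step

variable {L : ℕ} [NeZero L] {J : Type*} [Fintype J] [DecidableEq J]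

/-- The tracked labels with a particle next to `w`. -/
def trN (S : Finset J) (u v : J → Vertex L) (w : Vertex L) : Finset J :=
  S.filter fun j => adj (u j) w ∨ adj (v j) w

lemma card_trN_le {η : Config L} {S : Finset J} {u v : J → Vertex L} (h : Compat η S u v)
    (w : Vertex L) : (trN S u v w).card ≤ (isoN η w).card + (oN η w).card := by
  have h1 : (trN S u v w).card ≤ (isoN η w ∪ oN η w).card := by
    apply Finset.card_le_card_of_injOn (fun j => if adj (u j) w then u j else v j)
    · intro j hj
      have hj' := Finset.mem_coe.mp hj
      rw [trN, Finset.mem_filter] at hj'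
      obtain ⟨hS, hj'⟩ := hj'
      rw [Finset.mem_coe, Finset.mem_union]
      have hgen : ∀ z, adj z w → η z = true → z ∈ isoN η w ∨ z ∈ oN η w := by
        intro z hz hx
        by_cases hf : hasOccNbr η z
        · right; simp [oN, hz, hx, hf]
        · left; simp [isoN, hz, hx, hf]
      dsimp only
      split_ifs with hu
      · exact hgen _ hu (h.occu j hS)
      · exact hgen _ (hj'.resolve_left hu) (h.occv j hS)
    · intro j hj l hl he
      have hj' := (Finset.mem_filter.mp (Finset.mem_coe.mp hj)).1
      have hl' := (Finset.mem_filter.mp (Finset.mem_coe.mp hl)).1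
      by_contra hne
      have hd := h.disj j hj' l hl' hne
      dsimp only at he
      split_ifs at he <;> tauto
  exact h1.trans (Finset.card_union_le _ _)

lemma drop_le {F : Finset J → (J → Vertex L) → ℝ}
    (hA : ∀ S, ∀ j ∈ S, ∀ x, F S x - F (S.erase j) x ≤ 1 / 4) (S T : Finset J) (hT : T ⊆ S)
    (x : J → Vertex L) : F S x - F (S \ T) x ≤ (T.card : ℝ) / 4 := by
  induction T using Finset.induction_on with
  | empty => simp
  | insert a T ha ih =>
    have h1 := ih ((Finset.subset_insert a T).trans hT)
    have hm : a ∈ S \ T := by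
      rw [Finset.mem_sdiff]; exact ⟨hT (Finset.mem_insert_self a T), ha⟩
    have h2 := hA (S \ T) a hm x
    rw [show (S \ T).erase a = S \ insert a T by
      ext z; simp only [Finset.mem_erase, Finset.mem_sdiff, Finset.mem_insert]; tauto] at h2
    rw [Finset.card_insert_of_notMem ha]
    push_cast
    linarith

/-- The error allowed for a creation at `w`. -/
def bnd (η : Config L) (w : Vertex L) : ℝ :=
  (if 2 ≤ (isoN η w).card then ((isoN η w).card : ℝ) else 0) + (oN η w).card

lemma bnd_nonneg (η : Config L) (w : Vertex L) : 0 ≤ bnd η w := by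
  unfold bnd; split_ifs <;> positivity

/-- Effect of a creation at `w`: half of the shifts of the tracked labels onto `w`. -/
lemma create_bound (hL : 2 ≤ L) {F : Finset J → (J → Vertex L) → ℝ}
    (hA : ∀ S, ∀ j ∈ S, ∀ x, F S x - F (S.erase j) x ≤ 1 / 4)
    {Φ : Config L → ℝ} (hΦ : ∀ η S u v, Compat η S u v → av (F S) u v ≤ Φ η)
    {η : Config L} {S : Finset J} {u v : J → Vertex L} (h : Compat η S u v)
    (hΔ : ∀ j ∈ S, ∀ e, avs (F S) u v j e - av (F S) u v ≤ 1 / 2) (w : Vertex L) :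
    av (F S) u v + (1 / 2) * (∑ j ∈ S, if w - u j ∈ dirs L then
      avs (F S) u v j (w - u j) - av (F S) u v else 0) - bnd η w ≤
      Φ (Function.update η w true) := by
  have htr : ∀ j ∈ S, w - u j ∈ dirs L → j ∈ trN S u v w := by
    intro j hj hd
    rw [trN, Finset.mem_filter]
    exact ⟨hj, Or.inl ((adj_iff _ _).mpr hd)⟩
  have hs : (∑ j ∈ S, if w - u j ∈ dirs L then
      avs (F S) u v j (w - u j) - av (F S) u v else 0) ≤ (1 / 2) * (trN S u v w).card := by
    calc _ ≤ ∑ j ∈ S, if j ∈ trN S u v w then (1 / 2 : ℝ) else 0 := by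
          refine Finset.sum_le_sum fun j hj => ?_
          split_ifs with h1 h2 h2
          · exact hΔ j hj _
          · exact absurd (htr j hj h1) h2
          · norm_num
          · exact le_rfl
      _ = (1 / 2) * (trN S u v w).card := by
          rw [← Finset.sum_filter, Finset.sum_const, nsmul_eq_mul, mul_comm]
          congr 3
          ext j
          rw [Finset.mem_filter, and_iff_right_iff_imp]
          exact fun hj => (Finset.mem_filter.mp hj).1
  have hcard := card_trN_le h w
  have hcard' : ((trN S u v w).card : ℝ) ≤ (isoN η w).card + (oN η w).card := by
    exact_mod_cast hcard
  by_cases hw : η w = true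
  · have h1 := hΦ η S u v h
    rw [update_self_eq hw]
    have h2 : (isoN η w).card = 0 := by rw [not_mem_isoN_of_occ hw]; rfl
    have h3 : (oN η w).card ≤ bnd η w := by simp [bnd, h2]
    rw [h2] at hcard'
    have : (0 : ℝ) ≤ (oN η w).card := Nat.cast_nonneg _
    push_cast at hcard'
    linarith
  · have hw' : η w = false := by simpa using hw
    by_cases hgood : (isoN η w).card ≤ 1 ∧ (oN η w).card = 0
    · have hb : bnd η w = 0 := by
        simp [bnd, hgood.2]; omega
      rw [hb, sub_zero]
      rcases Finset.eq_empty_or_nonempty (trN S u v w) with hemp | ⟨j, hjt⟩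
      · have h1 := hΦ _ S u v (h.create (w := w) fun j hj => by
          constructor <;> intro hh
          · have : j ∈ trN S u v w := by rw [trN, Finset.mem_filter]; exact ⟨hj, Or.inl hh⟩
            rw [hemp] at this; simp at this
          · have : j ∈ trN S u v w := by rw [trN, Finset.mem_filter]; exact ⟨hj, Or.inr hh⟩
            rw [hemp] at this; simp at this)
        rw [hemp] at hs
        simp at hs
        linarith
      · have huniq : ∀ l ∈ trN S u v w, l = j := by
          intro l hl
          have : (trN S u v w).card ≤ 1 := by omega
          exact Finset.card_le_one.mp this l hl j hjt
        have hj : j ∈ S := (Finset.mem_filter.mp hjt).1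
        have hoemp : oN η w = ∅ := Finset.card_eq_zero.mp hgood.2
        have huv : u j = v j := by
          by_contra hne
          have hadj := (h.pair j hj).resolve_left hne
          rcases (Finset.mem_filter.mp hjt).2 with hu | hv
          · have : u j ∈ oN η w := by
              simp only [oN, Finset.mem_filter, Finset.mem_univ, true_and]
              exact ⟨hu, h.occu j hj, v j, adj_symm hadj, h.occv j hj⟩
            rw [hoemp] at this; simp at this
          · have : v j ∈ oN η w := by
              simp only [oN, Finset.mem_filter, Finset.mem_univ, true_and]
              exact ⟨hv, h.occv j hj, u j, hadj, h.occu j hj⟩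
            rw [hoemp] at this; simp at this
        have hadj : adj (u j) w := by
          rcases (Finset.mem_filter.mp hjt).2 with hu | hv
          · exact hu
          · rw [huv]; exact hv
        have hmem : ∀ z, adj z w → η z = true → z ∈ isoN η w := by
          intro z hz hx
          by_cases hf : hasOccNbr η z
          · have : z ∈ oN η w := by simp [oN, hz, hx, hf]
            rw [hoemp] at this; simp at this
          · simp [isoN, hz, hx, hf]
        have h1 := hΦ _ S u _ (h.create_pair hL hw' hj huv hadj (fun l hl hlj => by
            constructor <;> intro hh
            · exact hlj (huniq l (by rw [trN, Finset.mem_filter]; exact ⟨hl, Or.inl hh⟩))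
            · exact hlj (huniq l (by rw [trN, Finset.mem_filter]; exact ⟨hl, Or.inr hh⟩)))
          (fun z hz hx => Finset.card_le_one.mp hgood.1 z (hmem z hz hx) (u j)
            (hmem _ hadj (h.occu j hj))))
        rw [av_split _ u _ j] at h1
        have hsum : (∑ l ∈ S, if w - u l ∈ dirs L then
            avs (F S) u v l (w - u l) - av (F S) u v else 0) =
            avs (F S) u v j (w - u j) - av (F S) u v := by
          rw [Finset.sum_eq_single_of_mem j hj]
          · rw [if_pos ((adj_iff _ _).mp hadj)]
          · intro l hl hlj
            rw [if_neg]
            intro hd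
            exact hlj (huniq l (htr l hl hd))
        rw [hsum]
        have e1 : Function.update (Function.update v j w) j (u j) = v := by
          rw [Function.update_idem, huv, Function.update_eq_self]
        have e2 : avs (F S) u v j (w - u j) =
            av (F S) (Function.update u j (Function.update v j w j)) (Function.update v j w) := by
          unfold avs
          rw [← huv, add_sub_cancel, Function.update_self]
        rw [e1, ← e2] at h1
        linarith
    · have h1 := hΦ _ (S \ trN S u v w) u v
        ((h.mono Finset.sdiff_subset).create (w := w) fun j hj => by
          rw [Finset.mem_sdiff, trN, Finset.mem_filter] at hj
          tauto)
      have h2 : av (F S) u v - av (F (S \ trN S u v w)) u v ≤ ((trN S u v w).card : ℝ) / 4 := by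
        rw [← av_sub]
        calc _ ≤ av (fun _ => ((trN S u v w).card : ℝ) / 4) u v :=
              av_mono fun b => drop_le hA S _ (Finset.filter_subset _ _) _
          _ = _ := av_const _ _ _
      have h3 : (1 / 2) * (((isoN η w).card : ℝ) + (oN η w).card) ≤ bnd η w := by
        unfold bnd
        have ho : (0 : ℝ) ≤ (oN η w).card := Nat.cast_nonneg _
        split_ifs with h4
        · have : (0 : ℝ) ≤ (isoN η w).card := Nat.cast_nonneg _
          linarith
        · have hi : ((isoN η w).card : ℝ) ≤ 1 := by exact_mod_cast (by omega)
          have ho1 : (1 : ℝ) ≤ (oN η w).card := by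
            exact_mod_cast (by omega)
          linarith
      linarith

/-- Effect of a removal at the facilitated site `w` on the tracked pairs. -/
lemma remove_bound (hL : 2 ≤ L) {F : Finset J → (J → Vertex L) → ℝ}
    {Φ : Config L → ℝ} (hΦ : ∀ η S u v, Compat η S u v → av (F S) u v ≤ Φ η)
    {η : Config L} {S : Finset J} {u v : J → Vertex L} (h : Compat η S u v) (w : Vertex L)
    (hf : hasOccNbr η w) :
    av (F S) u v + (∑ j ∈ S,
      ((if w = u j then av (F S) (Function.update u j (v j)) v - av (F S) u v else 0) +
       (if w = v j then av (F S) u (Function.update v j (u j)) - av (F S) u v else 0))) ≤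
      Φ (Function.update η w false) := by
  by_cases hex : ∃ j ∈ S, w = u j ∨ w = v j
  · obtain ⟨j, hj, hjw⟩ := hex
    have hne : u j ≠ v j := by
      intro e
      obtain ⟨z, hz, hx⟩ := hf
      have hw : w = u j := by rcases hjw with h1 | h1 <;> rw [h1]; exact e.symm
      rw [hw] at hz
      have := h.nbu j hj z hz hx
      rw [this, ← e] at hz
      exact adj_irrefl hL _ hz
    have hother : ∀ l ∈ S, l ≠ j → w ≠ u l ∧ w ≠ v l := by
      intro l hl hlj
      have hd := h.disj l hl j hj hlj
      rcases hjw with h1 | h1 <;> rw [h1] <;> tauto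
    rw [Finset.sum_eq_single_of_mem j hj (fun l hl hlj => by
      rw [if_neg (hother l hl hlj).1, if_neg (hother l hl hlj).2, add_zero])]
    rcases hjw with h1 | h1
    · rw [if_pos h1, if_neg (by rw [h1]; exact hne), h1]
      have := hΦ _ S _ _ (h.remove_half hL hj hne)
      linarith
    · rw [if_pos h1, if_neg (by rw [h1]; exact hne.symm), h1]
      have := hΦ _ S _ _ (h.symm.remove_half hL hj hne.symm).symm
      linarith
  · push Not at hex
    rw [Finset.sum_eq_zero (fun j hj => by
      rw [if_neg (hex j hj).1, if_neg (hex j hj).2, add_zero]), add_zero]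
    exact hΦ _ S u v (h.remove hex)

/-- The error rate of the comparison: joins of isolated particles and interactions with
non-isolated particles, at rate `p/n`. -/
def rr (p : ℝ) (η : Config L) : ℝ := p / (L : ℝ) ^ 2 * (Br η + 4 * Or η)

lemma sum_bnd_le (η : Config L) : ∑ w : Vertex L, bnd η w ≤ Br η + 4 * Or η := by
  unfold bnd
  rw [Finset.sum_add_distrib]
  have := sum_oN_le η
  unfold Br
  linarith

/-- The comparison step when every shift increment is at most `1/2`. -/
lemma step_main (hL : 2 ≤ L) {p : ℝ} (h0 : 0 ≤ p) (h1 : p ≤ 1)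
    {F : Finset J → (J → Vertex L) → ℝ}
    (hA : ∀ S, ∀ j ∈ S, ∀ x, F S x - F (S.erase j) x ≤ 1 / 4)
    (hdep : ∀ S x y, (∀ j ∈ S, x j = y j) → F S x = F S y)
    {Φ : Config L → ℝ} (hΦ : ∀ η S u v, Compat η S u v → av (F S) u v ≤ Φ η)
    {η : Config L} {S : Finset J} {u v : J → Vertex L} (h : Compat η S u v)
    (hΔ : ∀ j ∈ S, ∀ e, avs (F S) u v j e - av (F S) u v ≤ 1 / 2) :
    av (Kop (p / (L : ℝ) ^ 2) (F S)) u v ≤ rr p η + Pop p Φ η := by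
  set f := av (F S) u v with hfdef
  set s : Vertex L → ℝ := fun w => ∑ j ∈ S, if w - u j ∈ dirs L then
      avs (F S) u v j (w - u j) - f else 0 with hsdef
  set d : Vertex L → ℝ := fun w => ∑ j ∈ S,
      ((if w = u j then av (F S) (Function.update u j (v j)) v - f else 0) +
       (if w = v j then av (F S) u (Function.update v j (u j)) - f else 0)) with hddef
  have hC : ∀ w, f + (1 / 2) * s w - bnd η w ≤ Φ (Function.update η w true) :=
    fun w => create_bound hL hA hΦ h hΔ w
  have hR : ∀ w, hasOccNbr η w → f + d w ≤ Φ (Function.update η w false) :=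
    fun w hf => remove_bound hL hΦ h w hf
  have hsumd : ∑ w, d w = 0 := by
    simp only [hddef]
    rw [Finset.sum_comm]
    refine Finset.sum_eq_zero fun j _ => ?_
    rw [Finset.sum_add_distrib, Finset.sum_ite_eq', Finset.sum_ite_eq']
    simp only [Finset.mem_univ, if_true]
    have := av_split (F S) u v j
    linarith
  have hsums : ∑ w, s w = ∑ i ∈ S, ∑ e ∈ dirs L, (avs (F S) u v i e - f) := by
    simp only [hsdef]
    rw [Finset.sum_comm]
    refine Finset.sum_congr rfl fun j _ => ?_
    rw [← Equiv.sum_comp (Equiv.addRight (u j))]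
    simp only [Equiv.coe_addRight, add_sub_cancel_right]
    rw [← Finset.sum_filter]
    congr 1
    ext z; simp
  have hKop : av (Kop (p / (L : ℝ) ^ 2) (F S)) u v =
      f + p / (L : ℝ) ^ 2 / 2 * ∑ w, s w := by
    rw [av_Kop, hsums]
    congr 2
    symm
    apply Finset.sum_subset (Finset.subset_univ S)
    intro i _ hi
    refine Finset.sum_eq_zero fun e _ => ?_
    rw [sub_eq_zero]
    unfold avs
    rw [hfdef]
    unfold av
    congr 1
    refine Finset.sum_congr rfl fun b _ => hdep S _ _ fun j hj => ?_
    have : j ≠ i := fun e => hi (e ▸ hj)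
    simp [sel, this]
  have hterm : ∀ w : Vertex L, p * (f + (1 / 2) * s w - bnd η w) + (1 - p) * (f + d w) ≤
      if hasOccNbr η w then
        p * Φ (Function.update η w true) + (1 - p) * Φ (Function.update η w false)
      else Φ η := by
    intro w
    split_ifs with hf
    · exact add_le_add (mul_le_mul_of_nonneg_left (hC w) h0)
        (mul_le_mul_of_nonneg_left (hR w hf) (by linarith))
    · have hs0 : s w = 0 := by
        refine Finset.sum_eq_zero fun j hj => ?_
        rw [if_neg]
        intro hd
        exact hf ⟨u j, (adj_iff _ _).mpr hd, h.occu j hj⟩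
      have hd0 : d w = 0 := by
        refine Finset.sum_eq_zero fun j hj => ?_
        have hno : ∀ z, adj z w → η z = true → False := fun z hz hx => hf ⟨z, hz, hx⟩
        have t1 : (if w = u j then av (F S) (Function.update u j (v j)) v - f else 0) = 0 := by
          split_ifs with e
          · rcases h.pair j hj with e' | e'
            · rw [← e', Function.update_eq_self, sub_self]
            · exact (hno (v j) (e ▸ adj_symm e') (h.occv j hj)).elim
          · rfl
        have t2 : (if w = v j then av (F S) u (Function.update v j (u j)) - f else 0) = 0 := by
          split_ifs with e
          · rcases h.pair j hj with e' | e'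
            · rw [e', Function.update_eq_self, sub_self]
            · exact (hno (u j) (e ▸ e') (h.occu j hj)).elim
          · rfl
        rw [t1, t2, add_zero]
      have := hΦ η S u v h
      have hb := mul_nonneg h0 (bnd_nonneg η w)
      rw [hs0, hd0]
      nlinarith
  have hsum := Finset.sum_le_sum fun w (_ : w ∈ (univ : Finset (Vertex L))) => hterm w
  have hlhs : ∑ w : Vertex L, (p * (f + (1 / 2) * s w - bnd η w) + (1 - p) * (f + d w)) =
      (L : ℝ) ^ 2 * f + p * ((1 / 2) * ∑ w, s w) - p * ∑ w, bnd η w := by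
    have : ∀ w : Vertex L, p * (f + (1 / 2) * s w - bnd η w) + (1 - p) * (f + d w) =
        f + (p * (1 / 2)) * s w - p * bnd η w + (1 - p) * d w := fun w => by ring
    rw [Finset.sum_congr rfl fun w _ => this w, Finset.sum_add_distrib, Finset.sum_sub_distrib,
      Finset.sum_add_distrib, ← Finset.mul_sum, ← Finset.mul_sum, ← Finset.mul_sum, hsumd,
      sum_const_vertex]
    ring
  rw [hlhs] at hsum
  have hpos := Lsq_pos (L := L)
  have hfin := mul_le_mul_of_nonneg_left hsum (by positivity : (0 : ℝ) ≤ 1 / (L : ℝ) ^ 2)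
  rw [← Pop_eq] at hfin
  rw [hKop]
  have hb := mul_le_mul_of_nonneg_left (sum_bnd_le η)
    (by positivity : (0 : ℝ) ≤ p / (L : ℝ) ^ 2)
  have he : 1 / (L : ℝ) ^ 2 * ((L : ℝ) ^ 2 * f + p * ((1 / 2) * ∑ w, s w) -
      p * ∑ w, bnd η w) = f + p / (L : ℝ) ^ 2 / 2 * ∑ w, s w -
      p / (L : ℝ) ^ 2 * ∑ w, bnd η w := by
    field_simp
  rw [he] at hfin
  unfold rr
  linarith

/-- The comparison step: a function `F` of independent walks whose value drops by at most `1/4`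
when a label is forgotten is dominated along one step of the KCIP, up to `rr`. Labels whose
presence does not help are discarded first. -/
lemma step_lemma (hL : 2 ≤ L) {p : ℝ} (h0 : 0 ≤ p) (h1 : p ≤ 1)
    (hω : 4 * p * Fintype.card J ≤ (L : ℝ) ^ 2)
    {F : Finset J → (J → Vertex L) → ℝ}
    (hA : ∀ S, ∀ j ∈ S, ∀ x, F S x - F (S.erase j) x ≤ 1 / 4)
    (hdep : ∀ S x y, (∀ j ∈ S, x j = y j) → F S x = F S y)
    {Φ : Config L → ℝ} (hΦ : ∀ η S u v, Compat η S u v → av (F S) u v ≤ Φ η)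
    {η : Config L} (S : Finset J) {u v : J → Vertex L} (h : Compat η S u v) :
    av (Kop (p / (L : ℝ) ^ 2) (F S)) u v ≤ rr p η + Pop p Φ η := by
  induction S using Finset.strongInduction with
  | H S ih =>
    by_cases hex : ∃ j ∈ S, av (Kop (p / (L : ℝ) ^ 2) (F S)) u v ≤
        av (Kop (p / (L : ℝ) ^ 2) (F (S.erase j))) u v
    · obtain ⟨j, hj, hle⟩ := hex
      exact hle.trans (ih _ (Finset.erase_ssubset hj) (h.mono (Finset.erase_subset _ _)))
    · push Not at hex
      apply step_main hL h0 h1 hA hdep hΦ h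
      intro j hj e
      have hlt := hex j hj
      rw [av_Kop, av_Kop] at hlt
      set a := av (F S) u v - av (F (S.erase j)) u v with ha
      have hup : ∀ u' v' : J → Vertex L, av (F S) u' v' - av (F (S.erase j)) u' v' ≤ 1 / 4 := by
        intro u' v'
        rw [← av_sub]
        calc _ ≤ av (fun _ => (1 / 4 : ℝ)) u' v' := av_mono fun b => hA S j hj _
          _ = _ := av_const _ _ _
      set ω := p / (L : ℝ) ^ 2 with hωd
      have hω0 : 0 ≤ ω := by positivity
      set N : ℝ := ∑ _i : J, ∑ _e ∈ dirs L, (1 : ℝ) with hN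
      have hN0 : 0 ≤ N := Finset.sum_nonneg fun _ _ => Finset.sum_nonneg fun _ _ => zero_le_one
      have hN4 : N ≤ 4 * Fintype.card J := by
        rw [hN]
        simp only [Finset.sum_const, nsmul_eq_mul, mul_one, Finset.card_univ]
        have : ((dirs L).card : ℝ) ≤ 4 := by exact_mod_cast card_dirs_le
        nlinarith [(Nat.cast_nonneg (Fintype.card J) : (0 : ℝ) ≤ _)]
      have hωN : ω * N ≤ 1 := by
        have hpos := Lsq_pos (L := L)
        rw [hωd, div_mul_eq_mul_div, div_le_one hpos]
        nlinarith
      have hdiff : (∑ i, ∑ e ∈ dirs L, (avs (F S) u v i e - av (F S) u v)) -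
          (∑ i, ∑ e ∈ dirs L, (avs (F (S.erase j)) u v i e - av (F (S.erase j)) u v)) ≤
          N * (1 / 4 - a) := by
        rw [hN, ← Finset.sum_sub_distrib, Finset.sum_mul]
        refine Finset.sum_le_sum fun i _ => ?_
        rw [← Finset.sum_sub_distrib, Finset.sum_mul]
        refine Finset.sum_le_sum fun e _ => ?_
        have := hup (Function.update u i (u i + e)) (Function.update v i (v i + e))
        unfold avs
        linarith
      have hκ : ω / 2 * ((∑ i, ∑ e ∈ dirs L, (avs (F S) u v i e - av (F S) u v)) -
          (∑ i, ∑ e ∈ dirs L, (avs (F (S.erase j)) u v i e - av (F (S.erase j)) u v))) ≤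
          ω / 2 * (N * (1 / 4 - a)) := mul_le_mul_of_nonneg_left hdiff (by positivity)
      have hpos : 0 < a + ω / 2 * (N * (1 / 4 - a)) := by
        rw [ha]; rw [ha] at hκ; linarith
      have ha4 : -(1 / 4) ≤ a := by
        by_contra hcon
        push Not at hcon
        have : ω * N * (1 / 4 - a) ≤ 1 * (1 / 4 - a) :=
          mul_le_mul_of_nonneg_right hωN (by linarith)
        nlinarith
      have hs1 := hup (Function.update u j (u j + e)) (Function.update v j (v j + e))
      have hs2 : av (F (S.erase j)) (Function.update u j (u j + e))
          (Function.update v j (v j + e)) = av (F (S.erase j)) u v := by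
        unfold av
        congr 1
        refine Finset.sum_congr rfl fun b _ => hdep _ _ _ fun l hl => ?_
        have : l ≠ j := (Finset.mem_erase.mp hl).1
        simp [sel, this]
      rw [hs2] at hs1
      unfold avs
      linarith

/-- Iterating the comparison step: a family `g t` which is a subsolution of the independent walk
recursion, and which drops by at most `1/4` when a label is forgotten, bounds the expected total
interaction from below. -/
lemma tracking (hL : 2 ≤ L) {p : ℝ} (h0 : 0 ≤ p) (h1 : p ≤ 1)
    (hω : 4 * p * Fintype.card J ≤ (L : ℝ) ^ 2)
    {g : ℕ → Finset J → (J → Vertex L) → ℝ}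
    (hz : ∀ S x, g 0 S x ≤ 0)
    (hA : ∀ t S, ∀ j ∈ S, ∀ x, g t S x - g t (S.erase j) x ≤ 1 / 4)
    (hdep : ∀ t S x y, (∀ j ∈ S, x j = y j) → g t S x = g t S y)
    (hK : ∀ (t : ℕ) (S : Finset J) x, Set.InjOn x S → g (t + 1) S x ≤ Kop (p / (L : ℝ) ^ 2) (g t S) x)
    (t : ℕ) : ∀ (η : Config L) (S : Finset J) (u v : J → Vertex L), Compat η S u v →
      av (g t S) u v ≤ ∑ s ∈ Finset.range t, Ex p s (rr p) η := by
  induction t with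
  | zero =>
    intro η S u v h
    rw [Finset.range_zero, Finset.sum_empty]
    calc _ ≤ av (fun _ => (0 : ℝ)) u v := av_mono fun b => hz S _
      _ = _ := av_const _ _ _
  | succ t ih =>
    intro η S u v h
    have h2 : av (g (t + 1) S) u v ≤ av (Kop (p / (L : ℝ) ^ 2) (g t S)) u v :=
      av_mono fun b => hK t S _ (h.inj b)
    refine h2.trans ((step_lemma hL h0 h1 hω (hA t) (hdep t) ih S h).trans ?_)
    rw [Finset.sum_range_succ', add_comm, Pop_sum]
    simp only [← Ex_succ', Ex_zero]
    exact le_rfl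

end Step

/-! ### A potential for collisions of independent walks -/

section Potential

variable {L : ℕ} [NeZero L] {J : Type*} [Fintype J] [DecidableEq J]

lemma Kop_add (ω : ℝ) (F G : (J → Vertex L) → ℝ) (x : J → Vertex L) :
    Kop ω (fun y => F y + G y) x = Kop ω F x + Kop ω G x := by
  unfold Kop
  have : ∀ i e, F (Function.update x i (x i + e)) + G (Function.update x i (x i + e)) -
      (F x + G x) = (F (Function.update x i (x i + e)) - F x) +
      (G (Function.update x i (x i + e)) - G x) := fun i e => by ring
  simp only [this, Finset.sum_add_distrib]
  ring

lemma Kop_smul (ω a : ℝ) (F : (J → Vertex L) → ℝ) (x : J → Vertex L) :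
    Kop ω (fun y => a * F y) x = a * Kop ω F x := by
  unfold Kop
  simp only [← mul_sub, ← Finset.mul_sum]
  ring

lemma Kop_sub (ω : ℝ) (F G : (J → Vertex L) → ℝ) (x : J → Vertex L) :
    Kop ω (fun y => F y - G y) x = Kop ω F x - Kop ω G x := by
  have h := Kop_add ω F (fun y => (-1) * G y) x
  rw [Kop_smul] at h
  have e : (fun y => F y - G y) = fun y => F y + (-1) * G y := by funext y; ring
  rw [e, h]; ring

lemma Kop_sum {ι : Type*} (s : Finset ι) (ω : ℝ) (F : ι → (J → Vertex L) → ℝ)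
    (x : J → Vertex L) : Kop ω (fun y => ∑ i ∈ s, F i y) x = ∑ i ∈ s, Kop ω (F i) x := by
  induction s using Finset.induction_on with
  | empty => simp [Kop]
  | insert a s ha ih =>
    simp only [Finset.sum_insert ha]
    rw [Kop_add, ih]

lemma Kop_const (ω a : ℝ) (x : J → Vertex L) : Kop ω (fun _ => a) x = a := by
  simp [Kop]

lemma Kop_nonneg {ω : ℝ} (h0 : 0 ≤ ω) (h1 : 2 * ω * Fintype.card J ≤ 1)
    {F : (J → Vertex L) → ℝ} (hF : ∀ x, 0 ≤ F x) (x : J → Vertex L) : 0 ≤ Kop ω F x := by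
  have h : -(∑ _i : J, ∑ _e ∈ dirs L, F x) ≤
      ∑ i, ∑ e ∈ dirs L, (F (Function.update x i (x i + e)) - F x) := by
    rw [← Finset.sum_neg_distrib]
    refine Finset.sum_le_sum fun i _ => ?_
    rw [← Finset.sum_neg_distrib]
    refine Finset.sum_le_sum fun e _ => ?_
    linarith [hF (Function.update x i (x i + e))]
  simp only [Finset.sum_const, nsmul_eq_mul, Finset.card_univ] at h
  have h2 : (Fintype.card J : ℝ) * ((dirs L).card * F x) ≤ Fintype.card J * (4 * F x) := by
    have : ((dirs L).card : ℝ) ≤ 4 := by exact_mod_cast card_dirs_le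
    have := hF x
    gcongr
  have h3 := mul_le_mul_of_nonneg_left (neg_le_neg h2 |>.trans h) (by positivity : 0 ≤ ω / 2)
  have h4 := mul_le_mul_of_nonneg_right h1 (hF x)
  unfold Kop
  nlinarith

/-- Jensen's inequality for the Markov operator `Kop`. -/
lemma Kop_sq {ω : ℝ} (h0 : 0 ≤ ω) (h1 : 2 * ω * Fintype.card J ≤ 1)
    (F : (J → Vertex L) → ℝ) (x : J → Vertex L) :
    (Kop ω F x) ^ 2 ≤ Kop ω (fun y => F y ^ 2) x := by
  set m := Kop ω F x with hm
  have h := Kop_nonneg h0 h1 (F := fun y => (F y - m) ^ 2) (fun y => sq_nonneg _) x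
  have e : (fun y => (F y - m) ^ 2) = fun y => (F y ^ 2 + (-2 * m) * F y) + m ^ 2 := by
    funext y; ring
  rw [e, Kop_add, Kop_add, Kop_smul, Kop_const, ← hm] at h
  nlinarith

/-- The walk operator seen by the difference of two labels. -/
def K2 (ω : ℝ) (ψ : Vertex L → ℝ) (a : Vertex L) : ℝ :=
  ψ a + ω / 2 * ∑ e ∈ dirs L, ((ψ (a + e) - ψ a) + (ψ (a - e) - ψ a))

/-- The walk operator seen by the differences of one label with two others. -/
def K3 (ω : ℝ) (ρ : Vertex L → Vertex L → ℝ) (a b : Vertex L) : ℝ :=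
  ρ a b + ω / 2 * ∑ e ∈ dirs L, ((ρ (a + e) (b + e) - ρ a b) + (ρ (a - e) b - ρ a b) +
    (ρ a (b - e) - ρ a b))

lemma Kop_pair (ω : ℝ) (ψ : Vertex L → ℝ) {j l : J} (hjl : j ≠ l) (x : J → Vertex L) :
    Kop ω (fun y => ψ (y j - y l)) x = K2 ω ψ (x j - x l) := by
  unfold Kop K2
  rw [Fintype.sum_eq_add j l hjl]
  · rw [← Finset.sum_add_distrib]
    congr 2
    refine Finset.sum_congr rfl fun e _ => ?_
    simp only [Function.update_self, Function.update_of_ne hjl, Function.update_of_ne hjl.symm]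
    rw [show x j + e - x l = x j - x l + e by abel, show x j - (x l + e) = x j - x l - e by abel]
  · intro i hi
    refine Finset.sum_eq_zero fun e _ => ?_
    simp [Function.update_of_ne hi.1.symm, Function.update_of_ne hi.2.symm]

lemma Kop_triple (ω : ℝ) (ρ : Vertex L → Vertex L → ℝ) {j l k : J} (hjl : j ≠ l) (hjk : j ≠ k)
    (hlk : l ≠ k) (x : J → Vertex L) :
    Kop ω (fun y => ρ (y j - y l) (y j - y k)) x = K3 ω ρ (x j - x l) (x j - x k) := by
  unfold Kop K3
  rw [← Finset.sum_subset (Finset.subset_univ {j, l, k})]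
  · rw [Finset.sum_insert (by simp [hjl, hjk]), Finset.sum_insert (by simp [hlk]),
      Finset.sum_singleton, ← Finset.sum_add_distrib, ← Finset.sum_add_distrib]
    congr 2
    refine Finset.sum_congr rfl fun e _ => ?_
    simp only [Function.update_self, Function.update_of_ne hjl, Function.update_of_ne hjl.symm,
      Function.update_of_ne hjk, Function.update_of_ne hjk.symm,
      Function.update_of_ne hlk, Function.update_of_ne hlk.symm]
    rw [show x j + e - x l = x j - x l + e by abel, show x j - (x l + e) = x j - x l - e by abel,
      show x j + e - x k = x j - x k + e by abel, show x j - (x k + e) = x j - x k - e by abel]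
    ring
  · intro i _ hi
    simp only [Finset.mem_insert, Finset.mem_singleton, not_or] at hi
    refine Finset.sum_eq_zero fun e _ => ?_
    simp [Function.update_of_ne (Ne.symm hi.1), Function.update_of_ne (Ne.symm hi.2.1),
      Function.update_of_ne (Ne.symm hi.2.2)]

lemma K2_nonneg {ω : ℝ} (h0 : 0 ≤ ω) (h1 : 4 * ω ≤ 1) {ψ : Vertex L → ℝ} (hψ : ∀ a, 0 ≤ ψ a)
    (a : Vertex L) : 0 ≤ K2 ω ψ a := by
  have h : -(∑ _e ∈ dirs L, 2 * ψ a) ≤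
      ∑ e ∈ dirs L, ((ψ (a + e) - ψ a) + (ψ (a - e) - ψ a)) := by
    rw [← Finset.sum_neg_distrib]
    refine Finset.sum_le_sum fun e _ => ?_
    linarith [hψ (a + e), hψ (a - e)]
  rw [Finset.sum_const, nsmul_eq_mul] at h
  have hc : ((dirs L).card : ℝ) ≤ 4 := by exact_mod_cast card_dirs_le
  have h2 : ((dirs L).card : ℝ) * (2 * ψ a) ≤ 4 * (2 * ψ a) :=
    mul_le_mul_of_nonneg_right hc (by linarith [hψ a])
  have h3 := mul_le_mul_of_nonneg_left ((neg_le_neg h2).trans h) (by positivity : 0 ≤ ω / 2)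
  have h4 := mul_le_mul_of_nonneg_right h1 (hψ a)
  unfold K2
  nlinarith

lemma K3_nonneg {ω : ℝ} (h0 : 0 ≤ ω) (h1 : 6 * ω ≤ 1) {ρ : Vertex L → Vertex L → ℝ}
    (hρ : ∀ a b, 0 ≤ ρ a b) (a b : Vertex L) : 0 ≤ K3 ω ρ a b := by
  have h : -(∑ _e ∈ dirs L, 3 * ρ a b) ≤ ∑ e ∈ dirs L, ((ρ (a + e) (b + e) - ρ a b) +
      (ρ (a - e) b - ρ a b) + (ρ a (b - e) - ρ a b)) := by
    rw [← Finset.sum_neg_distrib]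
    refine Finset.sum_le_sum fun e _ => ?_
    linarith [hρ (a + e) (b + e), hρ (a - e) b, hρ a (b - e)]
  rw [Finset.sum_const, nsmul_eq_mul] at h
  have hc : ((dirs L).card : ℝ) ≤ 4 := by exact_mod_cast card_dirs_le
  have h2 : ((dirs L).card : ℝ) * (3 * ρ a b) ≤ 4 * (3 * ρ a b) :=
    mul_le_mul_of_nonneg_right hc (by linarith [hρ a b])
  have h3 := mul_le_mul_of_nonneg_left ((neg_le_neg h2).trans h) (by positivity : 0 ≤ ω / 2)
  have h4 := mul_le_mul_of_nonneg_right h1 (hρ a b)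
  unfold K3
  nlinarith

/-- Expected number of meetings of a pair of walks with difference `a` and `t` steps to go. Only
meetings in the last `T₂` steps count, so that the walks have time to spread beforehand. -/
def psi (ω : ℝ) (T₂ : ℕ) : ℕ → Vertex L → ℝ
  | 0 => fun _ => 0
  | t + 1 => fun a => K2 ω (psi ω T₂ t) a + if t < T₂ ∧ a = 0 then 1 else 0

/-- Expected number of pairs of meetings, counted as in `psi`, of one walk with two others, which
are at differences `a` and `b` from it: at a meeting with one of them, the expected number of
meetings still to come with the other is collected. -/
def rho (ω : ℝ) (T₂ : ℕ) : ℕ → Vertex L → Vertex L → ℝ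
  | 0 => fun _ _ => 0
  | t + 1 => fun a b => K3 ω (rho ω T₂ t) a b +
      ((if t < T₂ ∧ a = 0 then psi ω T₂ (t + 1) b else 0) +
       (if t < T₂ ∧ b = 0 then psi ω T₂ (t + 1) a else 0))

lemma psi_nonneg {ω : ℝ} (h0 : 0 ≤ ω) (h1 : 4 * ω ≤ 1) (T₂ t : ℕ) (a : Vertex L) :
    0 ≤ psi ω T₂ t a := by
  induction t generalizing a with
  | zero => exact le_rfl
  | succ t ih =>
    simp only [psi]
    have := K2_nonneg h0 h1 ih a
    split_ifs <;> linarith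

lemma psi_even (ω : ℝ) (T₂ t : ℕ) (a : Vertex L) : psi ω T₂ t (-a) = psi ω T₂ t a := by
  induction t generalizing a with
  | zero => rfl
  | succ t ih =>
    simp only [psi, K2, neg_eq_zero]
    congr 2
    · exact ih a
    · congr 1
      refine Finset.sum_congr rfl fun e _ => ?_
      rw [show -a + e = -(a - e) by abel, show -a - e = -(a + e) by abel, ih, ih, ih]
      ring

lemma rho_nonneg {ω : ℝ} (h0 : 0 ≤ ω) (h1 : 6 * ω ≤ 1) (T₂ t : ℕ) (a b : Vertex L) :
    0 ≤ rho ω T₂ t a b := by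
  induction t generalizing a b with
  | zero => exact le_rfl
  | succ t ih =>
    simp only [rho]
    have := K3_nonneg h0 h1 ih a b
    have ha := psi_nonneg h0 (by linarith : 4 * ω ≤ 1) T₂ (t + 1) a
    have hb := psi_nonneg h0 (by linarith : 4 * ω ≤ 1) T₂ (t + 1) b
    split_ifs <;> linarith

/-- The second-moment weight of the labels `l`, `k` seen from the label `j`. On the diagonal
`l = k`, `φ` stands for a bound on the expected number of further meetings after a meeting. -/
def rho2 (ω : ℝ) (T₂ : ℕ) (φ : ℝ) (t : ℕ) (j l k : J) (x : J → Vertex L) : ℝ :=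
  if l = k then 2 * φ * psi ω T₂ t (x j - x l) else rho ω T₂ t (x j - x l) (x j - x k)

lemma rho2_nonneg {ω φ : ℝ} (h0 : 0 ≤ ω) (h1 : 6 * ω ≤ 1) (hφ : 0 ≤ φ) (T₂ t : ℕ) (j l k : J)
    (x : J → Vertex L) : 0 ≤ rho2 ω T₂ φ t j l k x := by
  unfold rho2
  have := psi_nonneg h0 (by linarith : 4 * ω ≤ 1) T₂ t (x j - x l)
  split_ifs
  · positivity
  · exact rho_nonneg h0 h1 _ _ _ _

lemma K2_smul (ω a : ℝ) (ψ : Vertex L → ℝ) (z : Vertex L) :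
    K2 ω (fun y => a * ψ y) z = a * K2 ω ψ z := by
  unfold K2
  simp only [← mul_sub, ← mul_add, ← Finset.mul_sum]
  ring

lemma rho2_succ {ω φ : ℝ} (h0 : 0 ≤ ω) (h1 : 6 * ω ≤ 1) {T₂ : ℕ}
    (hφ : ∀ t ≤ T₂, psi (L := L) ω T₂ t 0 ≤ φ) (t : ℕ) {j l k : J}
    (hjl : j ≠ l) (hjk : j ≠ k) (x : J → Vertex L) :
    Kop ω (rho2 ω T₂ φ t j l k) x +
      ((if t < T₂ ∧ x j - x l = 0 then 1 else 0) * psi ω T₂ (t + 1) (x j - x k) +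
       (if t < T₂ ∧ x j - x k = 0 then 1 else 0) * psi ω T₂ (t + 1) (x j - x l)) ≤
      rho2 ω T₂ φ (t + 1) j l k x := by
  by_cases hlk : l = k
  · subst hlk
    have e : (rho2 ω T₂ φ t j l l : (J → Vertex L) → ℝ) =
        fun y => (fun z => 2 * φ * psi ω T₂ t z) (y j - y l) := by
      funext y; simp [rho2]
    rw [e, Kop_pair ω (fun z => 2 * φ * psi ω T₂ t z) hjl, K2_smul]
    simp only [rho2, if_true, psi]
    split_ifs with h
    · have := hφ (t + 1) h.1
      simp only [psi] at this
      rw [h.2]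
      simp only [h.1, true_and, if_true] at this ⊢
      nlinarith
    · linarith
  · have e : (rho2 ω T₂ φ t j l k : (J → Vertex L) → ℝ) =
        fun y => rho ω T₂ t (y j - y l) (y j - y k) := by
      funext y; simp [rho2, hlk]
    rw [e, Kop_triple ω _ hjl hjk hlk]
    simp only [rho2, hlk, if_false, rho]
    split_ifs <;> simp

/-- The expected weighted number of meetings of the label `j` with the other labels in `S`. -/
def hpot (W : J → J → ℝ) (ω : ℝ) (T₂ t : ℕ) (S : Finset J) (j : J) (x : J → Vertex L) : ℝ :=
  ∑ l ∈ S.erase j, W j l * psi ω T₂ t (x j - x l)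

/-- A majorant of `hpot ^ 2` which is a supersolution of the walk recursion. -/
def Rpot (W : J → J → ℝ) (ω : ℝ) (T₂ : ℕ) (φ : ℝ) (t : ℕ) (S : Finset J) (j : J)
    (x : J → Vertex L) : ℝ :=
  ∑ l ∈ S.erase j, ∑ k ∈ S.erase j, W j l * W j k * rho2 ω T₂ φ t j l k x

/-- The potential `(1/2) ∑ h_j - ∑ R_j`. -/
def gpot (W : J → J → ℝ) (ω : ℝ) (T₂ : ℕ) (φ : ℝ) (t : ℕ) (S : Finset J)
    (x : J → Vertex L) : ℝ :=
  (1 / 2) * ∑ j ∈ S, hpot W ω T₂ t S j x - ∑ j ∈ S, Rpot W ω T₂ φ t S j x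

lemma hpot_succ (W : J → J → ℝ) (ω : ℝ) (T₂ t : ℕ) (S : Finset J) (j : J) (x : J → Vertex L) :
    hpot W ω T₂ (t + 1) S j x = Kop ω (hpot W ω T₂ t S j) x +
      ∑ l ∈ S.erase j, W j l * (if t < T₂ ∧ x j - x l = 0 then 1 else 0) := by
  unfold hpot
  rw [Kop_sum, ← Finset.sum_add_distrib]
  refine Finset.sum_congr rfl fun l hl => ?_
  rw [Kop_smul, Kop_pair ω _ (Finset.ne_of_mem_erase hl).symm]
  simp only [psi]
  ring

lemma Rpot_succ {W : J → J → ℝ} (hW : ∀ i j, 0 ≤ W i j) {ω φ : ℝ} (h0 : 0 ≤ ω)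
    (h1 : 6 * ω ≤ 1) {T₂ : ℕ} (hφ : ∀ t ≤ T₂, psi (L := L) ω T₂ t 0 ≤ φ) (t : ℕ) (S : Finset J)
    (j : J) (x : J → Vertex L) :
    Kop ω (Rpot W ω T₂ φ t S j) x + 2 * (∑ l ∈ S.erase j, W j l *
      (if t < T₂ ∧ x j - x l = 0 then 1 else 0)) * hpot W ω T₂ (t + 1) S j x ≤
      Rpot W ω T₂ φ (t + 1) S j x := by
  set s : J → ℝ := fun l => if t < T₂ ∧ x j - x l = 0 then 1 else 0 with hs
  have e1 : Kop ω (Rpot W ω T₂ φ t S j) x =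
      ∑ l ∈ S.erase j, ∑ k ∈ S.erase j, W j l * W j k * Kop ω (rho2 ω T₂ φ t j l k) x := by
    unfold Rpot
    rw [Kop_sum]
    refine Finset.sum_congr rfl fun l _ => ?_
    rw [Kop_sum]
    exact Finset.sum_congr rfl fun k _ => Kop_smul _ _ _ _
  have e2 : (∑ l ∈ S.erase j, W j l * s l) * hpot W ω T₂ (t + 1) S j x =
      ∑ l ∈ S.erase j, ∑ k ∈ S.erase j,
        W j l * W j k * (s l * psi ω T₂ (t + 1) (x j - x k)) := by
    unfold hpot
    rw [Finset.sum_mul_sum]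
    exact Finset.sum_congr rfl fun l _ => Finset.sum_congr rfl fun k _ => by ring
  have e3 : (∑ l ∈ S.erase j, W j l * s l) * hpot W ω T₂ (t + 1) S j x =
      ∑ l ∈ S.erase j, ∑ k ∈ S.erase j,
        W j l * W j k * (s k * psi ω T₂ (t + 1) (x j - x l)) := by
    rw [e2, Finset.sum_comm]
    exact Finset.sum_congr rfl fun l _ => Finset.sum_congr rfl fun k _ => by ring
  have e4 : 2 * (∑ l ∈ S.erase j, W j l * s l) * hpot W ω T₂ (t + 1) S j x =
      ∑ l ∈ S.erase j, ∑ k ∈ S.erase j, W j l * W j k *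
        (s l * psi ω T₂ (t + 1) (x j - x k) + s k * psi ω T₂ (t + 1) (x j - x l)) := by
    rw [mul_assoc, two_mul]
    nth_rewrite 1 [e2]
    rw [e3, ← Finset.sum_add_distrib]
    refine Finset.sum_congr rfl fun l _ => ?_
    rw [← Finset.sum_add_distrib]
    exact Finset.sum_congr rfl fun k _ => by ring
  rw [e1, e4, ← Finset.sum_add_distrib]
  unfold Rpot
  refine Finset.sum_le_sum fun l hl => ?_
  rw [← Finset.sum_add_distrib]
  refine Finset.sum_le_sum fun k hk => ?_
  rw [← mul_add]
  exact mul_le_mul_of_nonneg_left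
    (rho2_succ h0 h1 hφ t (Finset.ne_of_mem_erase hl).symm (Finset.ne_of_mem_erase hk).symm x)
    (mul_nonneg (hW _ _) (hW _ _))

lemma hpot_nonneg {W : J → J → ℝ} (hW : ∀ i j, 0 ≤ W i j) {ω : ℝ} (h0 : 0 ≤ ω)
    (h1 : 6 * ω ≤ 1) (T₂ t : ℕ) (S : Finset J) (j : J) (x : J → Vertex L) :
    0 ≤ hpot W ω T₂ t S j x :=
  Finset.sum_nonneg fun l _ => mul_nonneg (hW _ _) (psi_nonneg h0 (by linarith) _ _ _)

lemma hpot_sq_le {W : J → J → ℝ} (hW : ∀ i j, 0 ≤ W i j) {ω φ : ℝ} (h0 : 0 ≤ ω)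
    (h1 : 6 * ω ≤ 1) (h2 : 2 * ω * Fintype.card J ≤ 1) {T₂ : ℕ}
    (hφ : ∀ t ≤ T₂, psi (L := L) ω T₂ t 0 ≤ φ) (t : ℕ) (S : Finset J)
    (j : J) (x : J → Vertex L) :
    hpot W ω T₂ t S j x ^ 2 ≤ Rpot W ω T₂ φ t S j x := by
  induction t generalizing x with
  | zero => simp [hpot, Rpot, rho2, psi, rho]
  | succ t ih =>
    have hR := Rpot_succ hW h0 h1 hφ t S j x
    have hS := hpot_succ W ω T₂ t S j x
    set c := ∑ l ∈ S.erase j, W j l * (if t < T₂ ∧ x j - x l = 0 then (1 : ℝ) else 0)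
    have hJ := Kop_sq h0 h2 (hpot W ω T₂ t S j) x
    have hM : 0 ≤ Kop ω (fun y => Rpot W ω T₂ φ t S j y - hpot W ω T₂ t S j y ^ 2) x :=
      Kop_nonneg h0 h2 (fun y => sub_nonneg.mpr (ih y)) x
    rw [Kop_sub] at hM
    have hM' : Kop ω (fun y => hpot W ω T₂ t S j y ^ 2) x ≤ Kop ω (Rpot W ω T₂ φ t S j) x := by
      have : Kop ω (fun y => Rpot W ω T₂ φ t S j y) x = Kop ω (Rpot W ω T₂ φ t S j) x := rfl
      linarith
    rw [hS] at hR ⊢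
    nlinarith [sq_nonneg c]

/-- Forgetting one label costs at most `h - h² ≤ 1/4`. -/
lemma gpot_drop {W : J → J → ℝ} (hW : ∀ i j, 0 ≤ W i j) (hsym : ∀ i j, W i j = W j i)
    {ω φ : ℝ} (h0 : 0 ≤ ω) (h1 : 6 * ω ≤ 1) (h2 : 2 * ω * Fintype.card J ≤ 1) {T₂ : ℕ}
    (hφ0 : 0 ≤ φ) (hφ : ∀ t ≤ T₂, psi (L := L) ω T₂ t 0 ≤ φ) (t : ℕ) (S : Finset J)
    (i : J) (hi : i ∈ S) (x : J → Vertex L) :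
    gpot W ω T₂ φ t S x - gpot W ω T₂ φ t (S.erase i) x ≤ 1 / 4 := by
  have hh : ∑ j ∈ S, hpot W ω T₂ t S j x =
      2 * hpot W ω T₂ t S i x + ∑ j ∈ S.erase i, hpot W ω T₂ t (S.erase i) j x := by
    rw [← Finset.add_sum_erase S _ hi, two_mul, add_assoc]
    congr 1
    have : ∀ j ∈ S.erase i, hpot W ω T₂ t S j x =
        W i j * psi ω T₂ t (x i - x j) + hpot W ω T₂ t (S.erase i) j x := by
      intro j hj
      have hij : i ∈ S.erase j := Finset.mem_erase.mpr ⟨(Finset.ne_of_mem_erase hj).symm, hi⟩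
      unfold hpot
      rw [← Finset.add_sum_erase _ _ hij, hsym j i, ← psi_even ω T₂ t (x i - x j), neg_sub,
        Finset.erase_right_comm]
    rw [Finset.sum_congr rfl this, Finset.sum_add_distrib]
    rfl
  have hr : Rpot W ω T₂ φ t S i x + ∑ j ∈ S.erase i, Rpot W ω T₂ φ t (S.erase i) j x ≤
      ∑ j ∈ S, Rpot W ω T₂ φ t S j x := by
    rw [← Finset.add_sum_erase S _ hi]
    gcongr with j hj
    unfold Rpot
    have hn : ∀ l k, 0 ≤ W j l * W j k * rho2 ω T₂ φ t j l k x := fun l k =>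
      mul_nonneg (mul_nonneg (hW _ _) (hW _ _)) (rho2_nonneg h0 h1 hφ0 _ _ _ _ _ _)
    have hsub : (S.erase i).erase j ⊆ S.erase j := Finset.erase_subset_erase _
      (Finset.erase_subset _ _)
    calc _ ≤ ∑ l ∈ (S.erase i).erase j, ∑ k ∈ S.erase j, W j l * W j k *
          rho2 ω T₂ φ t j l k x := Finset.sum_le_sum fun l _ =>
            Finset.sum_le_sum_of_subset_of_nonneg hsub fun k _ _ => hn l k
      _ ≤ _ := Finset.sum_le_sum_of_subset_of_nonneg hsub fun l _ _ =>
            Finset.sum_nonneg fun k _ => hn l k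
  have hsq := hpot_sq_le hW h0 h1 h2 hφ t S i x
  unfold gpot
  rw [hh]
  nlinarith [sq_nonneg (hpot W ω T₂ t S i x - 1 / 2)]

lemma gpot_step {W : J → J → ℝ} (hW : ∀ i j, 0 ≤ W i j)
    {ω φ : ℝ} (h0 : 0 ≤ ω) (h1 : 6 * ω ≤ 1) {T₂ : ℕ}
    (hφ : ∀ t ≤ T₂, psi (L := L) ω T₂ t 0 ≤ φ) (t : ℕ) (S : Finset J)
    (x : J → Vertex L) (hx : Set.InjOn x S) :
    gpot W ω T₂ φ (t + 1) S x ≤ Kop ω (gpot W ω T₂ φ t S) x := by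
  have e : Kop ω (gpot W ω T₂ φ t S) x = (1 / 2) * ∑ j ∈ S, Kop ω (hpot W ω T₂ t S j) x -
      ∑ j ∈ S, Kop ω (Rpot W ω T₂ φ t S j) x := by
    unfold gpot
    rw [Kop_sub, Kop_smul, Kop_sum, Kop_sum]
  rw [e]
  unfold gpot
  have hh : ∑ j ∈ S, hpot W ω T₂ (t + 1) S j x = ∑ j ∈ S, Kop ω (hpot W ω T₂ t S j) x := by
    refine Finset.sum_congr rfl fun j hj => ?_
    rw [hpot_succ, Finset.sum_eq_zero, add_zero]
    intro l hl
    rw [if_neg, mul_zero]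
    rintro ⟨_, h⟩
    have := hx hj (Finset.mem_of_mem_erase hl) (sub_eq_zero.mp h)
    exact Finset.ne_of_mem_erase hl this.symm
  have hr : ∑ j ∈ S, Kop ω (Rpot W ω T₂ φ t S j) x ≤ ∑ j ∈ S, Rpot W ω T₂ φ (t + 1) S j x := by
    refine Finset.sum_le_sum fun j _ => ?_
    have h3 := Rpot_succ hW h0 h1 hφ t S j x
    have h4 := hpot_nonneg hW h0 h1 T₂ (t + 1) S j x
    have h5 : 0 ≤ ∑ l ∈ S.erase j, W j l * (if t < T₂ ∧ x j - x l = 0 then (1 : ℝ) else 0) :=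
      Finset.sum_nonneg fun l _ => mul_nonneg (hW _ _) (by split_ifs <;> norm_num)
    nlinarith [mul_nonneg h5 h4]
  rw [hh]
  linarith

lemma gpot_dep (W : J → J → ℝ) (ω : ℝ) (T₂ : ℕ) (φ : ℝ) (t : ℕ) (S : Finset J)
    (x y : J → Vertex L) (h : ∀ j ∈ S, x j = y j) :
    gpot W ω T₂ φ t S x = gpot W ω T₂ φ t S y := by
  unfold gpot hpot Rpot rho2
  congr 1
  · congr 1
    refine Finset.sum_congr rfl fun j hj => Finset.sum_congr rfl fun l hl => ?_
    rw [h j hj, h l (Finset.mem_of_mem_erase hl)]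
  · refine Finset.sum_congr rfl fun j hj => Finset.sum_congr rfl fun l hl =>
      Finset.sum_congr rfl fun k hk => ?_
    rw [h j hj, h l (Finset.mem_of_mem_erase hl), h k (Finset.mem_of_mem_erase hk)]

/-- The isolated particles of a configuration. -/
def isoSet (η : Config L) : Finset (Vertex L) :=
  univ.filter fun u => η u = true ∧ ¬ hasOccNbr η u

/-- The potential of the isolated particles bounds the expected interaction from below. -/
lemma gpot_le_interaction (hL : 2 ≤ L) {p : ℝ} (h0 : 0 ≤ p) (h1 : p ≤ 1 / 6)
    {W : Vertex L → Vertex L → ℝ} (hW : ∀ i j, 0 ≤ W i j) (hsym : ∀ i j, W i j = W j i)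
    {φ : ℝ} {T₂ : ℕ} (hφ0 : 0 ≤ φ)
    (hφ : ∀ t ≤ T₂, psi (L := L) (p / (L : ℝ) ^ 2) T₂ t 0 ≤ φ) (T : ℕ) (η : Config L) :
    gpot W (p / (L : ℝ) ^ 2) T₂ φ T (isoSet η) id ≤
      ∑ s ∈ Finset.range T, Ex p s (rr p) η := by
  have hpos := Lsq_pos (L := L)
  have hL1 : (1 : ℝ) ≤ (L : ℝ) ^ 2 := by
    have : (2 : ℝ) ≤ L := by exact_mod_cast hL
    nlinarith
  have hω0 : 0 ≤ p / (L : ℝ) ^ 2 := by positivity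
  have hω1 : p / (L : ℝ) ^ 2 ≤ p := div_le_self h0 hL1
  have hcard : (Fintype.card (Vertex L) : ℝ) = (L : ℝ) ^ 2 := by
    rw [card_vertex]; push_cast; rfl
  have hω2 : 2 * (p / (L : ℝ) ^ 2) * Fintype.card (Vertex L) ≤ 1 := by
    rw [hcard]
    have : 2 * (p / (L : ℝ) ^ 2) * (L : ℝ) ^ 2 = 2 * p := by field_simp
    linarith
  have hc : Compat η (isoSet η) (id : Vertex L → Vertex L) id := by
    refine ⟨fun j hj => ?_, fun j hj => ?_, fun j hj w hw hx => ?_, fun j hj w hw hx => ?_,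
      fun j _ => Or.inl rfl, fun j _ l _ hne => ⟨hne, hne, hne, hne⟩⟩
    · exact (Finset.mem_filter.mp hj).2.1
    · exact (Finset.mem_filter.mp hj).2.1
    · exact absurd ⟨w, hw, hx⟩ (Finset.mem_filter.mp hj).2.2
    · exact absurd ⟨w, hw, hx⟩ (Finset.mem_filter.mp hj).2.2
  have := tracking (J := Vertex L) hL h0 (by linarith) (by rw [hcard]; nlinarith)
    (g := gpot W (p / (L : ℝ) ^ 2) T₂ φ)
    (fun S x => by simp [gpot, hpot, Rpot, rho2, psi, rho])
    (fun t S j hj x => gpot_drop hW hsym hω0 (by linarith) hω2 hφ0 hφ t S j hj x)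
    (fun t S x y h => gpot_dep W _ T₂ φ t S x y h)
    (fun t S x hx => gpot_step hW hω0 (by linarith) hφ t S x hx) T η (isoSet η) id id hc
  rwa [av_self] at this

end Potential

/-! ### Fourier analysis on the torus -/

section Fourier

variable {L : ℕ} [NeZero L]

/-- `cos (2π z / L)` for `z ∈ ℤ_L`. -/
def cosz (z : ZMod L) : ℝ := (ZMod.stdAddChar z : ℂ).re

/-- `sin (2π z / L)` for `z ∈ ℤ_L`. -/
def sinz (z : ZMod L) : ℝ := (ZMod.stdAddChar z : ℂ).im

lemma cosz_add (x y : ZMod L) : cosz (x + y) = cosz x * cosz y - sinz x * sinz y := by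
  simp [cosz, sinz, AddChar.map_add_eq_mul, Complex.mul_re]

lemma sinz_add (x y : ZMod L) : sinz (x + y) = cosz x * sinz y + sinz x * cosz y := by
  simp [cosz, sinz, AddChar.map_add_eq_mul, Complex.mul_im]

@[simp] lemma cosz_zero : cosz (0 : ZMod L) = 1 := by simp [cosz]

@[simp] lemma sinz_zero : sinz (0 : ZMod L) = 0 := by simp [sinz]

lemma cosz_sq_add (x : ZMod L) : cosz x ^ 2 + sinz x ^ 2 = 1 := by
  have h : ‖(ZMod.stdAddChar x : ℂ)‖ = 1 := by
    rw [ZMod.stdAddChar_apply]; exact Circle.norm_coe _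
  have h2 := Complex.sq_norm (ZMod.stdAddChar x : ℂ)
  rw [h, Complex.normSq_apply] at h2
  unfold cosz sinz
  nlinarith

lemma cosz_neg (x : ZMod L) : cosz (-x) = cosz x := by
  have h1 := cosz_add x (-x)
  have h2 := sinz_add x (-x)
  have h3 := cosz_sq_add x
  rw [add_neg_cancel] at h1 h2
  simp only [cosz_zero, sinz_zero] at h1 h2
  linear_combination (-cosz (-x)) * h3 - cosz x * h1 - sinz x * h2

lemma sinz_neg (x : ZMod L) : sinz (-x) = - sinz x := by
  have h1 := cosz_add x (-x)
  have h2 := sinz_add x (-x)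
  have h3 := cosz_sq_add x
  rw [add_neg_cancel] at h1 h2
  simp only [cosz_zero, sinz_zero] at h1 h2
  linear_combination (-sinz (-x)) * h3 + sinz x * h1 - cosz x * h2

lemma cosz_sub (x y : ZMod L) : cosz (x - y) = cosz x * cosz y + sinz x * sinz y := by
  rw [sub_eq_add_neg, cosz_add, cosz_neg, sinz_neg]; ring

lemma abs_cosz_le (x : ZMod L) : |cosz x| ≤ 1 := by
  have h3 := cosz_sq_add x
  exact abs_le_one_iff_mul_self_le_one.2 (by nlinarith [sq_nonneg (sinz x)])

lemma cosz_le_one (x : ZMod L) : cosz x ≤ 1 := (abs_le.1 (abs_cosz_le x)).2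

lemma cosz_intCast (j : ℤ) : cosz (j : ZMod L) = Real.cos (2 * Real.pi * j / L) := by
  rw [cosz, ZMod.stdAddChar_coe, Complex.exp_re]
  have e : (2 * Real.pi * Complex.I * j / L : ℂ) =
      ((2 * Real.pi * j / L : ℝ) : ℂ) * Complex.I := by push_cast; ring
  rw [e]
  simp only [Complex.re_ofReal_mul, Complex.im_ofReal_mul, Complex.I_re, Complex.I_im]
  simp

lemma cosz_eq_cos (z : ZMod L) : cosz z = Real.cos (2 * Real.pi * z.val / L) := by
  have h := cosz_intCast (L := L) (z.val : ℤ)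
  rw [Int.cast_natCast, Int.cast_natCast, ZMod.natCast_val, ZMod.cast_id] at h
  exact h

lemma sum_cosz_mul (b : ZMod L) :
    ∑ x : ZMod L, cosz (x * b) = if b = 0 then (L : ℝ) else 0 := by
  have h := AddChar.sum_mulShift b (ZMod.isPrimitive_stdAddChar L)
  have h2 := congrArg Complex.re h
  rw [Complex.re_sum] at h2
  simp only [cosz, h2, ZMod.card]
  split_ifs <;> simp

lemma sum_sinz_mul (b : ZMod L) : ∑ x : ZMod L, sinz (x * b) = 0 := by
  have h := AddChar.sum_mulShift b (ZMod.isPrimitive_stdAddChar L)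
  have h2 := congrArg Complex.im h
  rw [Complex.im_sum] at h2
  simp only [sinz, h2, ZMod.card]
  split_ifs <;> simp

/-- The pairing of a frequency with a position. -/
def dot (θ a : Vertex L) : ZMod L := θ.1 * a.1 + θ.2 * a.2

lemma dot_add (θ a b : Vertex L) : dot θ (a + b) = dot θ a + dot θ b := by
  simp only [dot, Prod.fst_add, Prod.snd_add]; ring

lemma dot_sub (θ a b : Vertex L) : dot θ (a - b) = dot θ a - dot θ b := by
  simp only [dot, Prod.fst_sub, Prod.snd_sub]; ring

lemma dot_neg (θ a : Vertex L) : dot θ (-a) = - dot θ a := by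
  simp only [dot, Prod.fst_neg, Prod.snd_neg]; ring

lemma add_dot (θ θ' a : Vertex L) : dot (θ + θ') a = dot θ a + dot θ' a := by
  simp only [dot, Prod.fst_add, Prod.snd_add]; ring

lemma sum_cosz_dot (a : Vertex L) :
    ∑ θ : Vertex L, cosz (dot θ a) = if a = 0 then (L : ℝ) ^ 2 else 0 := by
  rw [Fintype.sum_prod_type]
  simp only [dot, cosz_add, Finset.sum_sub_distrib, ← Finset.mul_sum, ← Finset.sum_mul,
    sum_cosz_mul, sum_sinz_mul]
  rcases a with ⟨a, b⟩
  by_cases ha : a = 0 <;> by_cases hb : b = 0 <;> simp [ha, hb, sq]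

lemma sum_sinz_dot (a : Vertex L) : ∑ θ : Vertex L, sinz (dot θ a) = 0 := by
  rw [Fintype.sum_prod_type]
  simp only [dot, sinz_add, Finset.sum_add_distrib, ← Finset.mul_sum, ← Finset.sum_mul,
    sum_cosz_mul, sum_sinz_mul]
  simp

lemma sum_dirs_neg (f : Vertex L → ℝ) : ∑ e ∈ dirs L, f (-e) = ∑ e ∈ dirs L, f e := by
  have hm : ∀ e : Vertex L, e ∈ dirs L → -e ∈ dirs L := by
    intro e he
    simp only [dirs, Finset.mem_insert, Finset.mem_singleton] at he ⊢
    rcases he with h | h | h | h <;> subst h <;> simp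
  exact Finset.sum_nbij' (fun e => -e) (fun e => -e) hm hm (by simp) (by simp) (by simp)

/-- The symbol of the discrete Laplacian. -/
def qq (θ : Vertex L) : ℝ := ∑ e ∈ dirs L, (1 - cosz (dot θ e))

lemma qq_nonneg (θ : Vertex L) : 0 ≤ qq θ :=
  Finset.sum_nonneg fun e _ => by linarith [cosz_le_one (dot θ e)]

lemma qq_le (θ : Vertex L) : qq θ ≤ 8 := by
  have h : qq θ ≤ ∑ _e ∈ dirs L, (2 : ℝ) :=
    Finset.sum_le_sum fun e _ => by linarith [(abs_le.1 (abs_cosz_le (dot θ e))).1]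
  rw [Finset.sum_const, nsmul_eq_mul] at h
  have : ((dirs L).card : ℝ) ≤ 4 := by exact_mod_cast card_dirs_le
  linarith

lemma sum_dirs_sinz (θ : Vertex L) : ∑ e ∈ dirs L, sinz (dot θ e) = 0 := by
  have h := sum_dirs_neg fun e => sinz (dot θ e)
  simp only [dot_neg, sinz_neg, Finset.sum_neg_distrib] at h
  linarith

lemma sum_dirs_cosz_add (θ : Vertex L) (x : ZMod L) :
    ∑ e ∈ dirs L, (cosz (x + dot θ e) - cosz x) = -(qq θ * cosz x) := by
  have : ∀ e, cosz (x + dot θ e) - cosz x =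
      -(cosz x * (1 - cosz (dot θ e))) - sinz x * sinz (dot θ e) := fun e => by
    rw [cosz_add]; ring
  simp only [this, Finset.sum_sub_distrib, Finset.sum_neg_distrib, ← Finset.mul_sum,
    sum_dirs_sinz]
  simp only [qq, Finset.sum_sub_distrib]
  ring

lemma sum_dirs_cosz_sub (θ : Vertex L) (x : ZMod L) :
    ∑ e ∈ dirs L, (cosz (x - dot θ e) - cosz x) = -(qq θ * cosz x) := by
  rw [← sum_dirs_cosz_add, ← sum_dirs_neg]
  simp only [dot_neg, sub_neg_eq_add]

lemma K2_cosz (ω : ℝ) (θ a : Vertex L) :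
    K2 ω (fun a => cosz (dot θ a)) a = (1 - ω * qq θ) * cosz (dot θ a) := by
  unfold K2
  simp only [dot_add, dot_sub]
  rw [Finset.sum_add_distrib, sum_dirs_cosz_add, sum_dirs_cosz_sub]
  ring

lemma K2_mul_add (ω w : ℝ) (f g : Vertex L → ℝ) (a : Vertex L) :
    K2 ω (fun a => w * f a + g a) a = w * K2 ω f a + K2 ω g a := by
  unfold K2
  have : ∀ e, w * f (a + e) + g (a + e) - (w * f a + g a) +
      (w * f (a - e) + g (a - e) - (w * f a + g a)) =
      w * ((f (a + e) - f a) + (f (a - e) - f a)) + ((g (a + e) - g a) + (g (a - e) - g a)) :=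
    fun e => by ring
  rw [Finset.sum_congr rfl fun e _ => this e, Finset.sum_add_distrib, ← Finset.mul_sum]
  ring

lemma K2_lin {ι : Type*} (s : Finset ι) (ω : ℝ) (w : ι → ℝ) (f : ι → Vertex L → ℝ)
    (a : Vertex L) : K2 ω (fun a => ∑ i ∈ s, w i * f i a) a = ∑ i ∈ s, w i * K2 ω (f i) a := by
  induction s using Finset.induction_on with
  | empty => simp [K2]
  | insert i s hi ih =>
    simp only [Finset.sum_insert hi]
    rw [K2_mul_add, ih]

lemma K3_mul_add (ω w : ℝ) (f g : Vertex L → Vertex L → ℝ) (a b : Vertex L) :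
    K3 ω (fun a b => w * f a b + g a b) a b = w * K3 ω f a b + K3 ω g a b := by
  unfold K3
  have : ∀ e, w * f (a + e) (b + e) + g (a + e) (b + e) - (w * f a b + g a b) +
      (w * f (a - e) b + g (a - e) b - (w * f a b + g a b)) +
      (w * f a (b - e) + g a (b - e) - (w * f a b + g a b)) =
      w * ((f (a + e) (b + e) - f a b) + (f (a - e) b - f a b) + (f a (b - e) - f a b)) +
      ((g (a + e) (b + e) - g a b) + (g (a - e) b - g a b) + (g a (b - e) - g a b)) :=
    fun e => by ring
  rw [Finset.sum_congr rfl fun e _ => this e, Finset.sum_add_distrib, ← Finset.mul_sum]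
  ring

lemma K3_lin {ι : Type*} (s : Finset ι) (ω : ℝ) (w : ι → ℝ) (f : ι → Vertex L → Vertex L → ℝ)
    (a b : Vertex L) :
    K3 ω (fun a b => ∑ i ∈ s, w i * f i a b) a b = ∑ i ∈ s, w i * K3 ω (f i) a b := by
  induction s using Finset.induction_on with
  | empty => simp [K3]
  | insert i s hi ih =>
    simp only [Finset.sum_insert hi]
    rw [K3_mul_add, ih]

/-- The heat kernel of the difference walk, through its Fourier expansion. -/
def kk (ω : ℝ) (s : ℕ) (a : Vertex L) : ℝ :=
  ∑ θ : Vertex L, (1 / (L : ℝ) ^ 2 * (1 - ω * qq θ) ^ s) * cosz (dot θ a)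

lemma kk_zero (ω : ℝ) (a : Vertex L) : kk ω 0 a = if a = 0 then 1 else 0 := by
  have hL : (L : ℝ) ≠ 0 := Nat.cast_ne_zero.2 (NeZero.ne L)
  simp only [kk, pow_zero, mul_one, ← Finset.mul_sum, sum_cosz_dot]
  split_ifs
  · field_simp
  · simp

lemma K2_kk (ω : ℝ) (s : ℕ) (a : Vertex L) : K2 ω (kk ω s) a = kk ω (s + 1) a := by
  have : kk (L := L) ω s = fun a => ∑ θ : Vertex L,
      (1 / (L : ℝ) ^ 2 * (1 - ω * qq θ) ^ s) * cosz (dot θ a) := rfl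
  rw [this, K2_lin]
  unfold kk
  refine Finset.sum_congr rfl fun θ _ => ?_
  rw [K2_cosz]; ring

lemma psi_eq_early (ω : ℝ) {T₂ : ℕ} (t : ℕ) (ht : t ≤ T₂) (a : Vertex L) :
    psi ω T₂ t a = ∑ u ∈ range t, kk ω u a := by
  induction t generalizing a with
  | zero => simp [psi]
  | succ t ih =>
    have e : psi (L := L) ω T₂ t = fun a => ∑ u ∈ range t, 1 * kk ω u a := by
      funext a; simp [ih (by omega)]
    simp only [psi, e, show t < T₂ by omega, true_and]
    rw [K2_lin, Finset.sum_range_succ', kk_zero]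
    simp [K2_kk]

lemma psi_eq_late (ω : ℝ) (T₂ s : ℕ) (a : Vertex L) :
    psi ω T₂ (T₂ + s) a = ∑ u ∈ range T₂, kk ω (u + s) a := by
  induction s generalizing a with
  | zero => simpa using psi_eq_early ω T₂ le_rfl a
  | succ s ih =>
    have e : psi (L := L) ω T₂ (T₂ + s) = fun a => ∑ u ∈ range T₂, 1 * kk ω (u + s) a := by
      funext a; simp [ih]
    rw [← add_assoc]
    simp only [psi, e, show ¬ (T₂ + s < T₂) by omega, false_and, if_false]
    rw [K2_lin]
    simp [K2_kk, add_assoc]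

/-- The eigenvalues of `K3`. -/
def lam3 (ω : ℝ) (θ θ' : Vertex L) : ℝ := 1 - ω / 2 * (qq θ + qq θ' + qq (θ + θ'))

lemma K3_cosz (ω : ℝ) (θ θ' a₀ b₀ a b : Vertex L) :
    K3 ω (fun a b => cosz (dot θ (a - a₀) + dot θ' (b - b₀))) a b =
      lam3 ω θ θ' * cosz (dot θ (a - a₀) + dot θ' (b - b₀)) := by
  unfold K3 lam3
  have e1 : ∀ e, dot θ (a + e - a₀) + dot θ' (b + e - b₀) =
      (dot θ (a - a₀) + dot θ' (b - b₀)) + dot (θ + θ') e := fun e => by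
    simp only [dot_sub, dot_add, add_dot]; ring
  have e2 : ∀ e, dot θ (a - e - a₀) + dot θ' (b - b₀) =
      (dot θ (a - a₀) + dot θ' (b - b₀)) - dot θ e := fun e => by
    simp only [dot_sub]; ring
  have e3 : ∀ e, dot θ (a - a₀) + dot θ' (b - e - b₀) =
      (dot θ (a - a₀) + dot θ' (b - b₀)) - dot θ' e := fun e => by
    simp only [dot_sub]; ring
  simp only [e1, e2, e3]
  rw [Finset.sum_add_distrib, Finset.sum_add_distrib, sum_dirs_cosz_add, sum_dirs_cosz_sub,
    sum_dirs_cosz_sub]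
  ring

lemma rho_eq_late (ω : ℝ) (T₂ s : ℕ) (a b : Vertex L) :
    rho ω T₂ (T₂ + s) a b = ∑ i : (Vertex L × Vertex L) × (Vertex L × Vertex L),
      (rho ω T₂ T₂ i.1.1 i.1.2 * (1 / ((L : ℝ) ^ 2) ^ 2 * lam3 ω i.2.1 i.2.2 ^ s)) *
        cosz (dot i.2.1 (a - i.1.1) + dot i.2.2 (b - i.1.2)) := by
  induction s generalizing a b with
  | zero =>
    have hL : (L : ℝ) ≠ 0 := Nat.cast_ne_zero.2 (NeZero.ne L)
    have key : ∀ x y : Vertex L, ∑ θ : Vertex L × Vertex L, cosz (dot θ.1 x + dot θ.2 y) =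
        if x = 0 ∧ y = 0 then ((L : ℝ) ^ 2) ^ 2 else 0 := by
      intro x y
      rw [Fintype.sum_prod_type]
      simp only [cosz_add, Finset.sum_sub_distrib, ← Finset.mul_sum, ← Finset.sum_mul,
        sum_cosz_dot, sum_sinz_dot]
      by_cases hx : x = 0 <;> by_cases hy : y = 0 <;> simp [hx, hy, sq]
    rw [Fintype.sum_prod_type]
    simp only [pow_zero, mul_one, ← Finset.mul_sum, key, add_zero]
    rw [Finset.sum_eq_single (a, b)]
    · simp only [sub_self, and_self, if_true]
      field_simp
    · rintro ⟨x, y⟩ - hne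
      rw [if_neg, mul_zero]
      rintro ⟨h1, h2⟩
      simp only at h1 h2
      exact hne (Prod.ext (sub_eq_zero.1 h1).symm (sub_eq_zero.1 h2).symm)
    · simp
  | succ s ih =>
    have e := funext fun a => funext fun b => ih a b
    rw [← add_assoc]
    simp only [rho, e, show ¬ (T₂ + s < T₂) by omega, false_and, if_false, add_zero]
    rw [K3_lin]
    refine Finset.sum_congr rfl fun i _ => ?_
    rw [K3_cosz]; ring

end Fourier

/-! ### Heat kernel upper bounds -/

section HeatKernel

variable {L : ℕ} [NeZero L]

/-- The on-diagonal heat kernel at half speed, in exponential form; it dominates the heat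
kernels of both `K2` and (squared) `K3`. -/
def HH (L : ℕ) [NeZero L] (ω : ℝ) (s : ℕ) : ℝ :=
  ∑ θ : Vertex L, 1 / (L : ℝ) ^ 2 * Real.exp (-(ω / 2 * s * qq θ))

lemma HH_nonneg (ω : ℝ) (s : ℕ) : 0 ≤ HH L ω s :=
  Finset.sum_nonneg fun θ _ => by positivity

lemma HH_anti {ω : ℝ} (h0 : 0 ≤ ω) {s t : ℕ} (h : s ≤ t) : HH L ω t ≤ HH L ω s := by
  refine Finset.sum_le_sum fun θ _ => ?_
  have := qq_nonneg θ
  have : (s : ℝ) ≤ t := by exact_mod_cast h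
  gcongr

lemma one_sub_pow_le_exp {x : ℝ} (h1 : x ≤ 1) (s : ℕ) :
    (1 - x) ^ s ≤ Real.exp (-(s * x)) := by
  have h : 1 - x ≤ Real.exp (-x) := Real.one_sub_le_exp_neg x
  calc (1 - x) ^ s ≤ (Real.exp (-x)) ^ s := by gcongr
    _ = _ := by rw [← Real.exp_nat_mul]; ring_nf

lemma kk_le {ω : ℝ} (h0 : 0 ≤ ω) (h1 : 8 * ω ≤ 1) (s : ℕ) (a : Vertex L) :
    kk ω s a ≤ HH L ω s := by
  refine Finset.sum_le_sum fun θ _ => ?_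
  have hq := qq_nonneg θ
  have hq8 := qq_le θ
  have hx : ω * qq θ ≤ 1 := by nlinarith
  have hp : 0 ≤ (1 - ω * qq θ) ^ s := pow_nonneg (by linarith) _
  calc 1 / (L : ℝ) ^ 2 * (1 - ω * qq θ) ^ s * cosz (dot θ a)
      ≤ 1 / (L : ℝ) ^ 2 * (1 - ω * qq θ) ^ s * 1 := by
        gcongr; exact cosz_le_one _
    _ ≤ 1 / (L : ℝ) ^ 2 * Real.exp (-(ω / 2 * s * qq θ)) := by
        rw [mul_one]
        gcongr
        refine (one_sub_pow_le_exp hx s).trans (Real.exp_le_exp.2 ?_)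
        have : 0 ≤ ω * s * qq θ := by positivity
        nlinarith

lemma psi_late_le {ω : ℝ} (h0 : 0 ≤ ω) (h1 : 8 * ω ≤ 1) (T₂ s : ℕ) (a : Vertex L) :
    psi ω T₂ (T₂ + s) a ≤ T₂ * HH L ω s := by
  rw [psi_eq_late]
  have : ∑ u ∈ range T₂, kk ω (u + s) a ≤ ∑ _u ∈ range T₂, HH L ω s :=
    Finset.sum_le_sum fun u _ => (kk_le h0 h1 _ a).trans (HH_anti h0 (by omega))
  simpa using this

lemma sum_translate (f : Vertex L → ℝ) (e : Vertex L) : ∑ a, f (a + e) = ∑ a, f a :=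
  Equiv.sum_comp (Equiv.addRight e) f

lemma sum_translate' (f : Vertex L → ℝ) (e : Vertex L) : ∑ a, f (a - e) = ∑ a, f a :=
  Equiv.sum_comp (Equiv.subRight e) f

lemma sum_K2 (ω : ℝ) (f : Vertex L → ℝ) : ∑ a, K2 ω f a = ∑ a, f a := by
  unfold K2
  rw [Finset.sum_add_distrib, ← Finset.mul_sum, Finset.sum_comm]
  have : ∀ e ∈ dirs L, ∑ a, ((f (a + e) - f a) + (f (a - e) - f a)) = 0 := fun e _ => by
    rw [Finset.sum_add_distrib, Finset.sum_sub_distrib, Finset.sum_sub_distrib,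
      sum_translate, sum_translate']
    ring
  rw [Finset.sum_eq_zero this]
  ring

lemma sum_K3 (ω : ℝ) (f : Vertex L → Vertex L → ℝ) :
    ∑ a, ∑ b, K3 ω f a b = ∑ a, ∑ b, f a b := by
  have h1 : ∀ e, ∑ a, ∑ b, ((f (a + e) (b + e) - f a b) + (f (a - e) b - f a b) +
      (f a (b - e) - f a b)) = 0 := by
    intro e
    simp only [Finset.sum_add_distrib, Finset.sum_sub_distrib]
    have e1 : ∑ a, ∑ b, f (a + e) (b + e) = ∑ a, ∑ b, f a b := by
      rw [← sum_translate (fun a => ∑ b, f a b) e]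
      exact Finset.sum_congr rfl fun a _ => sum_translate (f (a + e)) e
    have e2 : ∑ a, ∑ b, f (a - e) b = ∑ a, ∑ b, f a b :=
      sum_translate' (fun a => ∑ b, f a b) e
    have e3 : ∑ a, ∑ b, f a (b - e) = ∑ a, ∑ b, f a b :=
      Finset.sum_congr rfl fun a _ => sum_translate' (f a) e
    rw [e1, e2, e3]; ring
  have h2 : ∑ a, ∑ b, ∑ e ∈ dirs L, ((f (a + e) (b + e) - f a b) + (f (a - e) b - f a b) +
      (f a (b - e) - f a b)) = 0 := by
    have : ∀ a, ∑ b, ∑ e ∈ dirs L, ((f (a + e) (b + e) - f a b) + (f (a - e) b - f a b) +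
        (f a (b - e) - f a b)) = ∑ e ∈ dirs L, ∑ b, ((f (a + e) (b + e) - f a b) +
        (f (a - e) b - f a b) + (f a (b - e) - f a b)) := fun a => Finset.sum_comm
    simp only [this]
    rw [Finset.sum_comm]
    exact Finset.sum_eq_zero fun e _ => h1 e
  unfold K3
  have h3 : ∀ a, ∑ b, (f a b + ω / 2 * ∑ e ∈ dirs L, ((f (a + e) (b + e) - f a b) +
      (f (a - e) b - f a b) + (f a (b - e) - f a b))) = ∑ b, f a b + ω / 2 * ∑ b,
      ∑ e ∈ dirs L, ((f (a + e) (b + e) - f a b) +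
      (f (a - e) b - f a b) + (f a (b - e) - f a b)) := fun a => by
    rw [Finset.sum_add_distrib, Finset.mul_sum]
  rw [Finset.sum_congr rfl fun a _ => h3 a, Finset.sum_add_distrib, ← Finset.mul_sum, h2]
  ring

lemma sum_psi (ω : ℝ) {T₂ : ℕ} (t : ℕ) (ht : t ≤ T₂) :
    ∑ a : Vertex L, psi ω T₂ t a = t := by
  induction t with
  | zero => simp [psi]
  | succ t ih =>
    simp only [psi, Finset.sum_add_distrib, sum_K2, ih (by omega), show t < T₂ by omega,
      true_and]
    simp

lemma sum_rho (ω : ℝ) {T₂ : ℕ} (t : ℕ) (ht : t ≤ T₂) :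
    ∑ a : Vertex L, ∑ b : Vertex L, rho ω T₂ t a b = t * (t + 1) := by
  induction t with
  | zero => simp [rho]
  | succ t ih =>
    have h1 : ∑ a : Vertex L, ∑ b : Vertex L, (if a = 0 then psi ω T₂ (t + 1) b else 0) =
        t + 1 := by
      rw [Finset.sum_eq_single 0]
      · simpa using sum_psi (L := L) ω (t + 1) ht
      · intro b _ hb; simp [hb]
      · simp
    have h2 : ∑ a : Vertex L, ∑ b : Vertex L, (if b = 0 then psi ω T₂ (t + 1) a else 0) =
        t + 1 := by
      rw [Finset.sum_comm]; exact h1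
    simp only [rho, show t < T₂ by omega, true_and]
    simp only [Finset.sum_add_distrib, h1, h2, sum_K3, ih (by omega)]
    push_cast; ring

lemma rho_late_le {ω : ℝ} (h0 : 0 ≤ ω) (h1 : 12 * ω ≤ 1) (T₂ s : ℕ) (a b : Vertex L) :
    rho ω T₂ (T₂ + s) a b ≤ (T₂ * (T₂ + 1)) * HH L ω s ^ 2 := by
  have hH : HH L ω s ^ 2 = ∑ θ : Vertex L × Vertex L, (1 / ((L : ℝ) ^ 2) ^ 2) *
      Real.exp (-(ω / 2 * s * (qq θ.1 + qq θ.2))) := by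
    rw [sq, HH, Finset.sum_mul_sum]
    refine Eq.trans ?_ (Fintype.sum_prod_type _).symm
    refine Finset.sum_congr rfl fun x _ => ?_
    refine Finset.sum_congr rfl fun y _ => ?_
    rw [show -(ω / 2 * s * (qq x + qq y)) = -(ω / 2 * s * qq x) + -(ω / 2 * s * qq y) by ring,
      Real.exp_add]
    ring
  have hr : ((T₂ : ℝ) * (T₂ + 1)) = ∑ i : Vertex L × Vertex L, rho ω T₂ T₂ i.1 i.2 := by
    rw [Fintype.sum_prod_type, sum_rho ω T₂ le_rfl]
  rw [rho_eq_late, hH, hr, Finset.sum_mul_sum]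
  refine (le_of_eq (Fintype.sum_prod_type _)).trans ?_
  refine Finset.sum_le_sum fun i _ => Finset.sum_le_sum fun θ _ => ?_
  have hq1 := qq_nonneg θ.1
  have hq2 := qq_nonneg θ.2
  have hq3 := qq_nonneg (θ.1 + θ.2)
  have hq1' := qq_le θ.1
  have hq2' := qq_le θ.2
  have hq3' := qq_le (θ.1 + θ.2)
  have hrho := rho_nonneg h0 (by linarith : 6 * ω ≤ 1) T₂ T₂ i.1 i.2
  have hx : ω / 2 * (qq θ.1 + qq θ.2 + qq (θ.1 + θ.2)) ≤ 1 := by nlinarith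
  have hp : 0 ≤ lam3 ω θ.1 θ.2 := by unfold lam3; linarith
  have hle : lam3 ω θ.1 θ.2 ^ s ≤ Real.exp (-(ω / 2 * s * (qq θ.1 + qq θ.2))) := by
    refine (one_sub_pow_le_exp hx s).trans (Real.exp_le_exp.2 ?_)
    have : 0 ≤ ω * s * qq (θ.1 + θ.2) := by positivity
    nlinarith
  calc _ ≤ rho ω T₂ T₂ i.1 i.2 * (1 / ((L : ℝ) ^ 2) ^ 2 * lam3 ω θ.1 θ.2 ^ s) * 1 := by
        gcongr
        exact cosz_le_one _
    _ ≤ _ := by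
        rw [mul_one]
        gcongr

/-- The one-dimensional symbol. -/
def q1 (m : ZMod L) : ℝ := 2 * (1 - cosz m)

lemma qq_eq (hL : 3 ≤ L) (θ : Vertex L) : qq θ = q1 θ.1 + q1 θ.2 := by
  haveI : Fact (1 < L) := ⟨by omega⟩
  have h2 : (1 : ZMod L) ≠ -1 := by
    haveI : Fact (2 < L) := ⟨by omega⟩
    exact (ZMod.neg_one_ne_one (n := L)).symm
  unfold qq dirs q1
  rw [Finset.sum_insert, Finset.sum_insert, Finset.sum_insert, Finset.sum_singleton]
  · simp only [dot, mul_one, mul_zero, add_zero, zero_add, mul_neg, cosz_neg]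
    ring
  · simp
  · simp [h2]
  · simp [h2]

lemma q1_nonneg (m : ZMod L) : 0 ≤ q1 m := by
  unfold q1; linarith [cosz_le_one m]

lemma sum_zmod_val (f : ℕ → ℝ) : ∑ m : ZMod L, f m.val = ∑ v ∈ range L, f v := by
  refine Finset.sum_nbij' (fun m => m.val) (fun v => (v : ZMod L)) ?_ ?_ ?_ ?_ ?_
  · intro m _; exact Finset.mem_range.2 (ZMod.val_lt m)
  · simp
  · intro m _; simp
  · intro v hv; exact ZMod.val_cast_of_lt (Finset.mem_range.1 hv)
  · simp

lemma one_sub_cos_ge {x : ℝ} (h0 : 0 ≤ x) (h1 : x ≤ 1 / 2) :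
    8 * x ^ 2 ≤ 1 - Real.cos (2 * Real.pi * x) := by
  have hs := Real.mul_le_sin (x := Real.pi * x) (by positivity) (by nlinarith [Real.pi_pos])
  have hpi := Real.pi_pos
  have e : 2 / Real.pi * (Real.pi * x) = 2 * x := by field_simp
  rw [e] at hs
  have hc : Real.cos (2 * Real.pi * x) = 1 - 2 * Real.sin (Real.pi * x) ^ 2 := by
    rw [mul_assoc, Real.cos_two_mul]
    linarith [Real.sin_sq_add_cos_sq (Real.pi * x)]
  rw [hc]
  nlinarith

lemma exp_q1_le {B : ℝ} (hB : 0 ≤ B) (m : ZMod L) :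
    Real.exp (-(B * q1 m)) ≤ Real.exp (-(16 * B / (L : ℝ) ^ 2 * (m.val : ℝ) ^ 2)) +
      Real.exp (-(16 * B / (L : ℝ) ^ 2 * ((L - 1 - m.val : ℕ) : ℝ) ^ 2)) := by
  have hLpos : 0 < (L : ℝ) := Nat.cast_pos.2 (NeZero.pos L)
  have hv : m.val < L := ZMod.val_lt m
  rcases le_total (2 * m.val) L with h | h
  · have h' : (2 * m.val : ℝ) ≤ L := by exact_mod_cast h
    have := one_sub_cos_ge (x := m.val / L) (by positivity) (by
      rw [div_le_div_iff₀ hLpos (by norm_num)]; linarith)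
    have hq : 16 / (L : ℝ) ^ 2 * (m.val : ℝ) ^ 2 ≤ q1 m := by
      unfold q1
      rw [cosz_eq_cos, ← mul_div_assoc] at *
      calc 16 / (L : ℝ) ^ 2 * (m.val : ℝ) ^ 2 = 2 * (8 * ((m.val : ℝ) / L) ^ 2) := by
            field_simp; ring
        _ ≤ _ := by linarith
    have : Real.exp (-(B * q1 m)) ≤ Real.exp (-(16 * B / (L : ℝ) ^ 2 * (m.val : ℝ) ^ 2)) := by
      rw [Real.exp_le_exp, neg_le_neg_iff]
      calc _ = B * (16 / (L : ℝ) ^ 2 * (m.val : ℝ) ^ 2) := by ring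
        _ ≤ _ := by gcongr
    linarith [Real.exp_pos (-(16 * B / (L : ℝ) ^ 2 * ((L - 1 - m.val : ℕ) : ℝ) ^ 2))]
  · have h' : (L : ℝ) ≤ (2 * m.val : ℝ) := by exact_mod_cast h
    have hv' : (m.val : ℝ) < L := by exact_mod_cast hv
    have := one_sub_cos_ge (x := (L - m.val) / L) (div_nonneg (by linarith) hLpos.le) (by
      rw [div_le_div_iff₀ hLpos (by norm_num)]; linarith)
    have hc : Real.cos (2 * Real.pi * ((L - m.val) / L)) =
        Real.cos (2 * Real.pi * m.val / L) := by
      rw [show 2 * Real.pi * ((L - m.val) / L) = 2 * Real.pi - 2 * Real.pi * m.val / L by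
        field_simp, Real.cos_two_pi_sub]
    have hsub : ((L - 1 - m.val : ℕ) : ℝ) ≤ L - m.val := by
      have : ((L - 1 - m.val : ℕ) : ℝ) + m.val ≤ L := by
        exact_mod_cast (by omega : L - 1 - m.val + m.val ≤ L)
      linarith
    have hq : 16 / (L : ℝ) ^ 2 * ((L - 1 - m.val : ℕ) : ℝ) ^ 2 ≤ q1 m := by
      unfold q1
      rw [cosz_eq_cos, ← hc]
      calc 16 / (L : ℝ) ^ 2 * ((L - 1 - m.val : ℕ) : ℝ) ^ 2 ≤
            16 / (L : ℝ) ^ 2 * (L - m.val : ℝ) ^ 2 := by gcongr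
        _ = 2 * (8 * ((L - m.val : ℝ) / L) ^ 2) := by field_simp; ring
        _ ≤ _ := by linarith
    have : Real.exp (-(B * q1 m)) ≤
        Real.exp (-(16 * B / (L : ℝ) ^ 2 * ((L - 1 - m.val : ℕ) : ℝ) ^ 2)) := by
      rw [Real.exp_le_exp, neg_le_neg_iff]
      calc _ = B * (16 / (L : ℝ) ^ 2 * ((L - 1 - m.val : ℕ) : ℝ) ^ 2) := by ring
        _ ≤ _ := by gcongr
    linarith [Real.exp_pos (-(16 * B / (L : ℝ) ^ 2 * (m.val : ℝ) ^ 2))]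

/-- A Gaussian sum bound, from `A v² ≥ 2 √A v - 1` and a geometric series. -/
lemma gauss_sum_le {A : ℝ} (hA : 0 < A) (N : ℕ) :
    ∑ v ∈ range N, Real.exp (-(A * (v : ℝ) ^ 2)) ≤ 3 + 3 / (2 * √A) := by
  have hs : 0 < √A := Real.sqrt_pos.2 hA
  have hsq : √A ^ 2 = A := Real.sq_sqrt hA.le
  set x := Real.exp (-(2 * √A)) with hx
  have hx1 : x < 1 := by rw [hx, Real.exp_lt_one_iff]; linarith
  have hx0 : 0 < x := Real.exp_pos _
  have h1 : ∀ v ∈ range N, Real.exp (-(A * (v : ℝ) ^ 2)) ≤ Real.exp 1 * x ^ v := by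
    intro v _
    rw [hx, ← Real.exp_nat_mul, ← Real.exp_add, Real.exp_le_exp]
    nlinarith [sq_nonneg (√A * v - 1)]
  refine (Finset.sum_le_sum h1).trans ?_
  rw [← Finset.mul_sum]
  have h2 : ∑ v ∈ range N, x ^ v ≤ 1 / (1 - x) := by
    rw [le_div_iff₀ (by linarith), geom_sum_mul_neg]
    linarith [pow_pos hx0 N]
  have h3 : 1 / (1 - x) ≤ 1 + 1 / (2 * √A) := by
    have h4 : x * (1 + 2 * √A) ≤ 1 := by
      have : 1 + 2 * √A ≤ Real.exp (2 * √A) := by linarith [Real.add_one_le_exp (2 * √A)]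
      calc x * (1 + 2 * √A) ≤ x * Real.exp (2 * √A) := by gcongr
        _ = 1 := by rw [hx, ← Real.exp_add]; simp
    rw [div_le_iff₀ (by linarith)]
    have h5 : 1 + 1 / (2 * √A) = (1 + 2 * √A) / (2 * √A) := by field_simp; ring
    rw [h5, div_mul_eq_mul_div, le_div_iff₀ (by linarith)]
    nlinarith
  have h4 : Real.exp 1 ≤ 3 := by linarith [Real.exp_one_lt_d9]
  have h5 : 0 ≤ 1 + 1 / (2 * √A) := by positivity
  calc Real.exp 1 * ∑ v ∈ range N, x ^ v ≤ 3 * (1 + 1 / (2 * √A)) := by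
        gcongr; exact h2.trans h3
    _ = _ := by ring

lemma HH_le (hL : 3 ≤ L) {ω : ℝ} {s : ℕ} {A : ℝ} (hA : 0 < A)
    (hs : A ≤ 8 * ω * s / (L : ℝ) ^ 2) :
    HH L ω s ≤ (6 + 3 / √A) ^ 2 / (L : ℝ) ^ 2 := by
  have hLpos : 0 < (L : ℝ) := Nat.cast_pos.2 (NeZero.pos L)
  have hB : 0 < ω / 2 * s := by
    have : 0 < 8 * ω * s / (L : ℝ) ^ 2 := lt_of_lt_of_le hA hs
    rw [div_pos_iff_of_pos_right (by positivity)] at this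
    linarith
  have h1 : ∑ m : ZMod L, Real.exp (-(ω / 2 * s * q1 m)) ≤ 6 + 3 / √A := by
    refine (Finset.sum_le_sum fun m _ => exp_q1_le hB.le m).trans ?_
    rw [Finset.sum_add_distrib,
      sum_zmod_val fun v => Real.exp (-(16 * (ω / 2 * s) / (L : ℝ) ^ 2 * (v : ℝ) ^ 2)),
      sum_zmod_val fun v => Real.exp (-(16 * (ω / 2 * s) / (L : ℝ) ^ 2 *
        ((L - 1 - v : ℕ) : ℝ) ^ 2)),
      Finset.sum_range_reflect
        (fun v => Real.exp (-(16 * (ω / 2 * s) / (L : ℝ) ^ 2 * (v : ℝ) ^ 2))) L]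
    have : ∑ v ∈ range L, Real.exp (-(16 * (ω / 2 * s) / (L : ℝ) ^ 2 * (v : ℝ) ^ 2)) ≤
        3 + 3 / (2 * √A) := by
      refine le_trans (Finset.sum_le_sum fun v _ => ?_) (gauss_sum_le hA L)
      rw [Real.exp_le_exp, neg_le_neg_iff]
      refine mul_le_mul_of_nonneg_right (hs.trans (le_of_eq ?_)) (by positivity)
      ring
    have e : 3 / (2 * √A) + 3 / (2 * √A) = 3 / √A := by
      have := (Real.sqrt_pos.2 hA).ne'
      field_simp; norm_num
    linarith
  have h2 : HH L ω s = (∑ m : ZMod L, Real.exp (-(ω / 2 * s * q1 m))) ^ 2 / (L : ℝ) ^ 2 := by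
    unfold HH
    rw [sq (∑ m : ZMod L, _), Finset.sum_mul_sum, Fintype.sum_prod_type, Finset.sum_div]
    refine Finset.sum_congr rfl fun x _ => ?_
    rw [Finset.sum_div]
    refine Finset.sum_congr rfl fun y _ => ?_
    rw [qq_eq hL, mul_add, neg_add, Real.exp_add]
    ring
  rw [h2]
  have : 0 ≤ ∑ m : ZMod L, Real.exp (-(ω / 2 * s * q1 m)) :=
    Finset.sum_nonneg fun _ _ => (Real.exp_pos _).le
  gcongr

end HeatKernel

/-! ### Lower bound for the potential -/

section LowerBound

variable {L : ℕ} [NeZero L]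

lemma q1_le (m : ZMod L) : q1 m ≤ 40 * (m.val : ℝ) ^ 2 / (L : ℝ) ^ 2 := by
  have h := Real.one_sub_sq_div_two_le_cos (x := 2 * Real.pi * m.val / L)
  have hpi : Real.pi ^ 2 ≤ 10 := by nlinarith [Real.pi_lt_d2, Real.pi_pos]
  unfold q1
  rw [cosz_eq_cos]
  calc 2 * (1 - Real.cos (2 * Real.pi * m.val / L)) ≤ (2 * Real.pi * m.val / L) ^ 2 := by
        linarith
    _ = Real.pi ^ 2 * (4 * (m.val : ℝ) ^ 2 / (L : ℝ) ^ 2) := by ring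
    _ ≤ 10 * (4 * (m.val : ℝ) ^ 2 / (L : ℝ) ^ 2) := by gcongr
    _ = _ := by ring

/-- Frequencies with both coordinates at most `Θ`. -/
def lowF (L : ℕ) [NeZero L] (Θ : ℕ) : Finset (Vertex L) :=
  (univ.filter fun m : ZMod L => m.val ≤ Θ) ×ˢ (univ.filter fun m : ZMod L => m.val ≤ Θ)

lemma card_lowF {Θ : ℕ} (hΘ : Θ < L) : (Θ + 1) ^ 2 ≤ (lowF L Θ).card := by
  have h : Θ + 1 ≤ (univ.filter fun m : ZMod L => m.val ≤ Θ).card := by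
    have := Finset.card_le_card_of_injOn (s := range (Θ + 1))
      (t := univ.filter fun m : ZMod L => m.val ≤ Θ) (fun v => (v : ZMod L)) ?_ ?_
    · simpa using this
    · intro v hv
      have hv' : v < Θ + 1 := by simpa using hv
      simp only [Finset.coe_filter, Finset.mem_univ, true_and, Set.mem_setOf_eq]
      rw [ZMod.val_cast_of_lt (by omega)]
      omega
    · intro v hv w hw hvw
      have hv' : v < Θ + 1 := by simpa using hv
      have hw' : w < Θ + 1 := by simpa using hw
      have := congrArg ZMod.val hvw
      simpa only [ZMod.val_cast_of_lt (show v < L by omega),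
        ZMod.val_cast_of_lt (show w < L by omega)] using this
  unfold lowF
  rw [Finset.card_product, sq]
  exact Nat.mul_le_mul h h

/-- Two positions whose coordinates differ by at most `L / (13 Θ)`. -/
def Close (Θ : ℕ) (j l : Vertex L) : Prop :=
  13 * (Θ : ℝ) * |(j.1.val : ℝ) - l.1.val| ≤ L ∧ 13 * (Θ : ℝ) * |(j.2.val : ℝ) - l.2.val| ≤ L

lemma half_le_cosz {Θ : ℕ} {θ j l : Vertex L} (hθ : θ ∈ lowF L Θ) (hc : Close Θ j l) :
    1 / 2 ≤ cosz (dot θ (j - l)) := by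
  have hLpos : 0 < (L : ℝ) := Nat.cast_pos.2 (NeZero.pos L)
  simp only [lowF, Finset.mem_product, Finset.mem_filter, Finset.mem_univ, true_and] at hθ
  have hθ1 : (θ.1.val : ℝ) ≤ Θ := by exact_mod_cast hθ.1
  have hθ2 : (θ.2.val : ℝ) ≤ Θ := by exact_mod_cast hθ.2
  set z : ℤ := (θ.1.val : ℤ) * (j.1.val - l.1.val) + (θ.2.val : ℤ) * (j.2.val - l.2.val) with hz
  have hd : dot θ (j - l) = (z : ZMod L) := by
    rw [hz]
    push_cast
    simp only [ZMod.natCast_val, ZMod.cast_id', id_eq]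
    rfl
  have hzabs : |(z : ℝ)| ≤ 2 * L / 13 := by
    rw [hz]
    push_cast
    refine (abs_add_le _ _).trans ?_
    rw [abs_mul, abs_mul, Nat.abs_cast, Nat.abs_cast]
    have h1 : (θ.1.val : ℝ) * |(j.1.val : ℝ) - l.1.val| ≤ Θ * |(j.1.val : ℝ) - l.1.val| := by
      gcongr
    have h2 : (θ.2.val : ℝ) * |(j.2.val : ℝ) - l.2.val| ≤ Θ * |(j.2.val : ℝ) - l.2.val| := by
      gcongr
    linarith [hc.1, hc.2]
  rw [hd, cosz_intCast]
  have h := Real.one_sub_sq_div_two_le_cos (x := 2 * Real.pi * z / L)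
  have hx : |2 * Real.pi * z / L| ≤ 1 := by
    rw [abs_div, abs_mul, abs_of_pos hLpos, abs_of_pos (by positivity : 0 < 2 * Real.pi),
      div_le_one hLpos]
    have := mul_le_mul_of_nonneg_left hzabs (by positivity : 0 ≤ 2 * Real.pi)
    nlinarith [Real.pi_lt_d2]
  have hsq : (2 * Real.pi * z / L) ^ 2 ≤ 1 := by
    rw [← sq_abs]; nlinarith [abs_nonneg (2 * Real.pi * z / L)]
  linarith

lemma sum_cosz_sub_eq (F : Finset (Vertex L)) (θ : Vertex L) :
    ∑ j ∈ F, ∑ l ∈ F, cosz (dot θ (j - l)) =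
      (∑ j ∈ F, cosz (dot θ j)) ^ 2 + (∑ j ∈ F, sinz (dot θ j)) ^ 2 := by
  simp only [dot_sub, cosz_sub, Finset.sum_add_distrib, sq, Finset.sum_mul_sum]

/-- Close labels meet often: keep only the low frequencies in the (positive definite) Fourier
expansion. -/
lemma sum_psi_ge (hL : 3 ≤ L) {ω : ℝ} (h0 : 0 ≤ ω) (h1 : 8 * ω ≤ 1) {Θ T₂ s : ℕ} (hΘ : Θ < L)
    (hq : ω * (T₂ + s) * (80 * (Θ : ℝ) ^ 2 / (L : ℝ) ^ 2) ≤ 1 / 2) (F : Finset (Vertex L))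
    (hF : ∀ j ∈ F, ∀ l ∈ F, Close Θ j l) :
    1 / (L : ℝ) ^ 2 * T₂ * ((Θ : ℝ) + 1) ^ 2 / 4 * (F.card : ℝ) ^ 2 ≤
      ∑ j ∈ F, ∑ l ∈ F, psi ω T₂ (T₂ + s) (j - l) := by
  set G : Vertex L → ℝ := fun θ => ∑ j ∈ F, ∑ l ∈ F, cosz (dot θ (j - l)) with hG
  have hG0 : ∀ θ, 0 ≤ G θ := fun θ => by
    simp only [hG, sum_cosz_sub_eq]; positivity
  have hG1 : ∀ θ ∈ lowF L Θ, (F.card : ℝ) ^ 2 / 2 ≤ G θ := fun θ hθ => by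
    have : ∑ j ∈ F, ∑ l ∈ F, (1 / 2 : ℝ) ≤ G θ :=
      Finset.sum_le_sum fun j hj => Finset.sum_le_sum fun l hl =>
        half_le_cosz hθ (hF j hj l hl)
    simp only [Finset.sum_const, nsmul_eq_mul] at this
    linarith
  have hsum : ∑ j ∈ F, ∑ l ∈ F, psi ω T₂ (T₂ + s) (j - l) =
      ∑ u ∈ range T₂, ∑ θ : Vertex L, (1 / (L : ℝ) ^ 2 * (1 - ω * qq θ) ^ (u + s)) * G θ := by
    simp only [psi_eq_late, kk, hG]
    have : ∀ j ∈ F, ∑ l ∈ F, ∑ u ∈ range T₂, ∑ θ : Vertex L,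
        (1 / (L : ℝ) ^ 2 * (1 - ω * qq θ) ^ (u + s)) * cosz (dot θ (j - l)) =
        ∑ u ∈ range T₂, ∑ θ : Vertex L, ∑ l ∈ F,
        (1 / (L : ℝ) ^ 2 * (1 - ω * qq θ) ^ (u + s)) * cosz (dot θ (j - l)) := fun j _ => by
      rw [Finset.sum_comm]
      exact Finset.sum_congr rfl fun u _ => Finset.sum_comm
    rw [Finset.sum_congr rfl this, Finset.sum_comm]
    refine Finset.sum_congr rfl fun u _ => ?_
    rw [Finset.sum_comm]
    refine Finset.sum_congr rfl fun θ _ => ?_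
    rw [Finset.mul_sum]
    refine Finset.sum_congr rfl fun j _ => ?_
    rw [Finset.mul_sum]
  have hu : ∀ u ∈ range T₂, 1 / (L : ℝ) ^ 2 * ((Θ : ℝ) + 1) ^ 2 / 4 * (F.card : ℝ) ^ 2 ≤
      ∑ θ : Vertex L, (1 / (L : ℝ) ^ 2 * (1 - ω * qq θ) ^ (u + s)) * G θ := by
    intro u hu
    have hlam : ∀ θ : Vertex L, 0 ≤ 1 - ω * qq θ := fun θ => by
      nlinarith [qq_nonneg θ, qq_le θ]
    have hlow : ∀ θ ∈ lowF L Θ, 1 / (L : ℝ) ^ 2 * (1 / 2) * ((F.card : ℝ) ^ 2 / 2) ≤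
        (1 / (L : ℝ) ^ 2 * (1 - ω * qq θ) ^ (u + s)) * G θ := by
      intro θ hθ
      have hθ' := hθ
      simp only [lowF, Finset.mem_product, Finset.mem_filter, Finset.mem_univ, true_and] at hθ'
      have hθ1 : (θ.1.val : ℝ) ≤ Θ := by exact_mod_cast hθ'.1
      have hθ2 : (θ.2.val : ℝ) ≤ Θ := by exact_mod_cast hθ'.2
      have hqq : qq θ ≤ 80 * (Θ : ℝ) ^ 2 / (L : ℝ) ^ 2 := by
        rw [qq_eq hL]
        have e1 : q1 θ.1 ≤ 40 * (Θ : ℝ) ^ 2 / (L : ℝ) ^ 2 :=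
          (q1_le θ.1).trans (by gcongr)
        have e2 : q1 θ.2 ≤ 40 * (Θ : ℝ) ^ 2 / (L : ℝ) ^ 2 :=
          (q1_le θ.2).trans (by gcongr)
        calc _ ≤ 40 * (Θ : ℝ) ^ 2 / (L : ℝ) ^ 2 + 40 * (Θ : ℝ) ^ 2 / (L : ℝ) ^ 2 := by linarith
          _ = _ := by ring
      have hpow : 1 / 2 ≤ (1 - ω * qq θ) ^ (u + s) := by
        have hb := one_add_mul_le_pow (a := -(ω * qq θ)) (by linarith [hlam θ]) (u + s)
        rw [← sub_eq_add_neg] at hb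
        refine le_trans ?_ hb
        have hus : ((u + s : ℕ) : ℝ) ≤ T₂ + s := by
          push_cast
          have : (u : ℝ) ≤ T₂ := by exact_mod_cast (Finset.mem_range.1 hu).le
          linarith
        have : ((u + s : ℕ) : ℝ) * (ω * qq θ) ≤
            (T₂ + s) * (ω * (80 * (Θ : ℝ) ^ 2 / (L : ℝ) ^ 2)) := by
          have := qq_nonneg θ
          gcongr
        linarith
      have := hG1 θ hθ
      have := hG0 θ
      gcongr
    have h3 : ∑ θ ∈ lowF L Θ, 1 / (L : ℝ) ^ 2 * (1 / 2) * ((F.card : ℝ) ^ 2 / 2) ≤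
        ∑ θ : Vertex L, (1 / (L : ℝ) ^ 2 * (1 - ω * qq θ) ^ (u + s)) * G θ := by
      refine (Finset.sum_le_sum hlow).trans ?_
      refine Finset.sum_le_sum_of_subset_of_nonneg (Finset.subset_univ _) fun θ _ _ => ?_
      have := pow_nonneg (hlam θ) (u + s)
      have := hG0 θ
      positivity
    refine le_trans ?_ h3
    rw [Finset.sum_const, nsmul_eq_mul]
    have hcard : ((Θ : ℝ) + 1) ^ 2 ≤ (lowF L Θ).card := by exact_mod_cast card_lowF hΘ
    calc _ = ((Θ : ℝ) + 1) ^ 2 * (1 / (L : ℝ) ^ 2 * (1 / 2) * ((F.card : ℝ) ^ 2 / 2)) := by ring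
      _ ≤ _ := by gcongr
  rw [hsum]
  have := Finset.sum_le_sum hu
  rw [Finset.sum_const, Finset.card_range, nsmul_eq_mul] at this
  linarith

/-- The weights: labels in the same, well-populated, box interact with strength inversely
proportional to the population of the box. -/
def Wbox {ι : Type*} (S : Finset (Vertex L)) (box : Vertex L → ι) (m₀ w : ℝ)
    (j l : Vertex L) : ℝ :=
  if box j = box l ∧ m₀ ≤ ((S.filter fun v => box v = box j).card : ℝ) then
    w / ((S.filter fun v => box v = box j).card : ℝ) else 0

lemma Wbox_nonneg {ι : Type*} (S : Finset (Vertex L)) (box : Vertex L → ι) {m₀ w : ℝ}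
    (hw : 0 ≤ w) (j l : Vertex L) : 0 ≤ Wbox S box m₀ w j l := by
  unfold Wbox; split_ifs <;> positivity

lemma Wbox_symm {ι : Type*} (S : Finset (Vertex L)) (box : Vertex L → ι) (m₀ w : ℝ)
    (j l : Vertex L) : Wbox S box m₀ w j l = Wbox S box m₀ w l j := by
  unfold Wbox
  by_cases h : box j = box l
  · simp [h]
  · simp [h, Ne.symm h]

/-- The lower bound on the potential: the linear term dominates in every box with at least
`m₀` labels. -/
lemma gpot_ge {ι : Type*} (S : Finset (Vertex L)) (box : Vertex L → ι) (Bx : Finset ι)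
    (hbox : ∀ v, box v ∈ Bx) {ω φ Y r m₀ : ℝ} {T₂ T : ℕ} (h0 : 0 ≤ ω) (h1 : 6 * ω ≤ 1)
    (hφ : 0 ≤ φ) (hY : 0 < Y) (hr : 0 < r) (hm₀ : 2 ≤ r * m₀) (hφm : φ ≤ m₀ * Y)
    (hψ : ∀ a : Vertex L, psi ω T₂ T a ≤ Y) (hρ : ∀ a b : Vertex L, rho ω T₂ T a b ≤ 2 * Y ^ 2)
    (hlow : ∀ F : Finset (Vertex L), (∀ j ∈ F, ∀ l ∈ F, box j = box l) →
      r * Y * (F.card : ℝ) ^ 2 ≤ ∑ j ∈ F, ∑ l ∈ F, psi ω T₂ T (j - l)) :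
    r ^ 2 / 256 * (S.card - Bx.card * m₀) ≤
      gpot (Wbox S box m₀ (r / 32 / Y)) ω T₂ φ T S id := by
  set δ : ℝ := r / 32 with hδ
  have hδ0 : 0 < δ := by positivity
  set W := Wbox S box m₀ (δ / Y) with hWdef
  have hm₀pos : 0 < m₀ := by
    by_contra h
    push Not at h
    nlinarith
  have hWn : ∀ j l, 0 ≤ W j l := Wbox_nonneg S box (by positivity)
  have hψ0 : ∀ a : Vertex L, 0 ≤ psi ω T₂ T a := psi_nonneg h0 (by linarith) T₂ T
  have hbad : ∀ j, ¬ m₀ ≤ ((S.filter fun v => box v = box j).card : ℝ) → ∀ l, W j l = 0 := by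
    intro j hj l
    simp [hWdef, Wbox, hj]
  have hgood : ∀ j, m₀ ≤ ((S.filter fun v => box v = box j).card : ℝ) → ∀ f : Vertex L → ℝ,
      ∑ l ∈ S, W j l * f l = δ / Y / ((S.filter fun v => box v = box j).card : ℝ) *
        ∑ l ∈ S.filter (fun v => box v = box j), f l := by
    intro j hj f
    rw [Finset.mul_sum, Finset.sum_filter]
    refine Finset.sum_congr rfl fun l _ => ?_
    by_cases h : box l = box j
    · simp [hWdef, Wbox, hj, h]
    · simp [hWdef, Wbox, h, Ne.symm h]
  -- the quadratic term is at most `4 δ²` per label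
  have hR : ∀ j, m₀ ≤ ((S.filter fun v => box v = box j).card : ℝ) →
      Rpot W ω T₂ φ T S j id ≤ 4 * δ ^ 2 := by
    intro j hj
    set m : ℝ := ((S.filter fun v => box v = box j).card : ℝ) with hm
    have hmpos : 0 < m := lt_of_lt_of_le hm₀pos hj
    have hWle : ∀ l, W j l ≤ δ / Y / m := by
      intro l
      simp only [hWdef, Wbox]
      split_ifs
      · exact le_rfl
      · positivity
    have hs1 : ∑ l ∈ S.erase j, W j l ≤ δ / Y := by
      have e := hgood j hj fun _ => 1
      simp only [mul_one, Finset.sum_const, nsmul_eq_mul] at e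
      rw [← hm] at e
      have : ∑ l ∈ S.erase j, W j l ≤ ∑ l ∈ S, W j l :=
        Finset.sum_le_sum_of_subset_of_nonneg (Finset.erase_subset _ _) fun l _ _ => hWn j l
      refine this.trans (le_of_eq ?_)
      rw [e]; field_simp
    have hs0 : 0 ≤ ∑ l ∈ S.erase j, W j l := Finset.sum_nonneg fun l _ => hWn j l
    have hterm : ∀ l ∈ S.erase j, ∀ k ∈ S.erase j, W j l * W j k * rho2 ω T₂ φ T j l k id ≤
        2 * Y ^ 2 * (W j l * W j k) + if l = k then 2 * φ * Y * (δ / Y / m) * W j l else 0 := by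
      intro l _ k _
      have hl := hWn j l
      have hk := hWn j k
      unfold rho2
      split_ifs with hlk
      · subst hlk
        have a1 : 2 * φ * psi ω T₂ T (id j - id l) ≤ 2 * φ * Y := by
          have := hψ (id j - id l); gcongr
        have a2 : W j l * W j l * (2 * φ * psi ω T₂ T (id j - id l)) ≤
            (δ / Y / m * W j l) * (2 * φ * Y) := by
          have := hWle l
          have := hψ0 (id j - id l)
          gcongr
        have a3 : 0 ≤ 2 * Y ^ 2 * (W j l * W j l) := by positivity
        linarith
      · have a1 := hρ (id j - id l) (id j - id k)
        have a2 := mul_le_mul_of_nonneg_left a1 (mul_nonneg hl hk)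
        linarith
    have hsum : Rpot W ω T₂ φ T S j id ≤ 2 * Y ^ 2 * (∑ l ∈ S.erase j, W j l) ^ 2 +
        2 * φ * Y * (δ / Y / m) * ∑ l ∈ S.erase j, W j l := by
      unfold Rpot
      refine (Finset.sum_le_sum fun l hl => Finset.sum_le_sum fun k hk => hterm l hl k hk).trans
        (le_of_eq ?_)
      rw [sq (∑ l ∈ S.erase j, W j l), Finset.sum_mul_sum, Finset.mul_sum, Finset.mul_sum,
        ← Finset.sum_add_distrib]
      refine Finset.sum_congr rfl fun l hl => ?_
      rw [Finset.sum_add_distrib, Finset.mul_sum, Finset.sum_ite_eq, if_pos hl]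
    refine hsum.trans ?_
    have b1 : 2 * Y ^ 2 * (∑ l ∈ S.erase j, W j l) ^ 2 ≤ 2 * Y ^ 2 * (δ / Y) ^ 2 := by gcongr
    have b2 : 2 * φ * Y * (δ / Y / m) * ∑ l ∈ S.erase j, W j l ≤
        2 * (m * Y) * Y * (δ / Y / m) * (δ / Y) := by
      have : φ ≤ m * Y := hφm.trans (by gcongr)
      gcongr
    have b3 : 2 * Y ^ 2 * (δ / Y) ^ 2 = 2 * δ ^ 2 := by field_simp
    have b4 : 2 * (m * Y) * Y * (δ / Y / m) * (δ / Y) = 2 * δ ^ 2 := by field_simp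
    linarith
  have hfib : ∀ β ∈ Bx, r ^ 2 / 256 * (((S.filter fun v => box v = β).card : ℝ) - m₀) ≤
      ∑ j ∈ S.filter (fun v => box v = β),
        (1 / 2 * hpot W ω T₂ T S j id - Rpot W ω T₂ φ T S j id) := by
    intro β _
    set F := S.filter fun v => box v = β with hF
    by_cases hm : m₀ ≤ (F.card : ℝ)
    · have hmpos : 0 < (F.card : ℝ) := lt_of_lt_of_le hm₀pos hm
      have hj : ∀ j ∈ F, 1 / 2 * (δ / Y / F.card * ∑ l ∈ F, psi ω T₂ T (j - l) - δ / F.card) -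
          4 * δ ^ 2 ≤ 1 / 2 * hpot W ω T₂ T S j id - Rpot W ω T₂ φ T S j id := by
        intro j hj
        rw [hF, Finset.mem_filter] at hj
        have hFj : (S.filter fun v => box v = box j) = F := by rw [hj.2]
        have hmj : m₀ ≤ ((S.filter fun v => box v = box j).card : ℝ) := by rw [hFj]; exact hm
        have c1 := hR j hmj
        have c2 := hgood j hmj fun l => psi ω T₂ T (j - l)
        rw [hFj] at c2
        have c3 : hpot W ω T₂ T S j id + W j j * psi ω T₂ T (j - j) =
            ∑ l ∈ S, W j l * psi ω T₂ T (j - l) := by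
          unfold hpot
          exact Finset.sum_erase_add S (fun l => W j l * psi ω T₂ T (j - l)) hj.1
        have c4 : W j j * psi ω T₂ T (j - j) ≤ δ / F.card := by
          have hWjj : W j j = δ / Y / F.card := by
            simp only [hWdef, Wbox, true_and, hFj, hm, if_true]
          rw [hWjj]
          calc δ / Y / F.card * psi ω T₂ T (j - j) ≤ δ / Y / F.card * Y := by
                have := hψ (j - j); gcongr
            _ = _ := by field_simp
        linarith
      refine le_trans ?_ (Finset.sum_le_sum hj)
      rw [Finset.sum_sub_distrib, ← Finset.mul_sum, Finset.sum_sub_distrib, ← Finset.mul_sum]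
      simp only [Finset.sum_const, nsmul_eq_mul]
      have hl := hlow F (by
        intro j hj l hl
        rw [hF, Finset.mem_filter] at hj hl
        rw [hj.2, hl.2])
      set m : ℝ := (F.card : ℝ)
      have d1 : δ / Y / m * (r * Y * m ^ 2) ≤
          δ / Y / m * ∑ j ∈ F, ∑ l ∈ F, psi ω T₂ T (j - l) := by gcongr
      have d2 : δ / Y / m * (r * Y * m ^ 2) = δ * r * m := by field_simp
      have d3 : m * (δ / m) = δ := by field_simp
      have d4 : 2 ≤ r * m := hm₀.trans (by gcongr)
      rw [d3]
      have d5 : δ * 2 ≤ δ * (r * m) := by gcongr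
      have d6 : r ^ 2 / 256 * m₀ ≥ 0 := by positivity
      have d7 : δ * r * m = r ^ 2 / 32 * m := by rw [hδ]; ring
      have d8 : m * (4 * δ ^ 2) = r ^ 2 / 256 * m := by rw [hδ]; ring
      nlinarith
    · have h2 : ∀ j ∈ F, 1 / 2 * hpot W ω T₂ T S j id - Rpot W ω T₂ φ T S j id = 0 := by
        intro j hj
        rw [hF, Finset.mem_filter] at hj
        have hz := hbad j (by rw [hj.2]; exact hm)
        simp [hpot, Rpot, hz]
      rw [Finset.sum_eq_zero h2]
      push Not at hm
      have : 0 < r ^ 2 / 256 := by positivity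
      nlinarith
  have hg : gpot W ω T₂ φ T S id = ∑ j ∈ S,
      (1 / 2 * hpot W ω T₂ T S j id - Rpot W ω T₂ φ T S j id) := by
    rw [gpot, Finset.sum_sub_distrib, Finset.mul_sum]
  rw [hg, ← Finset.sum_fiberwise_of_maps_to (s := S) (t := Bx) (g := box) fun v _ => hbox v]
  refine le_trans (le_of_eq ?_) (Finset.sum_le_sum hfib)
  rw [← Finset.mul_sum, Finset.sum_sub_distrib, Finset.sum_const, nsmul_eq_mul,
    Finset.card_eq_sum_card_fiberwise (s := S) (t := Bx) (f := box) fun v _ => hbox v]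
  push_cast
  rfl

end LowerBound

/-! ### The number of interactions is linear in the number of isolated particles -/

section Interaction

variable {L : ℕ} [NeZero L]

/-- The box of side about `L / (13 Θ + 1)` containing a vertex. -/
def boxOf (Θ : ℕ) (v : Vertex L) : ℕ × ℕ :=
  (v.1.val * (13 * Θ + 1) / L, v.2.val * (13 * Θ + 1) / L)

lemma boxOf_mem (Θ : ℕ) (v : Vertex L) :
    boxOf Θ v ∈ (range (13 * Θ + 1)) ×ˢ (range (13 * Θ + 1)) := by
  have h : ∀ z : ZMod L, z.val * (13 * Θ + 1) / L < 13 * Θ + 1 := fun z => by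
    rw [Nat.div_lt_iff_lt_mul (NeZero.pos L), mul_comm]
    exact Nat.mul_lt_mul_of_pos_left (ZMod.val_lt z) (by omega)
  simp only [boxOf, Finset.mem_product, Finset.mem_range]
  exact ⟨h _, h _⟩

lemma close_coord (Θ a b : ℕ) (h : a * (13 * Θ + 1) / L = b * (13 * Θ + 1) / L) :
    13 * (Θ : ℝ) * |(a : ℝ) - b| ≤ L := by
  have key : ∀ a b : ℕ, a * (13 * Θ + 1) / L = b * (13 * Θ + 1) / L →
      (a : ℝ) * (13 * Θ + 1) ≤ b * (13 * Θ + 1) + L := by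
    intro a b h
    have h1 : a * (13 * Θ + 1) < L * (b * (13 * Θ + 1) / L) + L := by
      rw [← h]; exact Nat.lt_mul_div_succ _ (NeZero.pos L)
    have h2 : L * (b * (13 * Θ + 1) / L) ≤ b * (13 * Θ + 1) := Nat.mul_div_le _ _
    have h3 : a * (13 * Θ + 1) ≤ b * (13 * Θ + 1) + L := by omega
    exact_mod_cast h3
  have h1 := key a b h
  have h2 := key b a h.symm
  have h3 : (13 * (Θ : ℝ) + 1) * |(a : ℝ) - b| ≤ L := by
    rw [← abs_of_pos (by positivity : (0 : ℝ) < 13 * Θ + 1), ← abs_mul, abs_le]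
    constructor <;> linarith
  linarith [abs_nonneg ((a : ℝ) - b)]

lemma close_of_boxOf {Θ : ℕ} {j l : Vertex L} (h : boxOf Θ j = boxOf Θ l) : Close Θ j l := by
  simp only [boxOf, Prod.mk.injEq] at h
  exact ⟨close_coord Θ _ _ h.1, close_coord Θ _ _ h.2⟩

/-- Two walks started from the same site meet `O(log T₂ / ω + T₂ / n)` times in expectation: the
heat kernel decays like `1 / (ω s) + 1 / n`. -/
lemma psi_early_le (hL : 3 ≤ L) {ω B : ℝ} (h0 : 0 < ω) (h1 : 8 * ω ≤ 1) (hB : 9 / (4 * ω) ≤ B)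
    {T₂ t : ℕ} (ht : t ≤ T₂) :
    psi ω T₂ t (0 : Vertex L) ≤ 1 + T₂ * (72 / (L : ℝ) ^ 2) + B * (1 + Real.log T₂) := by
  have hLpos : 0 < (L : ℝ) := Nat.cast_pos.2 (NeZero.pos L)
  have hBpos : 0 < B := lt_of_lt_of_le (by positivity) hB
  have hlog : 0 ≤ Real.log T₂ := Real.log_natCast_nonneg T₂
  rw [psi_eq_early ω t ht]
  rcases t with _ | t
  · simp only [Finset.range_zero, Finset.sum_empty]
    positivity
  · rw [Finset.sum_range_succ', kk_zero, if_pos rfl]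
    have hterm : ∀ u ∈ range t, kk ω (u + 1) (0 : Vertex L) ≤
        72 / (L : ℝ) ^ 2 + B * ((u : ℝ) + 1)⁻¹ := by
      intro u _
      set A : ℝ := 8 * ω * (u + 1 : ℕ) / (L : ℝ) ^ 2 with hA
      have hApos : 0 < A := by rw [hA]; positivity
      refine (kk_le h0.le h1 _ _).trans ((HH_le hL hApos le_rfl).trans ?_)
      have hs : 0 < √A := Real.sqrt_pos.2 hApos
      have hsq : √A ^ 2 = A := Real.sq_sqrt hApos.le
      have e1 : (6 + 3 / √A) ^ 2 ≤ 72 + 18 / A := by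
        have e2 : (3 / √A) ^ 2 = 9 / A := by rw [div_pow, hsq]; norm_num
        have e3 : 18 / A = 2 * (9 / A) := by ring
        rw [e3, ← e2]
        nlinarith [sq_nonneg (6 - 3 / √A)]
      calc (6 + 3 / √A) ^ 2 / (L : ℝ) ^ 2 ≤ (72 + 18 / A) / (L : ℝ) ^ 2 := by gcongr
        _ = 72 / (L : ℝ) ^ 2 + 9 / (4 * ω) * ((u : ℝ) + 1)⁻¹ := by
            rw [hA]; push_cast; field_simp; ring
        _ ≤ _ := by gcongr
    have h2 := Finset.sum_le_sum hterm
    rw [Finset.sum_add_distrib, Finset.sum_const, Finset.card_range, nsmul_eq_mul,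
      ← Finset.mul_sum] at h2
    have h3 : ∑ u ∈ range t, ((u : ℝ) + 1)⁻¹ ≤ 1 + Real.log T₂ := by
      have h4 := harmonic_le_one_add_log t
      have h5 : ((harmonic t : ℚ) : ℝ) = ∑ u ∈ range t, ((u : ℝ) + 1)⁻¹ := by
        rw [harmonic]; push_cast; rfl
      rw [h5] at h4
      refine h4.trans ?_
      rcases Nat.eq_zero_or_pos t with h | h
      · subst h; simpa using hlog
      · have : (t : ℝ) ≤ T₂ := by exact_mod_cast (by omega : t ≤ T₂)
        have : Real.log t ≤ Real.log T₂ := Real.log_le_log (by exact_mod_cast h) this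
        linarith
    have h6 : (t : ℝ) * (72 / (L : ℝ) ^ 2) ≤ T₂ * (72 / (L : ℝ) ^ 2) := by
      have : (t : ℝ) ≤ T₂ := by exact_mod_cast (by omega : t ≤ T₂)
      gcongr
    have h7 := mul_le_mul_of_nonneg_left h3 hBpos.le
    linarith

set_option maxHeartbeats 1000000 in
/-- Over a time `ε n³`, the expected number of interactions is at least a universal fraction of
the number of isolated particles, up to a logarithmic correction. -/
lemma interaction_ge {c ε : ℝ} (hc : 0 < c) (hε : 0 < ε) (hε1 : ε ≤ 1) (hcε : 2 * c * ε ≤ 1) :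
    ∃ (K : ℝ) (N : ℕ), 0 < K ∧ ∀ (L : ℕ) [NeZero L], N < L ^ 2 → ∀ η : Config L,
      (1 / 41472 : ℝ) ^ 2 / 256 * (((isoSet η).card : ℝ) - K * Real.log ((L : ℝ) ^ 2)) ≤
        ∑ s ∈ range ⌊ε * ((L : ℝ) ^ 2) ^ 3⌋₊,
          Ex (c / (L : ℝ) ^ 2) s (rr (c / (L : ℝ) ^ 2)) η := by
  -- `Θ` is the frequency scale resolved by walks running for a time `ε n³`; boxes of side about
  -- `L / (13 Θ + 1)` are such that walks started in a common box are likely to meet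
  set Θ : ℕ := ⌊1 / (16 * √(c * ε))⌋₊ with hΘdef
  refine ⟨((13 * Θ + 1 : ℕ) : ℝ) ^ 2 * (2 * 41472 + 5), ⌈12 * c⌉₊ + ⌈4 / ε⌉₊ + Θ ^ 2 + 9,
    by positivity, ?_⟩
  intro L _ hN η
  have hcε0 : 0 < c * ε := mul_pos hc hε
  have hsq0 : 0 < √(c * ε) := Real.sqrt_pos.2 hcε0
  have hsqsq : √(c * ε) ^ 2 = c * ε := Real.sq_sqrt hcε0.le
  have hΘ1 : (Θ : ℝ) ^ 2 ≤ 1 / (256 * (c * ε)) := by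
    have : (Θ : ℝ) ≤ 1 / (16 * √(c * ε)) := Nat.floor_le (by positivity)
    calc (Θ : ℝ) ^ 2 ≤ (1 / (16 * √(c * ε))) ^ 2 := by gcongr
      _ = _ := by rw [div_pow, mul_pow, hsqsq]; norm_num
  have hΘ2 : 1 / (256 * (c * ε)) ≤ ((Θ : ℝ) + 1) ^ 2 := by
    have : 1 / (16 * √(c * ε)) ≤ (Θ : ℝ) + 1 := (Nat.lt_floor_add_one _).le
    calc 1 / (256 * (c * ε)) = (1 / (16 * √(c * ε))) ^ 2 := by
          rw [div_pow, mul_pow, hsqsq]; norm_num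
      _ ≤ _ := by gcongr
  have hL3 : 3 ≤ L := by
    by_contra h
    have : L ≤ 2 := by omega
    have : L ^ 2 ≤ 2 ^ 2 := Nat.pow_le_pow_left this 2
    omega
  have hΘL : Θ < L := by
    by_contra h
    have : L ^ 2 ≤ Θ ^ 2 := Nat.pow_le_pow_left (by omega) 2
    omega
  set n : ℝ := (L : ℝ) ^ 2 with hn
  have hNn : ((⌈12 * c⌉₊ + ⌈4 / ε⌉₊ + Θ ^ 2 + 9 : ℕ) : ℝ) < n := by
    rw [hn]; exact_mod_cast hN
  push_cast at hNn
  have hn1 : 12 * c ≤ n := by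
    have := Nat.le_ceil (12 * c)
    have : (0 : ℝ) ≤ (⌈4 / ε⌉₊ : ℝ) := by positivity
    nlinarith [sq_nonneg (Θ : ℝ)]
  have hn2 : 4 / ε ≤ n := by
    have := Nat.le_ceil (4 / ε)
    have : (0 : ℝ) ≤ (⌈12 * c⌉₊ : ℝ) := by positivity
    nlinarith [sq_nonneg (Θ : ℝ)]
  have hn3 : 9 ≤ n := by
    have : (0 : ℝ) ≤ (⌈12 * c⌉₊ : ℝ) := by positivity
    have : (0 : ℝ) ≤ (⌈4 / ε⌉₊ : ℝ) := by positivity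
    nlinarith [sq_nonneg (Θ : ℝ)]
  have hnpos : 0 < n := by linarith
  have hεn : 4 ≤ ε * n ^ 3 := by
    have h1 : 4 ≤ ε * n := by rw [div_le_iff₀ hε] at hn2; linarith
    have h2 : n ≤ n ^ 3 := by nlinarith [sq_nonneg n]
    have : ε * n ≤ ε * n ^ 3 := by gcongr
    linarith
  set T := ⌊ε * n ^ 3⌋₊ with hT
  set T₂ := T / 2 with hT₂
  obtain ⟨s, hs⟩ : ∃ s, T = T₂ + s := ⟨T - T₂, by omega⟩
  have hsT : T₂ ≤ s := by omega
  have hTle : (T : ℝ) ≤ ε * n ^ 3 := Nat.floor_le (by positivity)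
  have hTge : ε * n ^ 3 < T + 1 := Nat.lt_floor_add_one _
  have hT2 : ε * n ^ 3 / 4 ≤ T₂ := by
    have : (T : ℝ) ≤ 2 * T₂ + 1 := by exact_mod_cast (by omega : T ≤ 2 * T₂ + 1)
    linarith
  have hs4 : ε * n ^ 3 / 4 ≤ s := hT2.trans (by exact_mod_cast hsT)
  have hT21 : (1 : ℝ) ≤ T₂ := by linarith
  set p : ℝ := c / n with hp
  have hp0 : 0 < p := by positivity
  have hp1 : p ≤ 1 / 12 := by rw [hp, div_le_div_iff₀ hnpos (by norm_num)]; linarith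
  set ω : ℝ := p / n with hω
  have hω0 : 0 < ω := by positivity
  have hωp : ω ≤ p := div_le_self hp0.le (by linarith)
  have hωc : ω = c / n ^ 2 := by rw [hω, hp]; field_simp
  -- `Y` is the order of the expected number of meetings of two walks once they are spread out
  set Y : ℝ := T₂ * (81 / (2 * c * ε * n)) with hY
  have hYpos : 0 < Y := by positivity
  set ℓ : ℝ := Real.log n with hℓ
  have hℓ1 : 1 ≤ ℓ := by
    rw [hℓ, Real.le_log_iff_exp_le hnpos]
    linarith [Real.exp_one_lt_d9]
  clear_value ℓ Y ω p T₂ T n Θ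
  have hHH : HH L ω s ≤ 81 / (2 * c * ε * n) := by
    have hA0 : 0 < 2 * c * ε := by positivity
    have hA1 : 2 * c * ε ≤ 8 * ω * s / (L : ℝ) ^ 2 := by
      rw [← hn, le_div_iff₀ hnpos, hωc]
      calc 2 * c * ε * n = 8 * (c / n ^ 2) * (ε * n ^ 3 / 4) := by field_simp; ring
        _ ≤ _ := by gcongr
    refine (HH_le hL3 hA0 hA1).trans ?_
    have hsA : 0 < √(2 * c * ε) := Real.sqrt_pos.2 hA0
    have hsA1 : √(2 * c * ε) ≤ 1 := Real.sqrt_le_one.2 hcε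
    have h6 : (6 : ℝ) ≤ 6 / √(2 * c * ε) := by
      rw [le_div_iff₀ hsA]; linarith
    have e : (9 / √(2 * c * ε)) ^ 2 = 81 / (2 * c * ε) := by
      rw [div_pow, Real.sq_sqrt hA0.le]; norm_num
    calc (6 + 3 / √(2 * c * ε)) ^ 2 / (L : ℝ) ^ 2
        ≤ (6 / √(2 * c * ε) + 3 / √(2 * c * ε)) ^ 2 / (L : ℝ) ^ 2 := by gcongr
      _ = (9 / √(2 * c * ε)) ^ 2 / n := by rw [← add_div, hn]; norm_num
      _ = _ := by rw [e, div_div]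
  have hψ : ∀ a : Vertex L, psi ω T₂ T a ≤ Y := fun a => by
    rw [hs]
    exact (psi_late_le hω0.le (by linarith) T₂ s a).trans (by rw [hY]; gcongr)
  have hρ : ∀ a b : Vertex L, rho ω T₂ T a b ≤ 2 * Y ^ 2 := fun a b => by
    rw [hs]
    refine (rho_late_le hω0.le (by linarith) T₂ s a b).trans ?_
    have hH0 := HH_nonneg (L := L) ω s
    calc (T₂ : ℝ) * (T₂ + 1) * HH L ω s ^ 2 ≤
          T₂ * (T₂ + T₂) * (81 / (2 * c * ε * n)) ^ 2 := by gcongr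
      _ = _ := by rw [hY]; ring
  have hlow : ∀ F : Finset (Vertex L), (∀ j ∈ F, ∀ l ∈ F, boxOf Θ j = boxOf Θ l) →
      1 / 41472 * Y * (F.card : ℝ) ^ 2 ≤ ∑ j ∈ F, ∑ l ∈ F, psi ω T₂ T (j - l) := by
    intro F hF
    have hq : ω * (T₂ + s) * (80 * (Θ : ℝ) ^ 2 / (L : ℝ) ^ 2) ≤ 1 / 2 := by
      have : (T₂ : ℝ) + s = T := by rw [hs]; push_cast; rfl
      rw [this, ← hn, hωc]
      calc c / n ^ 2 * T * (80 * (Θ : ℝ) ^ 2 / n) ≤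
            c / n ^ 2 * (ε * n ^ 3) * (80 * (1 / (256 * (c * ε))) / n) := by gcongr
        _ = 80 / 256 := by field_simp
        _ ≤ 1 / 2 := by norm_num
    have := sum_psi_ge hL3 hω0.le (by linarith) hΘL hq F
      (fun j hj l hl => close_of_boxOf (hF j hj l hl))
    rw [hs]
    refine le_trans ?_ this
    have e : 1 / 41472 * Y = 1 / n * T₂ * (1 / (256 * (c * ε))) / 4 := by
      rw [hY]; field_simp; norm_num
    rw [e, ← hn]
    have h3 : 1 / n * T₂ * (1 / (256 * (c * ε))) ≤ 1 / n * T₂ * ((Θ : ℝ) + 1) ^ 2 :=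
      mul_le_mul_of_nonneg_left hΘ2 (mul_nonneg (by positivity) (by linarith))
    refine mul_le_mul_of_nonneg_right ?_ (sq_nonneg _)
    linarith
  set m₀ : ℝ := (2 * 41472 + 5) * ℓ with hm₀
  have hm₀pos : 0 < m₀ := by positivity
  clear_value m₀
  -- `φ = m₀ Y` dominates the number of meetings started from the same site
  have hφ : ∀ t ≤ T₂, psi ω T₂ t (0 : Vertex L) ≤ m₀ * Y := by
    intro t ht
    have hYge : 81 * n ^ 2 / (8 * c) ≤ Y := by
      rw [hY]
      calc 81 * n ^ 2 / (8 * c) = ε * n ^ 3 / 4 * (81 / (2 * c * ε * n)) := by field_simp; ring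
        _ ≤ _ := by gcongr
    have hB : 9 / (4 * ω) ≤ Y / 4 := by
      have e : 9 / (4 * ω) = 9 * n ^ 2 / (4 * c) := by rw [hωc]; field_simp
      have e2 : 9 * n ^ 2 / (4 * c) ≤ 81 * n ^ 2 / (8 * c) / 4 := by
        have : 0 ≤ n ^ 2 / c := by positivity
        have e3 : 9 * n ^ 2 / (4 * c) = 9 / 4 * (n ^ 2 / c) := by field_simp
        have e4 : 81 * n ^ 2 / (8 * c) / 4 = 81 / 32 * (n ^ 2 / c) := by field_simp; norm_num
        rw [e3, e4]; linarith
      rw [e]; linarith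
    have h1Y : 1 ≤ Y := by
      refine le_trans ?_ hYge
      rw [le_div_iff₀ (by positivity)]
      nlinarith
    have h72 : (T₂ : ℝ) * (72 / (L : ℝ) ^ 2) ≤ Y := by
      rw [hY, ← hn]
      refine mul_le_mul_of_nonneg_left ?_ (by positivity)
      rw [div_le_div_iff₀ hnpos (by positivity)]
      nlinarith
    have hlogT : Real.log T₂ ≤ 3 * ℓ := by
      have : (T₂ : ℝ) ≤ n ^ 3 := by
        have h1 : (T₂ : ℝ) ≤ T := by exact_mod_cast (by omega : T₂ ≤ T)
        have h2 : ε * n ^ 3 ≤ 1 * n ^ 3 := by gcongr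
        linarith
      calc Real.log T₂ ≤ Real.log (n ^ 3) := Real.log_le_log (by linarith) this
        _ = 3 * ℓ := by rw [Real.log_pow, hℓ]; norm_num
    have := psi_early_le hL3 hω0 (by linarith) hB ht
    have h8 : Y / 4 * (1 + Real.log T₂) ≤ Y / 4 * (1 + 3 * ℓ) := by gcongr
    have h9 : Y * 1 ≤ Y * ℓ := by gcongr
    have h10 : m₀ * Y = (2 * 41472 + 5) * (Y * ℓ) := by rw [hm₀]; ring
    rw [h10]
    nlinarith
  have hinter := gpot_le_interaction (p := p) (T₂ := T₂) (φ := m₀ * Y)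
    (W := Wbox (isoSet η) (boxOf Θ) m₀ (1 / 41472 / 32 / Y)) (by omega : 2 ≤ L) hp0.le
    (by linarith) (Wbox_nonneg _ _ (by positivity)) (Wbox_symm _ _ _ _) (by positivity)
    (by rw [← hn, ← hω]; exact hφ) T η
  rw [← hn, ← hω] at hinter
  refine le_trans ?_ hinter
  have hge := gpot_ge (isoSet η) (boxOf Θ) _ (boxOf_mem Θ) hω0.le (by linarith) (φ := m₀ * Y)
    (by positivity) hYpos (by norm_num : (0 : ℝ) < 1 / 41472) (by rw [hm₀]; linarith) le_rfl
    hψ hρ hlow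
  refine le_trans (le_of_eq ?_) hge
  rw [Finset.card_product, Finset.card_range, hm₀]
  push_cast
  ring

end Interaction

/-! ### Assembly of the drift bound -/

section Assembly

variable {L : ℕ} [NeZero L]

/-- Summing `w (t+1) ≤ w t + d t` over time. -/
lemma telescope_le {w d : ℕ → ℝ} (h : ∀ t, w (t + 1) ≤ w t + d t) (t : ℕ) :
    w t ≤ w 0 + ∑ s ∈ range t, d s := by
  induction t with
  | zero => simp
  | succ t ih => rw [Finset.sum_range_succ]; linarith [h t]

/-- The Gronwall-type argument closing the coupled inequalities for `u_t = E U`, `o_t = E O` and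
`b_t = E B`; here `g` is the lower bound for the total interaction up to time `T`, and `V₀` the
initial number of particles. Over time `T ≤ ε n ^ 3` the occupied neighbours
contribute only `O(c ^ 2 ε) V₀` to the growth of `u`, and `o_T` itself is negligible. -/
lemma drift_sequences {n p c ε θ V₀ g : ℝ} {T : ℕ} {u o b : ℕ → ℝ} (hn : 1 ≤ n)
    (hp : p = c / n) (hc : 0 < c) (hε : 0 < ε) (hθ : 0 < θ) (hθ1 : θ ≤ 1)
    (hT : (T : ℝ) ≤ ε * n ^ 3)
    (hU : ∀ t, u (t + 1) ≤ u t + 1 / n * (2 * p * o t - p / 4 * b t))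
    (hO : ∀ t, o (t + 1) ≤ o t + 1 / n * (20 * p * (u t + o t / 2) - (1 - p) * o t))
    (ho : ∀ t, 0 ≤ o t) (hb : ∀ t, 0 ≤ b t) (hou : ∀ t, o t ≤ 2 * u t)
    (hu0 : u 0 ≤ V₀) (ho0 : o 0 ≤ V₀) (hV0 : 0 ≤ V₀)
    (hg : g ≤ ∑ s ∈ range T, p / n * (b s + 4 * o s))
    (hcε : 80 * c ^ 2 * ε ≤ θ / 64) (hcn : 80 * p ≤ θ / 32)
    (hdec : (1 - (1 - p) / n) ^ T ≤ θ / 32) :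
    u T + o T / 2 ≤ u 0 + θ / 8 * V₀ - g / 4 := by
  have hnpos : 0 < n := by linarith
  have hp0 : 0 < p := by rw [hp]; positivity
  have hp4 : p ≤ 1 / 4 := by linarith
  obtain ⟨S, hS⟩ : ∃ S, S = ∑ s ∈ range T, o s / n := ⟨_, rfl⟩
  have hSt : ∀ t ≤ T, ∑ s ∈ range t, o s / n ≤ S := fun t ht => by
    rw [hS]
    exact Finset.sum_le_sum_of_subset_of_nonneg (Finset.range_mono ht)
      fun s _ _ => div_nonneg (ho s) hnpos.le
  have hS0 : 0 ≤ S := by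
    rw [hS]; exact Finset.sum_nonneg fun s _ => div_nonneg (ho s) hnpos.le
  have hut : ∀ t ≤ T, u t ≤ V₀ + 2 * p * S := by
    intro t ht
    have h1 := telescope_le hU t
    have h2 : ∑ s ∈ range t, 1 / n * (2 * p * o s - p / 4 * b s) ≤
        ∑ s ∈ range t, 2 * p * (o s / n) := by
      refine Finset.sum_le_sum fun s _ => ?_
      have : 0 ≤ 1 / n * (p / 4 * b s) := by have := hb s; positivity
      have e : 2 * p * (o s / n) = 1 / n * (2 * p * o s) := by ring
      rw [e, mul_sub]; linarith
    rw [← Finset.mul_sum (range t) (fun s => o s / n)] at h2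
    have := mul_le_mul_of_nonneg_left (hSt t ht) (by positivity : 0 ≤ 2 * p)
    linarith
  have hat : ∀ t ≤ T, u t + o t / 2 ≤ 2 * (V₀ + 2 * p * S) := fun t ht => by
    linarith [hut t ht, hou t]
  have hpT : p / n * T ≤ c * ε * n := by
    calc p / n * T ≤ p / n * (ε * n ^ 3) := by gcongr
      _ = c * ε * n := by rw [hp]; field_simp
  have hSle : S ≤ (2 + 80 * c * ε * n) * V₀ := by
    have h1 := telescope_le hO T
    have h2 : ∑ s ∈ range T, 1 / n * (20 * p * (u s + o s / 2) - (1 - p) * o s) ≤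
        ∑ s ∈ range T, (20 * (p / n) * (2 * (V₀ + 2 * p * S)) - (1 - p) * (o s / n)) := by
      refine Finset.sum_le_sum fun s hs => ?_
      have h3 := mul_le_mul_of_nonneg_left (hat s (Finset.mem_range.1 hs).le)
        (by positivity : 0 ≤ 20 * (p / n))
      have e : 1 / n * (20 * p * (u s + o s / 2) - (1 - p) * o s) =
        20 * (p / n) * (u s + o s / 2) - (1 - p) * (o s / n) := by ring
      rw [e]; linarith
    rw [Finset.sum_sub_distrib, ← Finset.mul_sum (range T) (fun s => o s / n), ← hS, Finset.sum_const, Finset.card_range,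
      nsmul_eq_mul] at h2
    have h4 : (T : ℝ) * (20 * (p / n) * (2 * (V₀ + 2 * p * S))) ≤
        40 * (c * ε * n) * (V₀ + 2 * p * S) := by
      have := mul_le_mul_of_nonneg_right hpT (by positivity : 0 ≤ 40 * (V₀ + 2 * p * S))
      linarith
    have h5 : 40 * (c * ε * n) * (2 * p * S) = 80 * c ^ 2 * ε * S := by
      rw [hp]; field_simp; ring
    have h6 : 80 * c ^ 2 * ε * S ≤ 1 / 4 * S :=
      mul_le_mul_of_nonneg_right (by linarith) hS0
    have h7 : 3 / 4 * S ≤ (1 - p) * S := mul_le_mul_of_nonneg_right (by linarith) hS0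
    have := ho T
    linarith
  have hpS : p * S ≤ θ / 32 * V₀ := by
    have h1 := mul_le_mul_of_nonneg_left hSle hp0.le
    have e : p * ((2 + 80 * c * ε * n) * V₀) = (2 * p + 80 * c ^ 2 * ε) * V₀ := by
      rw [hp]; field_simp
    have h2 : (2 * p + 80 * c ^ 2 * ε) * V₀ ≤ θ / 32 * V₀ :=
      mul_le_mul_of_nonneg_right (by linarith) hV0
    linarith
  have huT : u T ≤ u 0 + 3 * (p * S) - g / 4 := by
    have h1 := telescope_le hU T
    have h2 : ∑ s ∈ range T, 1 / n * (2 * p * o s - p / 4 * b s) =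
        3 * (p * S) - (∑ s ∈ range T, p / n * (b s + 4 * o s)) / 4 := by
      rw [hS, Finset.mul_sum, Finset.mul_sum, Finset.sum_div, ← Finset.sum_sub_distrib]
      exact Finset.sum_congr rfl fun s _ => by ring
    linarith
  have hoT : ∀ t ≤ T, o t ≤ (1 - (1 - p) / n) ^ t * V₀ + 80 * p * V₀ := by
    intro t
    induction t with
    | zero => intro _; rw [pow_zero]; nlinarith
    | succ t ih =>
      intro ht
      have h1 := ih (by omega)
      have hq : (1 - p) / n ≤ 1 := by rw [div_le_one hnpos]; linarith
      have h2 := mul_le_mul_of_nonneg_left h1 (by linarith : 0 ≤ 1 - (1 - p) / n)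
      have h3 : u t + o t / 2 ≤ 3 * V₀ := by
        have := hat t (by omega)
        have : θ / 32 * V₀ ≤ 1 / 32 * V₀ := mul_le_mul_of_nonneg_right (by linarith) hV0
        linarith
      have h4 := mul_le_mul_of_nonneg_left h3 (by positivity : 0 ≤ 20 * (p / n))
      have h5 : 20 * (p / n) * (3 * V₀) ≤ (1 - p) / n * (80 * p * V₀) := by
        have : 3 / 4 * (p / n * V₀ * 80) ≤ (1 - p) * (p / n * V₀ * 80) :=
          mul_le_mul_of_nonneg_right (by linarith) (by positivity)
        have e : (1 - p) / n * (80 * p * V₀) = (1 - p) * (p / n * V₀ * 80) := by ring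
        rw [e]; linarith
      have e : o t + 1 / n * (20 * p * (u t + o t / 2) - (1 - p) * o t) =
        (1 - (1 - p) / n) * o t + 20 * (p / n) * (u t + o t / 2) := by ring
      rw [pow_succ]
      linarith [hO t]
  have h1 := hoT T le_rfl
  have h2 := mul_le_mul_of_nonneg_right hdec hV0
  have h3 := mul_le_mul_of_nonneg_right hcn hV0
  linarith

lemma one_sub_pow_le {x : ℝ} (hx : 0 ≤ x) (hx1 : x ≤ 1) (T : ℕ) {θ : ℝ} (hθ : 0 < θ)
    (h : 32 / θ ≤ x * T) : (1 - x) ^ T ≤ θ / 32 := by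
  have h1 : (1 - x) ^ T ≤ Real.exp (-(x * T)) := by
    calc (1 - x) ^ T ≤ (Real.exp (-x)) ^ T := by
          refine pow_le_pow_left₀ (by linarith) ?_ T
          linarith [Real.add_one_le_exp (-x)]
      _ = _ := by rw [← Real.exp_nat_mul]; ring_nf
  have h2 : 32 / θ ≤ Real.exp (x * T) := by linarith [Real.add_one_le_exp (x * T)]
  calc _ ≤ _ := h1
    _ = 1 / Real.exp (x * T) := by rw [Real.exp_neg, one_div]
    _ ≤ 1 / (32 / θ) := by gcongr
    _ = θ / 32 := by rw [one_div_div]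

lemma card_isoSet_add (η : Config L) : ((isoSet η).card : ℝ) + Or η = Vr η := by
  have h := Finset.card_filter_add_card_filter_not (s := univ.filter fun u => η u = true)
    (fun u : Vertex L => ¬ hasOccNbr η u)
  simp only [Finset.filter_filter, not_not] at h
  unfold isoSet Or Oset Vr numParticles
  exact_mod_cast h

lemma Ex_nonneg' {p : ℝ} (h0 : 0 ≤ p) (h1 : p ≤ 1) (t : ℕ) {f : Config L → ℝ}
    (h : ∀ y, 0 ≤ f y) (x : Config L) : 0 ≤ Ex p t f x := by
  have h2 := Ex_smul p t 0 f x
  simp only [zero_mul] at h2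
  rw [← h2]
  exact Ex_mono h0 h1 t h x

/-- The drift bound for a single torus, given the lower bound on the total interaction. -/
lemma drift_of_interaction {c ε θ K : ℝ} (hc : 0 < c) (hε : 0 < ε) (hθ : 0 < θ) (hθ1 : θ ≤ 1 / 2)
    (hK : 0 < K) (hcε : 80 * c ^ 2 * ε ≤ θ / 64) (hL : 2 ≤ L)
    (hN1 : 2560 * c / θ ≤ (L : ℝ) ^ 2) (hN2 : (64 / θ + 1) / ε ≤ (L : ℝ) ^ 2) (η : Config L)
    (hinter : θ * (((isoSet η).card : ℝ) - K * Real.log ((L : ℝ) ^ 2)) ≤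
      ∑ s ∈ range ⌊ε * ((L : ℝ) ^ 2) ^ 3⌋₊, Ex (c / (L : ℝ) ^ 2) s (rr (c / (L : ℝ) ^ 2)) η) :
    Ex (c / (L : ℝ) ^ 2) ⌊ε * ((L : ℝ) ^ 2) ^ 3⌋₊ Vr η ≤
      (1 - θ / 16) * Vr η + θ * K / 4 * Real.log ((L : ℝ) ^ 2) := by
  have hn4 : (4 : ℝ) ≤ (L : ℝ) ^ 2 := by
    have : (2 : ℝ) ≤ L := by exact_mod_cast hL
    nlinarith
  have hnpos : 0 < (L : ℝ) ^ 2 := by linarith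
  obtain ⟨p, hp⟩ : ∃ p, p = c / (L : ℝ) ^ 2 := ⟨_, rfl⟩
  obtain ⟨T, hT⟩ : ∃ T, T = ⌊ε * ((L : ℝ) ^ 2) ^ 3⌋₊ := ⟨_, rfl⟩
  rw [← hp, ← hT] at hinter ⊢
  have hp0 : 0 < p := by rw [hp]; positivity
  have hcn : 80 * p ≤ θ / 32 := by
    rw [div_le_iff₀ hθ] at hN1
    rw [hp, ← mul_div_assoc, div_le_iff₀ hnpos]
    linarith
  have hp1 : p ≤ 1 / 4 := by linarith
  have hp1' : p ≤ 1 := by linarith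
  have hdec : (1 - (1 - p) / (L : ℝ) ^ 2) ^ T ≤ θ / 32 := by
    refine one_sub_pow_le (div_nonneg (by linarith) hnpos.le) ?_ T hθ ?_
    · rw [div_le_one hnpos]; linarith
    · have hTge : ε * ((L : ℝ) ^ 2) ^ 3 < T + 1 := by rw [hT]; exact Nat.lt_floor_add_one _
      rw [div_le_iff₀ hε] at hN2
      generalize (L : ℝ) ^ 2 = n at *
      have h1 : (64 / θ + 1) * (n * n) ≤ n * ε * (n * n) := by gcongr
      have h2 : (64 / θ + 1) * n ≤ (64 / θ + 1) * (n * n) := by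
        gcongr; nlinarith
      have h3 : 64 / θ * n ≤ T := by nlinarith
      have h4 : 1 / 2 * (64 / θ * n) ≤ (1 - p) * T :=
        mul_le_mul (by linarith) h3 (by positivity) (by linarith)
      rw [div_mul_eq_mul_div, le_div_iff₀ hnpos]
      calc 32 / θ * n = 1 / 2 * (64 / θ * n) := by ring
        _ ≤ _ := h4
  have hTle : (T : ℝ) ≤ ε * ((L : ℝ) ^ 2) ^ 3 := by rw [hT]; exact Nat.floor_le (by positivity)
  have hVeq : ∀ t, Ex p t Vr η = Ex p t Ur η + Ex p t Or η / 2 := by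
    intro t
    have e : (Vr : Config L → ℝ) = fun y => Ur y + (fun z => (1 / 2) * Or z) y := by
      funext y; simp only [Ur]; ring
    rw [e, Ex_add, Ex_smul]; ring
  have hou : ∀ t, Ex p t Or η ≤ 2 * Ex p t Ur η := by
    intro t
    rw [← Ex_smul]
    exact Ex_mono hp0.le hp1' t (fun y => by simp only [Ur]; linarith [Or_le_Vr y]) η
  have hU : ∀ t, Ex p (t + 1) Ur η ≤ Ex p t Ur η + 1 / (L : ℝ) ^ 2 *
      (2 * p * Ex p t Or η - p / 4 * Ex p t Br η) := by
    intro t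
    rw [Ex_succ]
    refine (Ex_mono hp0.le hp1' t (fun y => Pop_Ur_le hL hp0.le hp1' y) η).trans (le_of_eq ?_)
    have e : (fun y : Config L => Ur y + 1 / (L : ℝ) ^ 2 * (2 * p * Or y - p / 4 * Br y)) =
        fun y => Ur y + (fun z => (fun z => (1 / (L : ℝ) ^ 2 * (2 * p)) * Or z) z +
          (fun z => (-(1 / (L : ℝ) ^ 2 * (p / 4))) * Br z) z) y := by
      funext y; ring
    rw [e, Ex_add, Ex_add, Ex_smul, Ex_smul]; ring
  have hO : ∀ t, Ex p (t + 1) Or η ≤ Ex p t Or η + 1 / (L : ℝ) ^ 2 *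
      (20 * p * (Ex p t Ur η + Ex p t Or η / 2) - (1 - p) * Ex p t Or η) := by
    intro t
    rw [Ex_succ, ← hVeq]
    refine (Ex_mono hp0.le hp1' t (fun y => Pop_Or_le hp0.le hp1' y) η).trans (le_of_eq ?_)
    have e : (fun y : Config L => Or y + 1 / (L : ℝ) ^ 2 * (20 * p * Vr y - (1 - p) * Or y)) =
        fun y => Or y + (fun z => (fun z => (1 / (L : ℝ) ^ 2 * (20 * p)) * Vr z) z +
          (fun z => (-(1 / (L : ℝ) ^ 2 * (1 - p))) * Or z) z) y := by
      funext y; ring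
    rw [e, Ex_add, Ex_add, Ex_smul, Ex_smul]; ring
  have hrr : ∀ t, Ex p t (rr p) η = p / (L : ℝ) ^ 2 * (Ex p t Br η + 4 * Ex p t Or η) := by
    intro t
    have e : (rr p : Config L → ℝ) = fun y => (fun z => (p / (L : ℝ) ^ 2) * Br z) y +
        (fun z => (p / (L : ℝ) ^ 2 * 4) * Or z) y := by
      funext y; simp only [rr]; ring
    rw [e, Ex_add, Ex_smul, Ex_smul]; ring
  have hOn := fun t => Ex_nonneg' hp0.le hp1' t (f := Or) Or_nonneg η
  have hBn := fun t => Ex_nonneg' hp0.le hp1' t (f := Br) Br_nonneg η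
  have hV0 := Vr_nonneg η
  have hO0 := Or_nonneg η
  have hOV := Or_le_Vr η
  have hlog : 0 ≤ Real.log ((L : ℝ) ^ 2) := Real.log_nonneg (by linarith)
  have key := fun g hg => drift_sequences (g := g) (V₀ := Vr η) (T := T) (n := (L : ℝ) ^ 2)
    (u := fun t => Ex p t Ur η) (o := fun t => Ex p t Or η) (b := fun t => Ex p t Br η)
    (by linarith) hp hc hε hθ (by linarith) hTle hU hO hOn hBn hou
    (by simp only [Ex_zero, Ur]; linarith) (by simpa only [Ex_zero] using hOV) hV0 hg hcε hcn hdec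
  simp only [hrr] at hinter
  simp only [Ex_zero] at key
  rw [hVeq]
  have hUr : Ur η = Vr η - Or η / 2 := rfl
  have hKl : 0 ≤ θ * K / 4 * Real.log ((L : ℝ) ^ 2) := by positivity
  have hθV : θ * Vr η ≤ 1 / 2 * Vr η := mul_le_mul_of_nonneg_right hθ1 hV0
  by_cases h : Vr η / 4 ≤ Or η
  · -- many particles have neighbours: `U` starts below `7/8 V`
    have := key 0 (Finset.sum_nonneg fun s _ => by
      have := hOn s; have := hBn s; positivity)
    nlinarith
  · -- most particles are isolated: interactions reduce `U`
    have := key _ hinter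
    have hiso := card_isoSet_add η
    have h3 : θ * (3 / 4 * Vr η) ≤ θ * ((isoSet η).card : ℝ) := by
      gcongr; linarith
    nlinarith

end Assembly

/-- Theorem 2.2 of the paper: drift condition for the particle count.
There is `ε₀ = ε₀(c) > 0` such that for all `0 < ε < ε₀` there are `C_G, α > 0` and `N`
with: for all `n = L² > N` and every initial configuration `x`,
`E[V_{⌊ε n³⌋} | V_1] ≤ (1 - α) V_1 + C_G log n`. -/
theorem kcip_drift_condition (c : ℝ) (hc : 0 < c) :
    ∃ ε₀ : ℝ, 0 < ε₀ ∧ ∀ ε : ℝ, 0 < ε → ε < ε₀ →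
      ∃ (C_G α : ℝ) (N : ℕ), 0 < C_G ∧ 0 < α ∧
        ∀ (L : ℕ) [NeZero L], N < L ^ 2 → ∀ x : Config L,
          expAt (kcipKernel L (c / (L : ℝ) ^ 2)) x ⌊ε * ((L : ℝ) ^ 2) ^ 3⌋₊
              (fun y => (numParticles y : ℝ)) ≤
            (1 - α) * (numParticles x : ℝ) + C_G * Real.log ((L : ℝ) ^ 2) := by
  obtain ⟨θ, hθ⟩ : ∃ θ : ℝ, θ = (1 / 41472 : ℝ) ^ 2 / 256 := ⟨_, rfl⟩
  have hθ0 : 0 < θ := by rw [hθ]; positivity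
  have hθ1 : θ ≤ 1 / 2 := by rw [hθ]; norm_num
  refine ⟨min 1 (min (1 / (2 * c)) (θ / (5120 * c ^ 2))), by positivity, fun ε hε hεlt => ?_⟩
  obtain ⟨h1, h23⟩ := lt_min_iff.1 hεlt
  obtain ⟨h2, h3⟩ := lt_min_iff.1 h23
  rw [lt_div_iff₀ (by positivity)] at h2 h3
  obtain ⟨K, N, hK, hN⟩ := interaction_ge hc hε h1.le (by linarith)
  refine ⟨θ * K / 4, θ / 16, N + 4 + ⌈2560 * c / θ⌉₊ + ⌈(64 / θ + 1) / ε⌉₊,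
    by positivity, by positivity, fun L _ hL x => ?_⟩
  have hcast : ((N + 4 + ⌈2560 * c / θ⌉₊ + ⌈(64 / θ + 1) / ε⌉₊ : ℕ) : ℝ) ≤ (L : ℝ) ^ 2 := by
    exact_mod_cast hL.le
  push_cast at hcast
  have hN1 := Nat.le_ceil (2560 * c / θ)
  have hN2 := Nat.le_ceil ((64 / θ + 1) / ε)
  have hNn : (0 : ℝ) ≤ N := Nat.cast_nonneg N
  have hN1' : (0 : ℝ) ≤ (⌈2560 * c / θ⌉₊ : ℝ) := Nat.cast_nonneg _
  have hN2' : (0 : ℝ) ≤ (⌈(64 / θ + 1) / ε⌉₊ : ℝ) := Nat.cast_nonneg _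
  rw [expAt_eq]
  exact drift_of_interaction hc hε hθ0 hθ1 hK (by linarith) (by nlinarith)
    (by linarith) (by linarith) x (by rw [hθ]; exact hN L (by omega) x)

end KCIP
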